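/- arXiv:1804.09419 — 3 statements merged into one kernel-verified Lean document; each statement's English description precedes it below -/
import Mathlib

section
/- Let α,β,q1,q2>0 with α>β, 1<p<N/α, q1+q2>p−1, q2<N(p−1)/(N−βp), and (αpq1+βpq2)/(q1+q2)<N. Set γ=(αq1+βq2)/(q1+q2). Then there exist constants, depending only on N,α,β,p,q1,q2 (and not on R), such that for every R>0 and every nonnegative Radon measure ω on ℝ^N whose support has diameter at most R, the three quantities ∫_{ℝ^N} (M^{2R}_{γp}[ω](x))^{(q1+q2)/(p−1)} dx, ∫_{ℝ^N} (W^{2R}_{γ,p}[ω](x))^{q1+q2} dx, and ∫_{ℝ^N} (W^{2R}_{α,p}[ω](x))^{q1}(W^{2R}_{β,p}[ω](x))^{q2} dx are pairwise comparable (each is bounded above by a constant times each other). -/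
open MeasureTheory Metric Set Filter Bornology
open scoped ENNReal NNReal Topology RealInnerProductSpace

noncomputable section

/-- Euclidean space `ℝ^N`. -/
abbrev Euc (N : ℕ) : Type := EuclideanSpace ℝ (Fin N)

/-- The `R`-truncated Wolff potential `W^R_{α,p}[μ](x)`; `R = ⊤` gives the full
Wolff potential `W_{α,p}[μ]`. -/
def wolff {N : ℕ} (α p : ℝ) (R : ℝ≥0∞) (μ : Measure (Euc N)) (x : Euc N) : ℝ≥0∞ :=
  ∫⁻ ρ in {ρ : ℝ | 0 < ρ ∧ ENNReal.ofReal ρ < R},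
    (μ (ball x ρ) / ENNReal.ofReal (ρ ^ ((N : ℝ) - α * p))) ^ (1 / (p - 1)) /
      ENNReal.ofReal ρ

/-- The `R`-truncated Riesz potential `I^R_β[μ](x)`; `R = ⊤` gives `I_β[μ]`. -/
def rieszPot {N : ℕ} (β : ℝ) (R : ℝ≥0∞) (μ : Measure (Euc N)) (x : Euc N) : ℝ≥0∞ :=
  ∫⁻ ρ in {ρ : ℝ | 0 < ρ ∧ ENNReal.ofReal ρ < R},
    μ (ball x ρ) / ENNReal.ofReal (ρ ^ ((N : ℝ) - β)) / ENNReal.ofReal ρ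

/-- The Riesz capacity `Cap_{I_α,p}`. -/
def rieszCap (N : ℕ) (α p : ℝ) (O : Set (Euc N)) : ℝ≥0∞ :=
  ⨅ (g : Euc N → ℝ≥0∞) (_ : Measurable g)
    (_ : ∀ x ∈ O, 1 ≤ rieszPot α ⊤ (volume.withDensity g) x),
    ∫⁻ x, g x ^ p

/-- The Bessel kernel of order `α` (up to the normalizing constant `c(N,α)`). -/
def besselKernel (N : ℕ) (α : ℝ) (x : Euc N) : ℝ :=
  ∫ t in Ioi (0 : ℝ),
    Real.exp (-(Real.pi * ‖x‖ ^ 2 / t) - t / (4 * Real.pi)) * t ^ ((α - (N : ℝ)) / 2) / t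

/-- The Bessel capacity `Cap_{G_α,p}`. -/
def besselCap (N : ℕ) (α p : ℝ) (O : Set (Euc N)) : ℝ≥0∞ :=
  ⨅ (g : Euc N → ℝ≥0∞) (_ : Measurable g)
    (_ : ∀ x ∈ O, 1 ≤ ∫⁻ y, ENNReal.ofReal (besselKernel N α (x - y)) * g y),
    ∫⁻ x, g x ^ p

/-- The `R`-truncated fractional maximal function `M^R_γ[μ]`. -/
def fracMax {N : ℕ} (γ : ℝ) (R : ℝ≥0∞) (μ : Measure (Euc N)) (x : Euc N) : ℝ≥0∞ :=
  ⨆ (t : ℝ) (_ : 0 < t) (_ : ENNReal.ofReal t < R),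
    μ (ball x t) / ENNReal.ofReal (t ^ ((N : ℝ) - γ))

/-- The potential `L^R_{α,s}[μ]`. -/
def Lpot {N : ℕ} (α s : ℝ) (R : ℝ≥0∞) (μ : Measure (Euc N)) (x : Euc N) : ℝ≥0∞ :=
  ∫⁻ t in {t : ℝ | 0 < t ∧ ENNReal.ofReal t < R},
    (μ (ball x t) / ENNReal.ofReal (t ^ ((N : ℝ) - α))) ^ s / ENNReal.ofReal t

/-- A mollifier: smooth, nonnegative, supported in the unit ball, of total mass one. -/
def IsMollifier {N : ℕ} (φ : Euc N → ℝ) : Prop :=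
  ContDiff ℝ (⊤ : ℕ∞) φ ∧ (∀ x, 0 ≤ φ x) ∧ tsupport φ ⊆ ball 0 1 ∧ (∫ x, φ x) = 1

/-- The measure with density `φ_n * μ`, where `φ_n(x) = n^N φ(n x)`. -/
def mollified {N : ℕ} (φ : Euc N → ℝ) (n : ℕ) (μ : Measure (Euc N)) : Measure (Euc N) :=
  volume.withDensity fun x =>
    ENNReal.ofReal (∫ y, (n : ℝ) ^ (N : ℕ) * φ ((n : ℝ) • (x - y)) ∂μ)

open Module (finrank)

/-!
Discretize both potentials at the radii `T / 2 ^ k`. By Fubini, averaging `ω (ball x ρ) ^ v` over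
`ball y r` with `ρ ≤ r` gains the factor `(ρ / r) ^ (N * min v 1)` over `ω (ball y (2 * r)) ^ v`.
The bound on `q2` is exactly what makes this beat the normalization, so in the product of the two
dyadic sums the interaction of a term of `W_α` at scale `i` with a term of `W_β` at scale `j` decays
geometrically in `j - i`; for `i > j` the decay comes from `β < α`. This reduces the integral of
`W_α ^ q1 * W_β ^ q2` to the diagonal sum `∑ k, ∫ D_k ^ ((q1 + q2) / (p - 1))`, where `D_k` is
`ω (ball x ρ) / ρ ^ (N - γ * p)` at `ρ = T / 2 ^ k`. Well separated scales again interact weakly;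
absorbing their interaction leaves the integral of the supremum, i.e. of the maximal function.
Hölder's inequality in the radius gives `W_γ ^ (q1 + q2) ≤ W_α ^ q1 * W_β ^ q2` pointwise, and
`M_{γp} ^ (1 / (p - 1))` is dominated by `W_γ` except at radii close to `T`. There, covering a ball
by translates of a smaller one and translation invariance of Lebesgue measure compare the radii
`T` and `T / 2` in integral.
-/

section Sequences

theorem tsum_pow_dist_le (ν : ℝ≥0∞) (i : ℕ) :
    ∑' j, ν ^ Nat.dist i j ≤ 2 * (1 - ν)⁻¹ := by
  have head : ∑ j ∈ Finset.range i, ν ^ Nat.dist i j ≤ (1 - ν)⁻¹ := by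
    calc ∑ j ∈ Finset.range i, ν ^ Nat.dist i j
        = ∑ j ∈ Finset.range i, ν ^ (i - 1 - j + 1) := by
          refine Finset.sum_congr rfl fun j hj => ?_
          rw [Finset.mem_range] at hj
          rw [Nat.dist_eq_sub_of_le_right hj.le]
          congr 1
          lia
      _ = ∑ j ∈ Finset.range i, ν ^ (j + 1) :=
          Finset.sum_range_reflect (fun j => ν ^ (j + 1)) i
      _ ≤ ∑' j, ν ^ (j + 1) := ENNReal.sum_le_tsum _
      _ ≤ ∑' j, ν ^ j := ENNReal.tsum_comp_le_tsum_of_injective (add_left_injective 1) _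
      _ = (1 - ν)⁻¹ := ENNReal.tsum_geometric ν
  have tail : ∑' j, ν ^ Nat.dist i (j + i) = (1 - ν)⁻¹ := by
    simp only [Nat.dist_eq_sub_of_le (Nat.le_add_left _ _), Nat.add_sub_cancel,
      ENNReal.tsum_geometric]
  rw [← Summable.sum_add_tsum_nat_add' (k := i) ENNReal.summable, tail, two_mul]
  gcongr

theorem tsum_tsum_pow_dist_mul_add_le (ν : ℝ≥0∞) (F : ℕ → ℝ≥0∞) :
    ∑' i, ∑' j, ν ^ Nat.dist i j * (F i + F j) ≤ 4 * (1 - ν)⁻¹ * ∑' i, F i := by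
  have rows : ∑' i, ∑' j, ν ^ Nat.dist i j * F i ≤ 2 * (1 - ν)⁻¹ * ∑' i, F i := by
    simp only [ENNReal.tsum_mul_right]
    rw [← ENNReal.tsum_mul_left]
    exact ENNReal.tsum_le_tsum fun i => mul_le_mul_left (tsum_pow_dist_le ν i) _
  have columns : ∑' i, ∑' j, ν ^ Nat.dist i j * F j = ∑' i, ∑' j, ν ^ Nat.dist i j * F i := by
    rw [ENNReal.tsum_comm]
    simp only [Nat.dist_comm]
  calc ∑' i, ∑' j, ν ^ Nat.dist i j * (F i + F j)
      = ∑' i, ∑' j, ν ^ Nat.dist i j * F i + ∑' i, ∑' j, ν ^ Nat.dist i j * F j := by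
        simp only [mul_add, ENNReal.tsum_add]
    _ ≤ 2 * (1 - ν)⁻¹ * ∑' i, F i + 2 * (1 - ν)⁻¹ * ∑' i, F i := by
        rw [columns]
        exact add_le_add rows rows
    _ = 4 * (1 - ν)⁻¹ * ∑' i, F i := by ring

theorem inv_one_sub_ne_top {ν : ℝ≥0∞} (hν : ν < 1) : (1 - ν)⁻¹ ≠ ∞ :=
  ENNReal.inv_ne_top.2 (tsub_pos_of_lt hν).ne'

theorem exists_forall_le_two_mul_of_mul_le {ι : Type*} {f : ι → ℝ≥0∞} {y P : ℝ≥0∞} (hP : P ≠ ∞)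
    (hy : y ≠ 0) (h : ∀ i, f i * y ≤ P) (hf : ∃ i, f i ≠ 0) :
    ∃ a, f a ≠ 0 ∧ f a ≠ ∞ ∧ ∀ i, f i ≤ 2 * f a := by
  obtain ⟨i₀, hi₀⟩ := hf
  have hsup : ⨆ i, f i ≠ ∞ := fun htop => by
    have hle : (⨆ i, f i) * y ≤ P := by rw [ENNReal.iSup_mul]; exact iSup_le h
    rw [htop, ENNReal.top_mul hy] at hle
    exact hP (top_le_iff.1 hle)
  have hpos : ⨆ i, f i ≠ 0 := fun h₀ => hi₀ (ENNReal.iSup_eq_zero.1 h₀ i₀)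
  obtain ⟨a, ha⟩ := lt_iSup_iff.1 (ENNReal.half_lt_self hpos hsup)
  refine ⟨a, (zero_le.trans_lt ha).ne', ne_top_of_le_ne_top hsup (le_iSup f a), fun i => ?_⟩
  rw [mul_comm]
  exact (le_iSup f i).trans
    ((ENNReal.div_le_iff two_ne_zero ENNReal.ofNat_ne_top).1 ha.le)

theorem tsum_rpow_le_of_rpow_le {q : ℝ} (hq : 0 < q) {A : ℕ → ℝ≥0∞} {Y ν : ℝ≥0∞} {c : ℕ}
    (h : ∀ i, A i ^ q ≤ Y * ν ^ Nat.dist c i) :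
    (∑' i, A i) ^ q ≤ Y * (2 * (1 - ν ^ q⁻¹)⁻¹) ^ q := by
  have hA (i : ℕ) : A i ≤ Y ^ q⁻¹ * (ν ^ q⁻¹) ^ Nat.dist c i := by
    calc A i ≤ (Y * ν ^ Nat.dist c i) ^ q⁻¹ := (ENNReal.le_rpow_inv_iff hq).2 (h i)
      _ = _ := by
        rw [ENNReal.mul_rpow_of_nonneg _ _ (inv_nonneg.2 hq.le), ← ENNReal.rpow_natCast,
          ← ENNReal.rpow_natCast, ← ENNReal.rpow_mul, ← ENNReal.rpow_mul, mul_comm q⁻¹]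
  calc (∑' i, A i) ^ q ≤ (Y ^ q⁻¹ * (2 * (1 - ν ^ q⁻¹)⁻¹)) ^ q := by
        gcongr
        refine (ENNReal.tsum_le_tsum hA).trans ?_
        rw [ENNReal.tsum_mul_left]
        exact mul_le_mul_right (tsum_pow_dist_le _ c) _
    _ = Y * (2 * (1 - ν ^ q⁻¹)⁻¹) ^ q := by
        rw [ENNReal.mul_rpow_of_nonneg _ _ hq.le, ENNReal.rpow_inv_rpow hq.ne']

theorem exists_tsum_rpow_le_of_mul_le {q : ℝ} (hq : 0 < q) {ν : ℝ≥0∞} (hν : ν < 1) :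
    ∃ C : ℝ≥0∞, C ≠ ∞ ∧ ∀ (A : ℕ → ℝ≥0∞) (x y P : ℝ≥0∞) (c : ℕ), y ≠ 0 → y ≠ ∞ →
      (∀ i, A i ^ q ≤ x) → (∀ i, A i ^ q * y ≤ P * ν ^ Nat.dist c i) →
      (∑' i, A i) ^ q ≤ (x * P / y) ^ (1 / 2 : ℝ) * C := by
  have hν' : (ν ^ (1 / 2 : ℝ)) ^ q⁻¹ < 1 :=
    ENNReal.rpow_lt_one (ENNReal.rpow_lt_one hν (by norm_num)) (inv_pos.2 hq)
  refine ⟨(2 * (1 - (ν ^ (1 / 2 : ℝ)) ^ q⁻¹)⁻¹) ^ q, ENNReal.rpow_ne_top_of_nonneg hq.le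
    (ENNReal.mul_ne_top ENNReal.ofNat_ne_top (inv_one_sub_ne_top hν')),
    fun A x y P c hy₀ hy hx h => tsum_rpow_le_of_rpow_le hq (c := c) fun i => ?_⟩
  have hsq : (A i ^ q) ^ (2 : ℝ) ≤ x * P / y * ν ^ Nat.dist c i := by
    rw [ENNReal.rpow_two, pow_two, ENNReal.mul_div_right_comm, mul_assoc,
      ← ENNReal.mul_div_right_comm,
      ENNReal.le_div_iff_mul_le (.inl hy₀) (.inl hy), mul_assoc]
    exact mul_le_mul' (hx i) (h i)
  calc A i ^ q = ((A i ^ q) ^ (2 : ℝ)) ^ (1 / 2 : ℝ) := by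
        rw [← ENNReal.rpow_mul]; norm_num
    _ ≤ (x * P / y * ν ^ Nat.dist c i) ^ (1 / 2 : ℝ) := by gcongr
    _ = (x * P / y) ^ (1 / 2 : ℝ) * (ν ^ (1 / 2 : ℝ)) ^ Nat.dist c i := by
        rw [ENNReal.mul_rpow_of_nonneg _ _ (by norm_num), ← ENNReal.rpow_natCast,
          ← ENNReal.rpow_natCast, ← ENNReal.rpow_mul, ← ENNReal.rpow_mul, mul_comm (1 / 2 : ℝ)]

-- Around near-maximal terms `A a ^ q₁` and `B b ^ q₂`, the terms of `A` decay away from `b` and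
-- those of `B` away from `a`.
theorem exists_tsum_rpow_mul_tsum_rpow_le_of_mul_le {q₁ q₂ : ℝ} (hq₁ : 0 < q₁) (hq₂ : 0 < q₂)
    {ν : ℝ≥0∞} (hν : ν < 1) :
    ∃ C : ℝ≥0∞, C ≠ ∞ ∧ ∀ (A B : ℕ → ℝ≥0∞) (P : ℝ≥0∞), P ≠ ∞ →
      (∀ i j, A i ^ q₁ * B j ^ q₂ ≤ P * ν ^ Nat.dist i j) →
      (∑' i, A i) ^ q₁ * (∑' j, B j) ^ q₂ ≤ C * P := by
  obtain ⟨K₁, hK₁, hSA⟩ := exists_tsum_rpow_le_of_mul_le hq₁ hν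
  obtain ⟨K₂, hK₂, hSB⟩ := exists_tsum_rpow_le_of_mul_le hq₂ hν
  refine ⟨2 * (K₁ * K₂), by finiteness, fun A B P hP h => ?_⟩
  by_cases hA : ∀ i, A i = 0
  · simp [hA, hq₁]
  by_cases hB : ∀ j, B j = 0
  · simp [hB, hq₂]
  push Not at hA hB
  have hA' : ∃ i, A i ^ q₁ ≠ 0 := hA.imp fun i hi => by simp [hi, hq₁.le]
  have hB' : ∃ j, B j ^ q₂ ≠ 0 := hB.imp fun j hj => by simp [hj, hq₂.le]
  have hP' (i j : ℕ) : A i ^ q₁ * B j ^ q₂ ≤ P :=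
    (h i j).trans (mul_le_of_le_one_right' (pow_le_one' hν.le _))
  obtain ⟨a, hX₀, hX, ha⟩ := exists_forall_le_two_mul_of_mul_le hP hB'.choose_spec
    (fun i => hP' i _) hA'
  obtain ⟨b, hY₀, hY, hb⟩ := exists_forall_le_two_mul_of_mul_le hP hA'.choose_spec
    (fun j => mul_comm (B j ^ q₂) _ ▸ hP' _ j) hB'
  replace hSA := hSA A _ _ P b hY₀ hY ha fun i => Nat.dist_comm b i ▸ h i b
  replace hSB := hSB B _ _ P a hX₀ hX hb fun j => mul_comm (B j ^ q₂) _ ▸ h a j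
  set X := A a ^ q₁
  set Y := B b ^ q₂
  have hcancel : 2 * X * P / Y * (2 * Y * P / X) = (2 * P) ^ (2 : ℝ) := by
    calc _ = (2 * P) ^ 2 * (X * X⁻¹) * (Y * Y⁻¹) := by
          rw [div_eq_mul_inv, div_eq_mul_inv]; ring
      _ = _ := by
        rw [ENNReal.mul_inv_cancel hX₀ hX, ENNReal.mul_inv_cancel hY₀ hY, mul_one, mul_one,
          ENNReal.rpow_two]
  calc (∑' i, A i) ^ q₁ * (∑' j, B j) ^ q₂
      ≤ (2 * X * P / Y) ^ (1 / 2 : ℝ) * K₁ * ((2 * Y * P / X) ^ (1 / 2 : ℝ) * K₂) :=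
        mul_le_mul' hSA hSB
    _ = (2 * X * P / Y * (2 * Y * P / X)) ^ (1 / 2 : ℝ) * (K₁ * K₂) := by
        rw [ENNReal.mul_rpow_of_nonneg _ _ (by norm_num), mul_mul_mul_comm]
    _ = 2 * (K₁ * K₂) * P := by
        rw [hcancel, ← ENNReal.rpow_mul, mul_one_div_cancel two_ne_zero, ENNReal.rpow_one]
        ring

theorem exists_tsum_rpow_mul_tsum_rpow_le {q₁ q₂ : ℝ} (hq₁ : 0 < q₁) (hq₂ : 0 < q₂) {ν : ℝ≥0∞}
    (hν₀ : ν ≠ 0) (hν : ν < 1) :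
    ∃ C : ℝ≥0∞, C ≠ ∞ ∧ ∀ A B : ℕ → ℝ≥0∞, (∑' i, A i) ^ q₁ * (∑' j, B j) ^ q₂ ≤
      C * ∑' i, ∑' j, ν⁻¹ ^ Nat.dist i j * (A i ^ q₁ * B j ^ q₂) := by
  obtain ⟨C, hC, h⟩ := exists_tsum_rpow_mul_tsum_rpow_le_of_mul_le hq₁ hq₂ hν
  refine ⟨C + 1, by finiteness, fun A B => ?_⟩
  set P := ∑' i, ∑' j, ν⁻¹ ^ Nat.dist i j * (A i ^ q₁ * B j ^ q₂)
  rcases eq_or_ne P ∞ with hP | hP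
  · simp [hP]
  refine (h A B P hP fun i j => ?_).trans (mul_le_mul_left le_self_add P)
  have hterm : ν⁻¹ ^ Nat.dist i j * (A i ^ q₁ * B j ^ q₂) ≤ P :=
    (ENNReal.le_tsum j).trans (ENNReal.le_tsum (f := fun i => ∑' j, _) i)
  rwa [← ENNReal.inv_pow, mul_comm, ← div_eq_mul_inv, ENNReal.div_le_iff_le_mul
    (.inl (pow_ne_zero _ hν₀)) (.inl (ENNReal.pow_ne_top hν.ne_top))] at hterm

theorem sum_range_ite_mem_Ico_le (M : ℝ≥0∞) (a n K : ℕ) :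
    ∑ k ∈ Finset.range K, (if k ∈ Finset.Ico (a + 1 - n) (a + n) then M else 0) ≤ 2 * n * M := by
  calc ∑ k ∈ Finset.range K, (if k ∈ Finset.Ico (a + 1 - n) (a + n) then M else 0)
      ≤ ∑ _ ∈ Finset.Ico (a + 1 - n) (a + n), M := by
        rw [← Finset.sum_filter]
        exact Finset.sum_le_sum_of_subset fun k hk => (Finset.mem_filter.1 hk).2
    _ ≤ 2 * n * M := by
        rw [Finset.sum_const, nsmul_eq_mul, Nat.card_Ico]
        gcongr
        exact_mod_cast (by lia : a + n - (a + 1 - n) ≤ 2 * n)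

theorem tsum_ite_le_eq_tsum_add (f : ℕ → ℝ≥0∞) (c : ℕ) :
    ∑' k, (if c ≤ k then f k else 0) = ∑' m, f (c + m) := by
  have hzero : ∑ k ∈ Finset.range c, (if c ≤ k then f k else 0) = 0 :=
    Finset.sum_eq_zero fun k hk => if_neg (Finset.mem_range.1 hk).not_ge
  rw [← Summable.sum_add_tsum_nat_add' (k := c) ENNReal.summable, hzero, zero_add]
  simp only [add_comm _ c, if_pos (Nat.le_add_right _ _)]

theorem sum_range_le_mul_add_sum_tsum_min {e : ℕ → ℝ≥0∞} {M : ℝ≥0∞} (hM : ∀ k, e k ≤ M)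
    (n K : ℕ) :
    ∑ k ∈ Finset.range K, e k ≤
      2 * n * M + 2 * ∑ i ∈ Finset.range K, ∑' m, min (e i) (e (i + n + m)) := by
  rcases K.eq_zero_or_pos with rfl | hK
  · simp
  -- Terms at distance less than `n` from the maximizer `a` are at most `M`; every other one is the
  -- minimum of itself and `e a`.
  obtain ⟨a, haK, ha⟩ := Finset.exists_max_image (Finset.range K) e
    (Finset.nonempty_range_iff.2 hK.ne')
  set near : ℕ → ℝ≥0∞ := fun k => if k ∈ Finset.Ico (a + 1 - n) (a + n) then M else 0
  set above : ℕ → ℝ≥0∞ := fun k => if a + n ≤ k then min (e a) (e k) else 0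
  have hsplit (k : ℕ) (hk : k ∈ Finset.range K) :
      e k ≤ near k + (∑' m, min (e k) (e (k + n + m)) + above k) := by
    rcases lt_or_ge a (k + n) with hak | hak
    · rcases lt_or_ge k (a + n) with hka | hka
      · have hmem : k ∈ Finset.Ico (a + 1 - n) (a + n) := Finset.mem_Ico.2 ⟨by lia, hka⟩
        simp only [near, if_pos hmem]
        exact (hM k).trans le_self_add
      · simp only [above, if_pos hka, min_eq_right (ha k hk)]
        exact le_add_self.trans le_add_self
    · obtain ⟨m, rfl⟩ := Nat.exists_eq_add_of_le hak
      calc e k = min (e k) (e (k + n + m)) := (min_eq_left (ha k hk)).symm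
        _ ≤ ∑' m, min (e k) (e (k + n + m)) := ENNReal.le_tsum m
        _ ≤ _ := le_self_add.trans le_add_self
  have habove : ∑ k ∈ Finset.range K, above k ≤
      ∑ i ∈ Finset.range K, ∑' m, min (e i) (e (i + n + m)) := by
    calc ∑ k ∈ Finset.range K, above k ≤ ∑' k, above k := ENNReal.sum_le_tsum _
      _ = ∑' m, min (e a) (e (a + n + m)) := tsum_ite_le_eq_tsum_add _ _
      _ ≤ _ := Finset.single_le_sum
          (f := fun i => ∑' m, min (e i) (e (i + n + m))) (fun _ _ => zero_le) haK
  calc ∑ k ∈ Finset.range K, e k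
      ≤ ∑ k ∈ Finset.range K, (near k + (∑' m, min (e k) (e (k + n + m)) + above k)) :=
        Finset.sum_le_sum hsplit
    _ ≤ _ := by
        rw [Finset.sum_add_distrib, Finset.sum_add_distrib, two_mul (∑ i ∈ _, _)]
        gcongr
        exact sum_range_ite_mem_Ico_le M a n K

end Sequences

section Families

variable {X : Type*} [MeasurableSpace X] {μ : Measure X}

theorem sum_range_lintegral_le {e : ℕ → X → ℝ≥0∞} (he : ∀ k, Measurable (e k)) (n K : ℕ) :
    ∑ k ∈ Finset.range K, ∫⁻ x, e k x ∂μ ≤ 2 * n * ∫⁻ x, ⨆ k, e k x ∂μ +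
      2 * ∑ i ∈ Finset.range K, ∑' m, ∫⁻ x, min (e i x) (e (i + n + m) x) ∂μ := by
  have hmin (i m : ℕ) : Measurable fun x => min (e i x) (e (i + n + m) x) := (he _).min (he _)
  calc ∑ k ∈ Finset.range K, ∫⁻ x, e k x ∂μ
      = ∫⁻ x, ∑ k ∈ Finset.range K, e k x ∂μ := (lintegral_finsetSum _ fun k _ => he k).symm
    _ ≤ ∫⁻ x, (2 * n * (⨆ k, e k x) +
        2 * ∑ i ∈ Finset.range K, ∑' m, min (e i x) (e (i + n + m) x)) ∂μ :=
        lintegral_mono fun x =>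
          sum_range_le_mul_add_sum_tsum_min (e := fun k => e k x) (le_iSup fun k => e k x) n K
    _ = _ := by
        rw [lintegral_add_left ((Measurable.iSup he).const_mul _),
          lintegral_const_mul _ (Measurable.iSup he), lintegral_const_mul _
            (Finset.measurable_sum _ fun i _ => Measurable.tsum fun m => hmin i m),
          lintegral_finsetSum _ fun i _ => Measurable.tsum fun m => hmin i m]
        simp only [lintegral_tsum fun m => (hmin _ m).aemeasurable]

theorem tsum_lintegral_le_of_four_mul_le {e : ℕ → X → ℝ≥0∞} {A ρ : ℝ≥0∞} {n : ℕ}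
    (hn : 4 * (A * ρ ^ n * (1 - ρ)⁻¹) ≤ 1) (he : ∀ k, Measurable (e k))
    (h : ∀ i m, ∫⁻ x, min (e (i + 1) x) (e (i + 1 + m) x) ∂μ ≤ A * ρ ^ m * ∫⁻ x, e i x ∂μ) :
    ∑' k, ∫⁻ x, e k x ∂μ ≤ (4 * n + 2) * ∫⁻ x, ⨆ k, e k x ∂μ := by
  set I := ∫⁻ x, ⨆ k, e k x ∂μ
  rcases eq_or_ne I ∞ with hI | hI
  · simp [hI]
  have heI (k : ℕ) : ∫⁻ x, e k x ∂μ ≤ I := lintegral_mono fun x => le_iSup (fun k => e k x) k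
  have htail (i : ℕ) : ∑' m, ∫⁻ x, min (e (i + 1) x) (e (i + n + m + 1) x) ∂μ ≤
      A * ρ ^ n * (1 - ρ)⁻¹ * ∫⁻ x, e i x ∂μ := by
    calc ∑' m, ∫⁻ x, min (e (i + 1) x) (e (i + n + m + 1) x) ∂μ
        ≤ ∑' m, A * ρ ^ n * (∫⁻ x, e i x ∂μ) * ρ ^ m := ENNReal.tsum_le_tsum fun m => by
          rw [add_assoc i, add_right_comm]
          exact (h i (n + m)).trans_eq (by ring)
      _ = _ := by rw [ENNReal.tsum_mul_left, ENNReal.tsum_geometric]; ring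
  refine ENNReal.tsum_le_of_sum_range_le fun K => ?_
  set T := ∑ k ∈ Finset.range K, ∫⁻ x, e (k + 1) x ∂μ
  set E := ∑ k ∈ Finset.range K, ∫⁻ x, e k x ∂μ
  have hE : E ≠ ∞ := (ENNReal.sum_lt_top.2 fun k _ => (heI k).trans_lt hI.lt_top).ne
  have hET : E ≤ I + T := by
    calc E ≤ ∑ k ∈ Finset.range (K + 1), ∫⁻ x, e k x ∂μ := by
          rw [Finset.sum_range_succ]; exact le_self_add
      _ = T + ∫⁻ x, e 0 x ∂μ := Finset.sum_range_succ' _ _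
      _ ≤ I + T := by rw [add_comm]; gcongr; exact heI 0
  have hT : T ≤ 2 * n * I + 2 * (A * ρ ^ n * (1 - ρ)⁻¹ * E) := by
    refine (sum_range_lintegral_le (fun k => he (k + 1)) n K).trans ?_
    rw [Finset.mul_sum _ _ (A * ρ ^ n * (1 - ρ)⁻¹)]
    gcongr
    · exact lintegral_mono fun x => iSup_le fun k => le_iSup (fun k => e k x) (k + 1)
    · exact htail _
  refine (ENNReal.add_le_add_iff_right hE).1 ?_
  calc E + E ≤ 2 * (I + (2 * n * I + 2 * (A * ρ ^ n * (1 - ρ)⁻¹ * E))) := by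
        rw [← two_mul]; gcongr; exact hET.trans (by gcongr)
    _ = (4 * n + 2) * I + 4 * (A * ρ ^ n * (1 - ρ)⁻¹) * E := by ring
    _ ≤ (4 * n + 2) * I + 1 * E := by gcongr
    _ = (4 * n + 2) * I + E := by rw [one_mul]

theorem exists_tsum_lintegral_le_lintegral_iSup {A ρ : ℝ≥0∞} (hA : A ≠ ∞) (hρ : ρ < 1) :
    ∃ C : ℝ≥0∞, C ≠ ∞ ∧ ∀ e : ℕ → X → ℝ≥0∞, (∀ k, Measurable (e k)) →
      (∀ i m, ∫⁻ x, min (e (i + 1) x) (e (i + 1 + m) x) ∂μ ≤ A * ρ ^ m * ∫⁻ x, e i x ∂μ) →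
      ∑' k, ∫⁻ x, e k x ∂μ ≤ C * ∫⁻ x, ⨆ k, e k x ∂μ := by
  have hlim : Tendsto (fun n => 4 * (A * ρ ^ n * (1 - ρ)⁻¹)) atTop (𝓝 0) := by
    have hC : 4 * (A * (1 - ρ)⁻¹) ≠ ∞ := ENNReal.mul_ne_top ENNReal.ofNat_ne_top
      (ENNReal.mul_ne_top hA (inv_one_sub_ne_top hρ))
    have := ENNReal.Tendsto.const_mul (ENNReal.tendsto_pow_atTop_nhds_zero_of_lt_one hρ)
      (.inr hC)
    rw [mul_zero] at this
    exact this.congr fun n => by ring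
  obtain ⟨n, hn⟩ := (hlim.eventually_le_const zero_lt_one).exists
  exact ⟨4 * n + 2, by finiteness, fun e he h => tsum_lintegral_le_of_four_mul_le hn he h⟩

theorem exists_lintegral_tsum_rpow_mul_tsum_rpow_le {q₁ q₂ : ℝ} (hq₁ : 0 < q₁) (hq₂ : 0 < q₂)
    {ν : ℝ≥0∞} (hν₀ : ν ≠ 0) (hν : ν < 1) :
    ∃ C : ℝ≥0∞, C ≠ ∞ ∧ ∀ (A B : ℕ → X → ℝ≥0∞) (F : ℕ → ℝ≥0∞), (∀ i, Measurable (A i)) →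
      (∀ j, Measurable (B j)) →
      (∀ i j, ∫⁻ x, A i x ^ q₁ * B j x ^ q₂ ∂μ ≤ (ν ^ 2) ^ Nat.dist i j * (F i + F j)) →
      ∫⁻ x, (∑' i, A i x) ^ q₁ * (∑' j, B j x) ^ q₂ ∂μ ≤ C * ∑' i, F i := by
  obtain ⟨C, hC, hAB⟩ := exists_tsum_rpow_mul_tsum_rpow_le hq₁ hq₂ hν₀ hν
  refine ⟨C * (4 * (1 - ν)⁻¹), ENNReal.mul_ne_top hC
    (ENNReal.mul_ne_top ENNReal.ofNat_ne_top (inv_one_sub_ne_top hν)), fun A B F hA hB h => ?_⟩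
  have hmeas (i j : ℕ) : Measurable fun x => A i x ^ q₁ * B j x ^ q₂ :=
    ((hA i).pow_const _).mul ((hB j).pow_const _)
  have hpair (i j : ℕ) : ν⁻¹ ^ Nat.dist i j * ∫⁻ x, A i x ^ q₁ * B j x ^ q₂ ∂μ ≤
      ν ^ Nat.dist i j * (F i + F j) := by
    calc ν⁻¹ ^ Nat.dist i j * ∫⁻ x, A i x ^ q₁ * B j x ^ q₂ ∂μ
        ≤ ν⁻¹ ^ Nat.dist i j * ((ν ^ 2) ^ Nat.dist i j * (F i + F j)) := by gcongr; exact h i j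
      _ = _ := by
        rw [← mul_assoc, ← mul_pow, pow_two, ← mul_assoc, ENNReal.inv_mul_cancel hν₀ hν.ne_top,
          one_mul]
  calc ∫⁻ x, (∑' i, A i x) ^ q₁ * (∑' j, B j x) ^ q₂ ∂μ
      ≤ ∫⁻ x, C * ∑' i, ∑' j, ν⁻¹ ^ Nat.dist i j * (A i x ^ q₁ * B j x ^ q₂) ∂μ :=
        lintegral_mono fun x => hAB _ _
    _ = C * ∑' i, ∑' j, ν⁻¹ ^ Nat.dist i j * ∫⁻ x, A i x ^ q₁ * B j x ^ q₂ ∂μ := by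
        rw [lintegral_const_mul' _ _ hC, lintegral_tsum fun i =>
          (Measurable.tsum fun j => (hmeas i j).const_mul _).aemeasurable]
        simp only [lintegral_tsum fun j => ((hmeas _ j).const_mul _).aemeasurable,
          lintegral_const_mul _ (hmeas _ _)]
    _ ≤ C * ∑' i, ∑' j, ν ^ Nat.dist i j * (F i + F j) := by
        gcongr C * ?_
        exact ENNReal.tsum_le_tsum fun i => ENNReal.tsum_le_tsum fun j => hpair i j
    _ ≤ C * (4 * (1 - ν)⁻¹ * ∑' i, F i) := by gcongr; exact tsum_tsum_pow_dist_mul_add_le ν F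
    _ = _ := by ring

end Families

section BallAverages

section PseudoMetric

variable {X : Type*} [PseudoMetricSpace X] [SecondCountableTopology X] [MeasurableSpace X]
  [OpensMeasurableSpace X]

theorem measurableSet_dist_lt (r : ℝ) : MeasurableSet {z : X × X | dist z.2 z.1 < r} :=
  measurableSet_lt (by fun_prop) measurable_const

theorem measurable_measure_ball (ω : Measure X) [SFinite ω] (ρ : ℝ) :
    Measurable fun x => ω (ball x ρ) :=
  measurable_measure_prodMk_left (measurableSet_dist_lt ρ)

theorem lintegral_lintegral_ball_comm {μ ν : Measure X} [SFinite μ] [SFinite ν] (r : ℝ)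
    {F : X → X → ℝ≥0∞} (hF : Measurable (Function.uncurry F)) :
    ∫⁻ x, ∫⁻ y in ball x r, F x y ∂ν ∂μ = ∫⁻ y, ∫⁻ x in ball y r, F x y ∂μ ∂ν := by
  set G : X → X → ℝ≥0∞ :=
    Function.curry ({z : X × X | dist z.2 z.1 < r}.indicator (Function.uncurry F))
  have hG : Measurable (Function.uncurry G) := hF.indicator (measurableSet_dist_lt r)
  have hleft (x : X) : ∫⁻ y in ball x r, F x y ∂ν = ∫⁻ y, G x y ∂ν :=
    (lintegral_indicator measurableSet_ball _).symm
  have hright (y : X) : ∫⁻ x in ball y r, F x y ∂μ = ∫⁻ x, G x y ∂μ := by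
    simp only [← lintegral_indicator measurableSet_ball, G, Function.curry, indicator, mem_ball,
      mem_ofPred_eq, dist_comm y, Function.uncurry]
  simp only [hleft, hright]
  exact lintegral_lintegral_swap hG.aemeasurable

end PseudoMetric

variable {E : Type*} [NormedAddCommGroup E] [NormedSpace ℝ E] [FiniteDimensional ℝ E]

theorem exists_finset_ball_subset_biUnion_ball (c : ℝ) :
    ∃ F : Finset E, ∀ (x : E) (ρ : ℝ), 0 < ρ → ball x (c * ρ) ⊆ ⋃ v ∈ F, ball (x + ρ • v) ρ := by
  have := FiniteDimensional.proper ℝ E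
  obtain ⟨F, -, hF, hcover⟩ := (isCompact_closedBall (0 : E) c).finite_cover_balls one_pos
  refine ⟨hF.toFinset, fun x ρ hρ y hy => ?_⟩
  have hmem : ρ⁻¹ • (y - x) ∈ closedBall (0 : E) c := by
    rw [mem_closedBall_zero_iff, norm_smul, norm_inv, Real.norm_of_nonneg hρ.le,
      inv_mul_le_iff₀ hρ, mul_comm, ← dist_eq_norm]
    exact (mem_ball.1 hy).le
  obtain ⟨v, hv, hyv⟩ := mem_iUnion₂.1 (hcover hmem)
  refine mem_iUnion₂.2 ⟨v, hF.mem_toFinset.2 hv, ?_⟩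
  rw [mem_ball, dist_eq_norm] at hyv ⊢
  have hscale : y - (x + ρ • v) = ρ • (ρ⁻¹ • (y - x) - v) := by
    rw [smul_sub, smul_inv_smul₀ hρ.ne', sub_add_eq_sub_sub]
  rw [hscale, norm_smul, Real.norm_of_nonneg hρ.le]
  exact mul_lt_of_lt_one_right hρ hyv

variable [MeasurableSpace E] [BorelSpace E] (μ : Measure E) [μ.IsAddHaarMeasure]

theorem addHaar_ball_eq_rpow_mul {ρ r : ℝ} (hρ : 0 < ρ) (hr : 0 < r) (x y : E) :
    μ (ball x ρ) = ENNReal.ofReal ((ρ / r) ^ (finrank ℝ E : ℝ)) * μ (ball y r) := by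
  have h := Measure.addHaar_ball_mul_of_pos μ x (div_pos hρ hr) r
  rwa [div_mul_cancel₀ _ hr.ne', ← Real.rpow_natCast, ← Measure.addHaar_ball_center μ y] at h

theorem exists_lintegral_measure_ball_mul_rpow_le {t : ℝ} (ht : 1 ≤ t) (c : ℝ) :
    ∃ C : ℝ≥0∞, C ≠ ∞ ∧ ∀ (ω : Measure E) [SFinite ω] (ρ : ℝ), 0 < ρ →
      ∫⁻ x, ω (ball x (c * ρ)) ^ t ∂μ ≤ C * ∫⁻ x, ω (ball x ρ) ^ t ∂μ := by
  obtain ⟨F, hF⟩ := exists_finset_ball_subset_biUnion_ball (E := E) c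
  have hK : (F.card : ℝ≥0∞) ^ (t - 1) ≠ ∞ :=
    ENNReal.rpow_ne_top_of_nonneg (sub_nonneg.2 ht) (ENNReal.natCast_ne_top _)
  refine ⟨(F.card : ℝ≥0∞) ^ (t - 1) * F.card, ENNReal.mul_ne_top hK (ENNReal.natCast_ne_top _),
    fun ω _ ρ hρ => ?_⟩
  have hm : Measurable fun x => ω (ball x ρ) ^ t := (measurable_measure_ball ω ρ).pow_const t
  calc ∫⁻ x, ω (ball x (c * ρ)) ^ t ∂μ
      ≤ ∫⁻ x, (F.card : ℝ≥0∞) ^ (t - 1) * ∑ v ∈ F, ω (ball (x + ρ • v) ρ) ^ t ∂μ := by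
        refine lintegral_mono fun x => ?_
        refine (ENNReal.rpow_le_rpow ((measure_mono (hF x ρ hρ)).trans
          (measure_biUnion_finset_le F _)) (by linarith)).trans ?_
        exact ENNReal.rpow_sum_le_const_mul_sum_rpow F _ ht
    _ = (F.card : ℝ≥0∞) ^ (t - 1) * ∑ v ∈ F, ∫⁻ x, ω (ball (x + ρ • v) ρ) ^ t ∂μ := by
        rw [lintegral_const_mul' _ _ hK, lintegral_finsetSum]
        exact fun v _ => hm.comp (measurable_add_const (ρ • v))
    _ = (F.card : ℝ≥0∞) ^ (t - 1) * F.card * ∫⁻ x, ω (ball x ρ) ^ t ∂μ := by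
        simp only [lintegral_add_right_eq_self (μ := μ) fun x => ω (ball x ρ) ^ t,
          Finset.sum_const, nsmul_eq_mul, mul_assoc]

variable (ω : Measure E) [SFinite ω]

theorem setLIntegral_measure_ball_le {ρ r : ℝ} (hρ : 0 < ρ) (hρr : ρ ≤ r) (y : E) :
    ∫⁻ x in ball y r, ω (ball x ρ) ∂μ ≤
      ENNReal.ofReal ((ρ / r) ^ (finrank ℝ E : ℝ)) * μ (ball y r) * ω (ball y (2 * r)) := by
  calc ∫⁻ x in ball y r, ω (ball x ρ) ∂μ
      ≤ ∫⁻ x in ball y r, ∫⁻ _ in ball x ρ, 1 ∂(ω.restrict (ball y (2 * r))) ∂μ := by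
        refine setLIntegral_mono' measurableSet_ball fun x hx => ?_
        rw [setLIntegral_one, Measure.restrict_apply measurableSet_ball,
          inter_eq_left.2 (ball_subset_ball' (by linarith [mem_ball.1 hx]))]
    _ ≤ ∫⁻ x, ∫⁻ _ in ball x ρ, 1 ∂(ω.restrict (ball y (2 * r))) ∂μ :=
        setLIntegral_le_lintegral _ _
    _ = ∫⁻ z in ball y (2 * r), μ (ball z ρ) ∂ω := by
        rw [lintegral_lintegral_ball_comm ρ measurable_const]
        simp only [setLIntegral_one]
    _ = _ := by
        simp only [fun z => addHaar_ball_eq_rpow_mul μ hρ (hρ.trans_le hρr) z y, setLIntegral_const]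

theorem setLIntegral_measure_ball_rpow_le_of_one_le {ρ r v : ℝ} (hρ : 0 < ρ) (hρr : ρ ≤ r)
    (hv : 1 ≤ v) (y : E) :
    ∫⁻ x in ball y r, ω (ball x ρ) ^ v ∂μ ≤
      ENNReal.ofReal ((ρ / r) ^ (finrank ℝ E : ℝ)) * μ (ball y r) * ω (ball y (2 * r)) ^ v := by
  have hpow (a : ℝ≥0∞) : a ^ v = a * a ^ (v - 1) := by
    conv_lhs => rw [← add_sub_cancel 1 v,
      ENNReal.rpow_add_of_nonneg _ _ zero_le_one (sub_nonneg.2 hv), ENNReal.rpow_one]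
  calc ∫⁻ x in ball y r, ω (ball x ρ) ^ v ∂μ
      ≤ ∫⁻ x in ball y r, ω (ball x ρ) * ω (ball y (2 * r)) ^ (v - 1) ∂μ := by
        refine setLIntegral_mono' measurableSet_ball fun x hx => ?_
        rw [hpow]
        gcongr
        exact ball_subset_ball' (by linarith [mem_ball.1 hx])
    _ = (∫⁻ x in ball y r, ω (ball x ρ) ∂μ) * ω (ball y (2 * r)) ^ (v - 1) :=
        lintegral_mul_const _ (measurable_measure_ball ω ρ)
    _ ≤ _ := by
        rw [hpow, ← mul_assoc]
        gcongr
        exact setLIntegral_measure_ball_le μ ω hρ hρr y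

theorem setLIntegral_measure_ball_rpow_le_of_le_one {ρ r v : ℝ} (hρ : 0 < ρ) (hρr : ρ ≤ r)
    (hv₀ : 0 ≤ v) (hv : v ≤ 1) (y : E) :
    ∫⁻ x in ball y r, ω (ball x ρ) ^ v ∂μ ≤
      ENNReal.ofReal ((ρ / r) ^ (finrank ℝ E * v)) * μ (ball y r) * ω (ball y (2 * r)) ^ v := by
  have hr : 0 < r := hρ.trans_le hρr
  have hölder := ENNReal.lintegral_mul_norm_pow_le (μ := μ.restrict (ball y r))
    (f := fun x => ω (ball x ρ)) (g := fun _ => 1) (measurable_measure_ball ω ρ).aemeasurable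
    aemeasurable_const hv₀ (sub_nonneg.2 hv) (add_sub_cancel v 1)
  simp only [ENNReal.one_rpow, mul_one, setLIntegral_one] at hölder
  calc ∫⁻ x in ball y r, ω (ball x ρ) ^ v ∂μ
      ≤ (∫⁻ x in ball y r, ω (ball x ρ) ∂μ) ^ v * μ (ball y r) ^ (1 - v) := hölder
    _ ≤ (ENNReal.ofReal ((ρ / r) ^ (finrank ℝ E : ℝ)) * μ (ball y r) * ω (ball y (2 * r))) ^ v *
          μ (ball y r) ^ (1 - v) := by
        gcongr
        exact setLIntegral_measure_ball_le μ ω hρ hρr y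
    _ = ENNReal.ofReal ((ρ / r) ^ (finrank ℝ E : ℝ)) ^ v *
          (μ (ball y r) ^ v * μ (ball y r) ^ (1 - v)) * ω (ball y (2 * r)) ^ v := by
        rw [ENNReal.mul_rpow_of_nonneg _ _ hv₀, ENNReal.mul_rpow_of_nonneg _ _ hv₀]
        ring
    _ = _ := by
        rw [← ENNReal.rpow_add_of_nonneg _ _ hv₀ (sub_nonneg.2 hv), add_sub_cancel,
          ENNReal.rpow_one, ENNReal.ofReal_rpow_of_nonneg (by positivity) hv₀,
          ← Real.rpow_mul (by positivity)]

theorem setLIntegral_measure_ball_rpow_le {ρ r v : ℝ} (hρ : 0 < ρ) (hρr : ρ ≤ r) (hv : 0 ≤ v)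
    (y : E) :
    ∫⁻ x in ball y r, ω (ball x ρ) ^ v ∂μ ≤
      ENNReal.ofReal ((ρ / r) ^ (finrank ℝ E * min v 1)) * μ (ball y r) *
        ω (ball y (2 * r)) ^ v := by
  rcases le_total v 1 with hv₁ | hv₁
  · rw [min_eq_left hv₁]
    exact setLIntegral_measure_ball_rpow_le_of_le_one μ ω hρ hρr hv hv₁ y
  · rw [min_eq_right hv₁, mul_one]
    exact setLIntegral_measure_ball_rpow_le_of_one_le μ ω hρ hρr hv₁ y

theorem lintegral_measure_ball_rpow_mul_rpow_le {ρ r u v : ℝ} (hρ : 0 < ρ) (hρr : ρ ≤ r)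
    (hu : 0 ≤ u) (hv : 0 ≤ v) :
    ∫⁻ x, ω (ball x r) ^ u * ω (ball x ρ) ^ v ∂μ ≤
      ENNReal.ofReal ((ρ / r) ^ (finrank ℝ E * min v 1)) *
        ∫⁻ x, ω (ball x (2 * r)) ^ (u + v) ∂μ := by
  have hr : 0 < r := hρ.trans_le hρr
  have hm := measurable_measure_ball ω
  set V := μ (ball 0 r)
  have hVball (x : E) : μ (ball x r) = V := Measure.addHaar_ball_center μ x r
  have hV₀ : V ≠ 0 := (measure_ball_pos _ _ hr).ne'
  have hVt : V ≠ ∞ := measure_ball_lt_top.ne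
  rw [← ENNReal.mul_le_mul_iff_right hV₀ hVt]
  calc V * ∫⁻ x, ω (ball x r) ^ u * ω (ball x ρ) ^ v ∂μ
      = ∫⁻ x, ∫⁻ _ in ball x r, ω (ball x r) ^ u * ω (ball x ρ) ^ v ∂μ ∂μ := by
        simp only [setLIntegral_const, hVball]
        rw [lintegral_mul_const' _ _ hVt, mul_comm]
    _ ≤ ∫⁻ x, ∫⁻ y in ball x r, ω (ball y (2 * r)) ^ u * ω (ball x ρ) ^ v ∂μ ∂μ := by
        refine lintegral_mono fun x => setLIntegral_mono' measurableSet_ball fun y hy => ?_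
        gcongr
        exact ball_subset_ball' (by linarith [mem_ball'.1 hy])
    _ = ∫⁻ y, ω (ball y (2 * r)) ^ u * ∫⁻ x in ball y r, ω (ball x ρ) ^ v ∂μ ∂μ := by
        rw [lintegral_lintegral_ball_comm r ((((hm _).comp measurable_snd).pow_const u).mul
          (((hm _).comp measurable_fst).pow_const v))]
        exact lintegral_congr fun y => lintegral_const_mul _ ((hm ρ).pow_const v)
    _ ≤ ∫⁻ y, ω (ball y (2 * r)) ^ u * (ENNReal.ofReal ((ρ / r) ^ (finrank ℝ E * min v 1)) * V *
          ω (ball y (2 * r)) ^ v) ∂μ := by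
        gcongr with y
        exact hVball y ▸ setLIntegral_measure_ball_rpow_le μ ω hρ hρr hv y
    _ = ∫⁻ y, V * ENNReal.ofReal ((ρ / r) ^ (finrank ℝ E * min v 1)) *
          ω (ball y (2 * r)) ^ (u + v) ∂μ := by
        refine lintegral_congr fun y => ?_
        rw [ENNReal.rpow_add_of_nonneg _ _ hu hv]
        ring
    _ = _ := by
        rw [lintegral_const_mul' _ _ (ENNReal.mul_ne_top hVt ENNReal.ofReal_ne_top), mul_assoc]

end BallAverages

section BallDensity

theorem rpow_mul_rpow_le_rpow_add_add_rpow_add (a b : ℝ≥0∞) {u v : ℝ} (hu : 0 ≤ u) (hv : 0 ≤ v) :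
    a ^ u * b ^ v ≤ a ^ (u + v) + b ^ (u + v) := by
  rw [ENNReal.rpow_add_of_nonneg _ _ hu hv, ENNReal.rpow_add_of_nonneg _ _ hu hv]
  rcases le_total a b with hab | hab
  · exact le_add_left (by gcongr)
  · exact le_add_right (by gcongr)

theorem min_rpow_add_le_rpow_mul_rpow (a b : ℝ≥0∞) {u v : ℝ} (hu : 0 ≤ u) (hv : 0 ≤ v) :
    min (a ^ (u + v)) (b ^ (u + v)) ≤ a ^ u * b ^ v := by
  rw [ENNReal.rpow_add_of_nonneg _ _ hu hv, ENNReal.rpow_add_of_nonneg _ _ hu hv]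
  rcases le_total a b with hab | hab
  · exact min_le_of_left_le (by gcongr)
  · exact min_le_of_right_le (by gcongr)

section PseudoMetric

variable {X : Type*} [PseudoMetricSpace X] [MeasurableSpace X]

/-- The `σ`-dimensional density `ω(B_ρ(x)) / ρ^σ`. Wolff potentials, fractional maximal functions
and their dyadic discretizations are all built from it, with `σ = N - αp`. -/
def ballDensity (ω : Measure X) (σ ρ : ℝ) (x : X) : ℝ≥0∞ :=
  ω (ball x ρ) / ENNReal.ofReal (ρ ^ σ)

variable {ω : Measure X} {σ ρ : ℝ}

theorem measurable_ballDensity [SecondCountableTopology X] [OpensMeasurableSpace X] [SFinite ω] :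
    Measurable (ballDensity ω σ ρ) :=
  (measurable_measure_ball ω ρ).div_const _

theorem measurable_ballDensity_radius (ω : Measure X) (σ : ℝ) (x : X) :
    Measurable fun ρ => ballDensity ω σ ρ x := by
  have hball : Monotone fun ρ => ω (ball x ρ) := fun ρ ρ' h => measure_mono (ball_subset_ball h)
  exact hball.measurable.div (measurable_id.pow_const σ).ennreal_ofReal

theorem measure_ball_rpow_eq_mul_ballDensity_rpow (hρ : 0 < ρ) {t : ℝ} (ht : 0 ≤ t) (x : X) :
    ω (ball x ρ) ^ t = ENNReal.ofReal (ρ ^ (σ * t)) * ballDensity ω σ ρ x ^ t := by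
  have hσ : 0 < ρ ^ σ := Real.rpow_pos_of_pos hρ σ
  rw [Real.rpow_mul hρ.le, ← ENNReal.ofReal_rpow_of_nonneg hσ.le ht,
    ← ENNReal.mul_rpow_of_nonneg _ _ ht, ballDensity,
    ENNReal.mul_div_cancel (ENNReal.ofReal_pos.2 hσ).ne' ENNReal.ofReal_ne_top]

theorem ballDensity_rpow (hρ : 0 < ρ) {t : ℝ} (ht : 0 ≤ t) (x : X) :
    ballDensity ω σ ρ x ^ t = ENNReal.ofReal (ρ ^ (-(σ * t))) * ω (ball x ρ) ^ t := by
  rw [measure_ball_rpow_eq_mul_ballDensity_rpow (σ := σ) hρ ht, ← mul_assoc,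
    ← ENNReal.ofReal_mul (by positivity), ← Real.rpow_add hρ, neg_add_cancel, Real.rpow_zero,
    ENNReal.ofReal_one, one_mul]

theorem ballDensity_rpow_eq_mul_ballDensity_rpow (hρ : 0 < ρ) {t : ℝ} (ht : 0 ≤ t) (σ' : ℝ)
    (x : X) :
    ballDensity ω σ ρ x ^ t =
      ENNReal.ofReal (ρ ^ ((σ' - σ) * t)) * ballDensity ω σ' ρ x ^ t := by
  rw [ballDensity_rpow hρ ht, measure_ball_rpow_eq_mul_ballDensity_rpow (σ := σ') hρ ht,
    ← mul_assoc, ← ENNReal.ofReal_mul (by positivity), ← Real.rpow_add hρ]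
  congr 4
  ring

theorem ballDensity_rpow_mul_ballDensity_rpow (hρ : 0 < ρ) {σ₁ σ₂ u v : ℝ} (hu : 0 ≤ u)
    (hv : 0 ≤ v) (hσ : σ * (u + v) = σ₁ * u + σ₂ * v) (x : X) :
    ballDensity ω σ₁ ρ x ^ u * ballDensity ω σ₂ ρ x ^ v = ballDensity ω σ ρ x ^ (u + v) := by
  rw [ballDensity_rpow hρ hu, ballDensity_rpow hρ hv, ballDensity_rpow hρ (add_nonneg hu hv), hσ,
    mul_mul_mul_comm, ← ENNReal.ofReal_mul (by positivity), ← Real.rpow_add hρ,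
    ← ENNReal.rpow_add_of_nonneg _ _ hu hv, neg_add]

theorem ballDensity_le_two_rpow_mul (hσ : 0 ≤ σ) (hρ : 0 < ρ) {r : ℝ} (hρr : ρ ≤ r)
    (hr : r ≤ 2 * ρ) (x : X) :
    ballDensity ω σ ρ x ≤ ENNReal.ofReal (2 ^ σ) * ballDensity ω σ r x := by
  have hr₀ : 0 < r := hρ.trans_le hρr
  have hpow : ρ ^ (-σ) ≤ 2 ^ σ * r ^ (-σ) := by
    rw [Real.rpow_neg hρ.le, Real.rpow_neg hr₀.le, ← div_eq_mul_inv, ← one_div,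
      div_le_div_iff₀ (by positivity) (by positivity), one_mul, ← Real.mul_rpow two_pos.le hρ.le]
    exact Real.rpow_le_rpow hr₀.le hr hσ
  have h := ballDensity_rpow (ω := ω) (σ := σ) hρ zero_le_one x
  have h' := ballDensity_rpow (ω := ω) (σ := σ) hr₀ zero_le_one x
  simp only [ENNReal.rpow_one, mul_one] at h h'
  rw [h, h', ← mul_assoc, ← ENNReal.ofReal_mul (by positivity)]
  gcongr

theorem ballDensity_rpow_mul_ballDensity_rpow_le {σ₁ σ₂ u v r : ℝ} (hρ : 0 < ρ) (hr : 0 < r)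
    (hu : 0 ≤ u) (hv : 0 ≤ v) (hσ : σ * (u + v) = σ₁ * u + σ₂ * v) (x : X) :
    ballDensity ω σ₁ ρ x ^ u * ballDensity ω σ₂ r x ^ v ≤
      ENNReal.ofReal ((ρ / r) ^ ((σ - σ₁) * u)) *
        (ballDensity ω σ ρ x ^ (u + v) + ballDensity ω σ r x ^ (u + v)) := by
  have hexp : (σ - σ₂) * v = -((σ - σ₁) * u) := by linarith
  rw [ballDensity_rpow_eq_mul_ballDensity_rpow hρ hu σ,
    ballDensity_rpow_eq_mul_ballDensity_rpow hr hv σ, hexp, mul_mul_mul_comm,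
    ← ENNReal.ofReal_mul (by positivity), Real.rpow_neg hr.le, ← div_eq_mul_inv,
    ← Real.div_rpow hρ.le hr.le]
  gcongr
  exact rpow_mul_rpow_le_rpow_add_add_rpow_add _ _ hu hv

end PseudoMetric

variable {E : Type*} [NormedAddCommGroup E] [NormedSpace ℝ E] [FiniteDimensional ℝ E]
  [MeasurableSpace E] [BorelSpace E] (μ : Measure E) [μ.IsAddHaarMeasure]

theorem lintegral_ballDensity_rpow_mul_ballDensity_rpow_le (ω : Measure E) [SFinite ω]
    {σ σ₁ σ₂ u v ρ r : ℝ} (hρ : 0 < ρ) (hρr : ρ ≤ r) (hu : 0 ≤ u) (hv : 0 ≤ v)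
    (hσ : σ * (u + v) = σ₁ * u + σ₂ * v) :
    ∫⁻ x, ballDensity ω σ₁ r x ^ u * ballDensity ω σ₂ ρ x ^ v ∂μ ≤
      ENNReal.ofReal (2 ^ (σ * (u + v))) *
        ENNReal.ofReal ((ρ / r) ^ (finrank ℝ E * min v 1 - σ₂ * v)) *
        ∫⁻ x, ballDensity ω σ (2 * r) x ^ (u + v) ∂μ := by
  have hr : 0 < r := hρ.trans_le hρr
  set c := r ^ (-(σ₁ * u)) * ρ ^ (-(σ₂ * v))
  have hc : 0 ≤ c := by positivity
  have hconst : c * (ρ / r) ^ (finrank ℝ E * min v 1) * (2 * r) ^ (σ * (u + v)) =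
      2 ^ (σ * (u + v)) * (ρ / r) ^ (finrank ℝ E * min v 1 - σ₂ * v) := by
    simp only [c, Real.rpow_sub (div_pos hρ hr), Real.mul_rpow two_pos.le hr.le, hσ,
      Real.rpow_add hr, Real.div_rpow hρ.le hr.le _, Real.rpow_neg hr.le, Real.rpow_neg hρ.le]
    field_simp
  calc ∫⁻ x, ballDensity ω σ₁ r x ^ u * ballDensity ω σ₂ ρ x ^ v ∂μ
      = ENNReal.ofReal c * ∫⁻ x, ω (ball x r) ^ u * ω (ball x ρ) ^ v ∂μ := by
        rw [← lintegral_const_mul' _ _ ENNReal.ofReal_ne_top]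
        refine lintegral_congr fun x => ?_
        rw [ballDensity_rpow hr hu, ballDensity_rpow hρ hv, mul_mul_mul_comm,
          ← ENNReal.ofReal_mul (by positivity)]
    _ ≤ ENNReal.ofReal c * (ENNReal.ofReal ((ρ / r) ^ (finrank ℝ E * min v 1)) *
          ∫⁻ x, ω (ball x (2 * r)) ^ (u + v) ∂μ) := by
        gcongr
        exact lintegral_measure_ball_rpow_mul_rpow_le μ ω hρ hρr hu hv
    _ = ENNReal.ofReal c * (ENNReal.ofReal ((ρ / r) ^ (finrank ℝ E * min v 1)) *
          (ENNReal.ofReal ((2 * r) ^ (σ * (u + v))) *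
            ∫⁻ x, ballDensity ω σ (2 * r) x ^ (u + v) ∂μ)) := by
        simp only [measure_ball_rpow_eq_mul_ballDensity_rpow (σ := σ) (mul_pos two_pos hr)
          (add_nonneg hu hv), lintegral_const_mul' _ _ ENNReal.ofReal_ne_top]
    _ = _ := by
        rw [← mul_assoc, ← mul_assoc, ← ENNReal.ofReal_mul hc,
          ← ENNReal.ofReal_mul (by positivity), hconst, ENNReal.ofReal_mul (by positivity)]

theorem exists_lintegral_ballDensity_mul_rpow_le {σ t c : ℝ} (ht : 1 ≤ t) (hc : 0 < c) :
    ∃ C : ℝ≥0∞, C ≠ ∞ ∧ ∀ (ω : Measure E) [SFinite ω] (ρ : ℝ), 0 < ρ →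
      ∫⁻ x, ballDensity ω σ (c * ρ) x ^ t ∂μ ≤ C * ∫⁻ x, ballDensity ω σ ρ x ^ t ∂μ := by
  obtain ⟨C, hC, h⟩ := exists_lintegral_measure_ball_mul_rpow_le μ ht c
  refine ⟨ENNReal.ofReal (c ^ (-(σ * t))) * C, by finiteness, fun ω _ ρ hρ => ?_⟩
  have ht₀ : 0 ≤ t := zero_le_one.trans ht
  simp only [ballDensity_rpow (mul_pos hc hρ) ht₀, ballDensity_rpow hρ ht₀,
    lintegral_const_mul' _ _ ENNReal.ofReal_ne_top, Real.mul_rpow hc.le hρ.le,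
    ENNReal.ofReal_mul (Real.rpow_nonneg hc.le _), mul_assoc]
  rw [mul_left_comm C]
  gcongr
  exact h ω ρ hρ

end BallDensity

section DyadicSums

theorem ofReal_dyadic_ratio_rpow {r : ℝ} (hr : 0 < r) (i n : ℕ) (κ : ℝ) :
    ENNReal.ofReal ((r / 2 ^ (i + n) / (r / 2 ^ i)) ^ κ) =
      ENNReal.ofReal ((2⁻¹ : ℝ) ^ κ) ^ n := by
  have hratio : r / 2 ^ (i + n) / (r / 2 ^ i) = (2⁻¹ : ℝ) ^ n := by
    rw [pow_add, inv_pow]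
    field_simp
  rw [hratio, ← ENNReal.ofReal_pow (by positivity), ← Real.rpow_natCast, ← Real.rpow_mul
    (by positivity), mul_comm, Real.rpow_mul (by positivity), Real.rpow_natCast]

theorem ofReal_inv_two_rpow_lt_one {κ : ℝ} (hκ : 0 < κ) : ENNReal.ofReal ((2⁻¹ : ℝ) ^ κ) < 1 :=
  ENNReal.ofReal_lt_one.2 (Real.rpow_lt_one (by norm_num) (by norm_num) hκ)

variable {E : Type*} [NormedAddCommGroup E] [NormedSpace ℝ E] [FiniteDimensional ℝ E]
  [MeasurableSpace E] [BorelSpace E] (μ : Measure E) [μ.IsAddHaarMeasure]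

theorem exists_tsum_lintegral_ballDensity_rpow_le {σ t : ℝ} (hσ : σ < finrank ℝ E) (ht : 1 ≤ t) :
    ∃ C : ℝ≥0∞, C ≠ ∞ ∧ ∀ (ω : Measure E) [SFinite ω] (r : ℝ), 0 < r →
      ∑' k : ℕ, ∫⁻ x, ballDensity ω σ (r / 2 ^ k) x ^ t ∂μ ≤
        C * ∫⁻ x, ⨆ k : ℕ, ballDensity ω σ (r / 2 ^ k) x ^ t ∂μ := by
  obtain ⟨C, hC, h⟩ := exists_tsum_lintegral_le_lintegral_iSup (μ := μ)
    (A := ENNReal.ofReal (2 ^ (σ * t))) ENNReal.ofReal_ne_top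
    (ofReal_inv_two_rpow_lt_one (sub_pos.2 hσ))
  refine ⟨C, hC, fun ω _ r hr => h _ (fun k => measurable_ballDensity.pow_const t) fun i m => ?_⟩
  have hri : 2 * (r / 2 ^ (i + 1)) = r / 2 ^ i := by rw [pow_succ]; field_simp
  have hmin (a b : ℝ≥0∞) : min (a ^ t) (b ^ t) ≤ a ^ (t - 1) * b ^ (1 : ℝ) := by
    have := min_rpow_add_le_rpow_mul_rpow a b (sub_nonneg.2 ht) zero_le_one
    rwa [sub_add_cancel] at this
  calc _ ≤ ∫⁻ x, ballDensity ω σ (r / 2 ^ (i + 1)) x ^ (t - 1) *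
        ballDensity ω σ (r / 2 ^ (i + 1 + m)) x ^ (1 : ℝ) ∂μ := lintegral_mono fun x => hmin _ _
    _ ≤ _ := lintegral_ballDensity_rpow_mul_ballDensity_rpow_le μ ω (σ := σ) (by positivity)
        (div_le_div_of_nonneg_left hr.le (by positivity)
          (pow_le_pow_right₀ one_le_two (Nat.le_add_right _ _)))
        (sub_nonneg.2 ht) zero_le_one (by ring)
    _ = _ := by
        rw [min_self, mul_one, mul_one, ofReal_dyadic_ratio_rpow hr, hri, sub_add_cancel]

theorem lintegral_ballDensity_rpow_mul_le_pow_dist (ω : Measure E) [SFinite ω]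
    {σ σ₁ σ₂ u v κ r : ℝ} (hu : 0 ≤ u) (hv : 0 ≤ v) (hσ : σ * (u + v) = σ₁ * u + σ₂ * v)
    (hκ₁ : κ ≤ (σ - σ₁) * u) (hκ₂ : κ ≤ finrank ℝ E * min v 1 - σ₂ * v) (hr : 0 < r) (i j : ℕ) :
    ∫⁻ x, ballDensity ω σ₁ (r / 2 ^ (i + 1)) x ^ u *
        ballDensity ω σ₂ (r / 2 ^ (j + 1)) x ^ v ∂μ ≤
      ENNReal.ofReal ((2⁻¹ : ℝ) ^ κ) ^ Nat.dist i j *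
        ((ENNReal.ofReal (2 ^ (σ * (u + v))) + 1) *
            (∫⁻ x, ballDensity ω σ (r / 2 ^ i) x ^ (u + v) ∂μ +
              ∫⁻ x, ballDensity ω σ (r / 2 ^ (i + 1)) x ^ (u + v) ∂μ) +
          (ENNReal.ofReal (2 ^ (σ * (u + v))) + 1) *
            (∫⁻ x, ballDensity ω σ (r / 2 ^ j) x ^ (u + v) ∂μ +
              ∫⁻ x, ballDensity ω σ (r / 2 ^ (j + 1)) x ^ (u + v) ∂μ)) := by
  set K := ENNReal.ofReal (2 ^ (σ * (u + v))) + 1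
  have hpow {δ : ℝ} (h : κ ≤ δ) :
      ENNReal.ofReal ((2⁻¹ : ℝ) ^ δ) ≤ ENNReal.ofReal ((2⁻¹ : ℝ) ^ κ) :=
    ENNReal.ofReal_le_ofReal
      (Real.rpow_le_rpow_of_exponent_ge (by norm_num) (by norm_num) h)
  rcases le_total i j with hij | hji
  · obtain ⟨n, rfl⟩ := Nat.exists_eq_add_of_le hij
    have hri : 2 * (r / 2 ^ (i + 1)) = r / 2 ^ i := by rw [pow_succ]; field_simp
    have hle := lintegral_ballDensity_rpow_mul_ballDensity_rpow_le μ ω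
      (div_pos hr (by positivity)) (div_le_div_of_nonneg_left hr.le (by positivity)
        (pow_le_pow_right₀ one_le_two (Nat.le_add_right (i + 1) n))) hu hv hσ
    rw [ofReal_dyadic_ratio_rpow hr, hri, Nat.add_right_comm] at hle
    refine hle.trans ?_
    rw [Nat.dist_eq_sub_of_le hij, Nat.add_sub_cancel_left, mul_right_comm, mul_comm]
    exact mul_le_mul' (pow_le_pow_left' (hpow hκ₂) n)
      (le_add_right (mul_le_mul' le_self_add le_self_add))
  · obtain ⟨n, rfl⟩ := Nat.exists_eq_add_of_le hji
    calc _ ≤ ∫⁻ x, ENNReal.ofReal ((2⁻¹ : ℝ) ^ ((σ - σ₁) * u)) ^ n *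
          (ballDensity ω σ (r / 2 ^ (j + n + 1)) x ^ (u + v) +
            ballDensity ω σ (r / 2 ^ (j + 1)) x ^ (u + v)) ∂μ := by
          refine lintegral_mono fun x => ?_
          rw [← ofReal_dyadic_ratio_rpow hr (j + 1), Nat.add_right_comm j 1 n]
          exact ballDensity_rpow_mul_ballDensity_rpow_le (by positivity) (by positivity) hu hv hσ x
      _ ≤ _ := by
          rw [lintegral_const_mul' _ _ (by finiteness),
            lintegral_add_left (measurable_ballDensity.pow_const _),
            Nat.dist_eq_sub_of_le_right hji, Nat.add_sub_cancel_left]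
          exact mul_le_mul' (pow_le_pow_left' (hpow hκ₁) n) (add_le_add
            (le_add_self.trans (le_mul_of_one_le_left' le_add_self))
            (le_add_self.trans (le_mul_of_one_le_left' le_add_self)))

theorem exists_lintegral_tsum_ballDensity_rpow_mul_le {σ σ₁ σ₂ s q₁ q₂ : ℝ} (hs : 0 < s)
    (hq₁ : 0 < q₁) (hq₂ : 0 < q₂) (hσ : σ * (s * q₁ + s * q₂) = σ₁ * (s * q₁) + σ₂ * (s * q₂))
    (hσ₁ : σ₁ < σ) (hσ₂ : σ₂ * (s * q₂) < finrank ℝ E * min (s * q₂) 1) :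
    ∃ C : ℝ≥0∞, C ≠ ∞ ∧ ∀ (ω : Measure E) [SFinite ω] (r : ℝ), 0 < r →
      ∫⁻ x, (∑' k : ℕ, ballDensity ω σ₁ (r / 2 ^ (k + 1)) x ^ s) ^ q₁ *
          (∑' k : ℕ, ballDensity ω σ₂ (r / 2 ^ (k + 1)) x ^ s) ^ q₂ ∂μ ≤
        C * ∑' k : ℕ, ∫⁻ x, ballDensity ω σ (r / 2 ^ k) x ^ (s * q₁ + s * q₂) ∂μ := by
  have hu : 0 < s * q₁ := by positivity
  have hv : 0 < s * q₂ := by positivity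
  set κ := min ((σ - σ₁) * (s * q₁)) (finrank ℝ E * min (s * q₂) 1 - σ₂ * (s * q₂))
  have hκ : 0 < κ := lt_min (mul_pos (sub_pos.2 hσ₁) hu) (sub_pos.2 hσ₂)
  set ν := ENNReal.ofReal ((2⁻¹ : ℝ) ^ (κ / 2))
  have hν₀ : ν ≠ 0 := (ENNReal.ofReal_pos.2 (by positivity)).ne'
  have hν : ν ^ 2 = ENNReal.ofReal ((2⁻¹ : ℝ) ^ κ) := by
    rw [← ENNReal.ofReal_pow (by positivity), ← Real.rpow_natCast, ← Real.rpow_mul (by norm_num),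
      Nat.cast_ofNat, div_mul_cancel₀ κ two_ne_zero]
  obtain ⟨C, hC, h⟩ := exists_lintegral_tsum_rpow_mul_tsum_rpow_le (μ := μ) hq₁ hq₂ hν₀
    (ofReal_inv_two_rpow_lt_one (half_pos hκ))
  set K := ENNReal.ofReal (2 ^ (σ * (s * q₁ + s * q₂))) + 1
  refine ⟨C * (K * 2), by finiteness, fun ω _ r hr => ?_⟩
  set e : ℕ → ℝ≥0∞ := fun k => ∫⁻ x, ballDensity ω σ (r / 2 ^ k) x ^ (s * q₁ + s * q₂) ∂μ
  have hshift : ∑' k, e (k + 1) ≤ ∑' k, e k :=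
    ENNReal.tsum_comp_le_tsum_of_injective (add_left_injective 1) e
  calc _ ≤ C * ∑' k, K * (e k + e (k + 1)) :=
        h _ _ _ (fun i => measurable_ballDensity.pow_const s)
          (fun j => measurable_ballDensity.pow_const s) fun i j => by
            simp only [← ENNReal.rpow_mul]
            rw [hν]
            exact lintegral_ballDensity_rpow_mul_le_pow_dist μ ω hu.le hv.le hσ (min_le_left _ _)
              (min_le_right _ _) hr i j
    _ ≤ C * (K * (∑' k, e k + ∑' k, e k)) := by
        rw [ENNReal.tsum_mul_left, ENNReal.tsum_add]
        gcongr
    _ = C * (K * 2) * ∑' k, e k := by ring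

end DyadicSums

section DyadicIntervals

theorem Ioo_zero_subset_iUnion_Icc_div_two_pow {T : ℝ} :
    Ioo 0 T ⊆ ⋃ k : ℕ, Icc (T / 2 ^ (k + 1)) (T / 2 ^ k) := by
  rintro ρ ⟨hρ, hρT⟩
  obtain ⟨n, hn, hn'⟩ := exists_nat_pow_near ((one_le_div hρ).2 hρT.le) one_lt_two
  refine mem_iUnion.2 ⟨n, ?_, ?_⟩
  · exact div_le_of_le_mul₀ (by positivity) hρ.le ((div_le_iff₀' hρ).1 hn'.le)
  · exact (le_div_iff₀' (by positivity)).2 ((le_div_iff₀ hρ).1 hn)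

theorem setLIntegral_Icc_div_ofReal_le {f : ℝ → ℝ≥0∞} {c : ℝ≥0∞} {r : ℝ} (hr : 0 < r)
    (h : ∀ ρ ∈ Icc r (2 * r), f ρ ≤ c) :
    ∫⁻ ρ in Icc r (2 * r), f ρ / ENNReal.ofReal ρ ≤ c := by
  calc ∫⁻ ρ in Icc r (2 * r), f ρ / ENNReal.ofReal ρ
      ≤ ∫⁻ _ in Icc r (2 * r), c / ENNReal.ofReal r :=
        setLIntegral_mono' measurableSet_Icc fun ρ hρ =>
          ENNReal.div_le_div (h ρ hρ) (ENNReal.ofReal_le_ofReal hρ.1)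
    _ = c := by
        rw [setLIntegral_const, Real.volume_Icc, two_mul, add_sub_cancel_right,
          ENNReal.div_mul_cancel (ENNReal.ofReal_pos.2 hr).ne' ENNReal.ofReal_ne_top]

theorem le_two_mul_setLIntegral_Ioo_div_ofReal {f : ℝ → ℝ≥0∞} {c : ℝ≥0∞} {r : ℝ} (hr : 0 < r)
    (h : ∀ ρ ∈ Ioo r (2 * r), c ≤ f ρ) :
    c ≤ 2 * ∫⁻ ρ in Ioo r (2 * r), f ρ / ENNReal.ofReal ρ := by
  calc c = 2 * ∫⁻ _ in Ioo r (2 * r), c / ENNReal.ofReal (2 * r) := by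
        rw [setLIntegral_const, Real.volume_Ioo, two_mul r, add_sub_cancel_right, mul_left_comm,
          ← ENNReal.ofReal_ofNat 2, ← ENNReal.ofReal_mul two_pos.le, two_mul,
          ENNReal.div_mul_cancel (ENNReal.ofReal_pos.2 (add_pos hr hr)).ne' ENNReal.ofReal_ne_top]
    _ ≤ 2 * ∫⁻ ρ in Ioo r (2 * r), f ρ / ENNReal.ofReal ρ := by
        gcongr 2 * ?_
        exact setLIntegral_mono' measurableSet_Ioo fun ρ hρ =>
          ENNReal.div_le_div (h ρ hρ) (ENNReal.ofReal_le_ofReal hρ.2.le)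

end DyadicIntervals

section Potentials

variable {N : ℕ} {ω : Measure (Euc N)}

theorem wolff_ofReal (a p T : ℝ) (x : Euc N) :
    wolff a p (ENNReal.ofReal T) ω x = ∫⁻ ρ in Ioo 0 T,
      ballDensity ω (N - a * p) ρ x ^ (1 / (p - 1)) / ENNReal.ofReal ρ := by
  have hset : {ρ : ℝ | 0 < ρ ∧ ENNReal.ofReal ρ < ENNReal.ofReal T} = Ioo 0 T := by
    ext ρ
    exact and_congr_right fun hρ => ENNReal.ofReal_lt_ofReal_iff_of_nonneg hρ.le
  rw [wolff, hset]
  rfl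

theorem ballDensity_le_fracMax {γ T τ : ℝ} (hτ : 0 < τ) (hτT : τ < T) (x : Euc N) :
    ballDensity ω (N - γ) τ x ≤ fracMax γ (ENNReal.ofReal T) ω x :=
  le_iSup₂_of_le τ hτ (le_iSup_of_le ((ENNReal.ofReal_lt_ofReal_iff_of_nonneg hτ.le).2 hτT) le_rfl)

theorem fracMax_ofReal_le {γ T : ℝ} {x : Euc N} {c : ℝ≥0∞}
    (h : ∀ τ ∈ Ioo 0 T, ballDensity ω (N - γ) τ x ≤ c) : fracMax γ (ENNReal.ofReal T) ω x ≤ c :=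
  iSup₂_le fun τ hτ => iSup_le fun hτT =>
    h τ ⟨hτ, (ENNReal.ofReal_lt_ofReal_iff_of_nonneg hτ.le).1 hτT⟩

theorem wolff_le_tsum_ballDensity_rpow {a p T : ℝ} (hp : 1 < p) (ha : a * p ≤ N) (hT : 0 < T)
    (x : Euc N) :
    wolff a p (ENNReal.ofReal T) ω x ≤ ENNReal.ofReal (2 ^ (N - a * p)) ^ (1 / (p - 1)) *
      ∑' k : ℕ, ballDensity ω (N - a * p) (T / 2 ^ k) x ^ (1 / (p - 1)) := by
  have hs : 0 ≤ 1 / (p - 1) := one_div_nonneg.2 (sub_nonneg.2 hp.le)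
  rw [wolff_ofReal, ← ENNReal.tsum_mul_left]
  refine (lintegral_mono_set Ioo_zero_subset_iUnion_Icc_div_two_pow).trans
    ((lintegral_iUnion_le _ _).trans (ENNReal.tsum_le_tsum fun k => ?_))
  have hk : T / 2 ^ k = 2 * (T / 2 ^ (k + 1)) := by rw [pow_succ]; field_simp
  have hr : 0 < T / 2 ^ (k + 1) := by positivity
  rw [hk, ← ENNReal.mul_rpow_of_nonneg _ _ hs]
  refine setLIntegral_Icc_div_ofReal_le hr fun ρ hρ => ENNReal.rpow_le_rpow ?_ hs
  exact ballDensity_le_two_rpow_mul (sub_nonneg.2 ha) (hr.trans_le hρ.1) hρ.2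
    (mul_le_mul_of_nonneg_left hρ.1 two_pos.le) x

theorem wolff_rpow_le_tsum_ballDensity_rpow {a p q T : ℝ} (hp : 1 < p) (ha : a * p ≤ N)
    (hq : 0 ≤ q) (hT : 0 < T) (x : Euc N) :
    wolff a p (ENNReal.ofReal T) ω x ^ q ≤
      (ENNReal.ofReal (2 ^ (N - a * p)) ^ (1 / (p - 1))) ^ q *
        (∑' k : ℕ, ballDensity ω (N - a * p) (T / 2 ^ k) x ^ (1 / (p - 1))) ^ q := by
  rw [← ENNReal.mul_rpow_of_nonneg _ _ hq]
  exact ENNReal.rpow_le_rpow (wolff_le_tsum_ballDensity_rpow hp ha hT x) hq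

theorem ballDensity_rpow_le_mul_wolff {a p T τ : ℝ} (hp : 1 < p) (ha : a * p ≤ N) (hτ : 0 < τ)
    (hT : 2 * τ ≤ T) (x : Euc N) :
    ballDensity ω (N - a * p) τ x ^ (1 / (p - 1)) ≤
      2 * ENNReal.ofReal (2 ^ (N - a * p)) ^ (1 / (p - 1)) * wolff a p (ENNReal.ofReal T) ω x := by
  have hs : 0 ≤ 1 / (p - 1) := one_div_nonneg.2 (sub_nonneg.2 hp.le)
  have hA : ENNReal.ofReal (2 ^ (N - a * p)) ^ (1 / (p - 1)) ≠ ∞ := by finiteness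
  rw [wolff_ofReal, mul_assoc, ← lintegral_const_mul' _ _ hA]
  calc _ ≤ 2 * ∫⁻ ρ in Ioo τ (2 * τ), ENNReal.ofReal (2 ^ (N - a * p)) ^ (1 / (p - 1)) *
        ballDensity ω (N - a * p) ρ x ^ (1 / (p - 1)) / ENNReal.ofReal ρ :=
        le_two_mul_setLIntegral_Ioo_div_ofReal hτ fun ρ hρ => by
          rw [← ENNReal.mul_rpow_of_nonneg _ _ hs]
          exact ENNReal.rpow_le_rpow
            (ballDensity_le_two_rpow_mul (sub_nonneg.2 ha) hτ hρ.1.le hρ.2.le x) hs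
    _ ≤ _ := by
        simp only [mul_div_assoc]
        gcongr

theorem wolff_le_rpow_mul_rpow {a₁ a₂ p T θ₁ θ₂ : ℝ} (hp : 1 < p) (hθ₁ : 0 ≤ θ₁) (hθ₂ : 0 ≤ θ₂)
    (hθ : θ₁ + θ₂ = 1) (x : Euc N) :
    wolff (a₁ * θ₁ + a₂ * θ₂) p (ENNReal.ofReal T) ω x ≤
      wolff a₁ p (ENNReal.ofReal T) ω x ^ θ₁ * wolff a₂ p (ENNReal.ofReal T) ω x ^ θ₂ := by
  have hs : 0 ≤ 1 / (p - 1) := one_div_nonneg.2 (sub_nonneg.2 hp.le)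
  simp only [wolff_ofReal]
  set s := 1 / (p - 1)
  have hmeas (a : ℝ) : AEMeasurable (fun ρ => ballDensity ω (N - a * p) ρ x ^ s /
      ENNReal.ofReal ρ) (volume.restrict (Ioo 0 T)) :=
    (((measurable_ballDensity_radius ω _ x).pow_const s).div
      ENNReal.measurable_ofReal).aemeasurable
  refine le_trans (setLIntegral_mono' measurableSet_Ioo fun ρ hρ => le_of_eq ?_)
    (ENNReal.lintegral_mul_norm_pow_le (hmeas a₁) (hmeas a₂) hθ₁ hθ₂ hθ)
  have hexp : s * θ₁ + s * θ₂ = s := by rw [← mul_add, hθ, mul_one]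
  have hσ : (N - (a₁ * θ₁ + a₂ * θ₂) * p) * (s * θ₁ + s * θ₂) =
      (N - a₁ * p) * (s * θ₁) + (N - a₂ * p) * (s * θ₂) := by
    linear_combination s * (a₁ * θ₁ + a₂ * θ₂) * p * -hθ
  rw [ENNReal.div_rpow_of_nonneg _ _ hθ₁, ENNReal.div_rpow_of_nonneg _ _ hθ₂, ← ENNReal.rpow_mul,
    ← ENNReal.rpow_mul, div_eq_mul_inv, div_eq_mul_inv, div_eq_mul_inv, mul_mul_mul_comm,
    ballDensity_rpow_mul_ballDensity_rpow hρ.1 (by positivity) (by positivity) hσ, hexp,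
    ← ENNReal.inv_rpow, ← ENNReal.inv_rpow, ← ENNReal.rpow_add_of_nonneg _ _ hθ₁ hθ₂, hθ,
    ENNReal.rpow_one]

theorem wolff_rpow_add_le {a₁ a₂ p T q₁ q₂ : ℝ} (hp : 1 < p) (hq₁ : 0 < q₁) (hq₂ : 0 < q₂)
    (x : Euc N) :
    wolff ((a₁ * q₁ + a₂ * q₂) / (q₁ + q₂)) p (ENNReal.ofReal T) ω x ^ (q₁ + q₂) ≤
      wolff a₁ p (ENNReal.ofReal T) ω x ^ q₁ * wolff a₂ p (ENNReal.ofReal T) ω x ^ q₂ := by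
  have hq : 0 < q₁ + q₂ := add_pos hq₁ hq₂
  have hHolder := wolff_le_rpow_mul_rpow (ω := ω) (a₁ := a₁) (a₂ := a₂) (T := T) hp
    (div_pos hq₁ hq).le (div_pos hq₂ hq).le (by rw [← add_div, div_self hq.ne']) x
  rw [← mul_div_assoc, ← mul_div_assoc, ← add_div] at hHolder
  refine (ENNReal.rpow_le_rpow hHolder hq.le).trans_eq ?_
  rw [ENNReal.mul_rpow_of_nonneg _ _ hq.le, ← ENNReal.rpow_mul, ← ENNReal.rpow_mul,
    div_mul_cancel₀ _ hq.ne', div_mul_cancel₀ _ hq.ne']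

theorem ballDensity_rpow_le_mul_wolff_rpow {a p q T τ : ℝ} (hp : 1 < p) (ha : a * p ≤ N)
    (hq : 0 ≤ q) (hτ : 0 < τ) (hT : 2 * τ ≤ T) (x : Euc N) :
    ballDensity ω (N - a * p) τ x ^ (q / (p - 1)) ≤
      (2 * ENNReal.ofReal (2 ^ (N - a * p)) ^ (1 / (p - 1))) ^ q *
        wolff a p (ENNReal.ofReal T) ω x ^ q := by
  rw [← one_div_mul_eq_div, ENNReal.rpow_mul, ← ENNReal.mul_rpow_of_nonneg _ _ hq]
  exact ENNReal.rpow_le_rpow (ballDensity_rpow_le_mul_wolff hp ha hτ hT x) hq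

theorem fracMax_rpow_le_add {a p q T : ℝ} (hp : 1 < p) (ha : a * p ≤ N) (hq : 0 < q) (x : Euc N) :
    fracMax (a * p) (ENNReal.ofReal T) ω x ^ (q / (p - 1)) ≤
      (2 * ENNReal.ofReal (2 ^ (N - a * p)) ^ (1 / (p - 1))) ^ q *
          wolff a p (ENNReal.ofReal T) ω x ^ q +
        ENNReal.ofReal (2 ^ (N - a * p)) ^ (q / (p - 1)) *
          ballDensity ω (N - a * p) T x ^ (q / (p - 1)) := by
  have ht : 0 < q / (p - 1) := div_pos hq (sub_pos.2 hp)
  refine (ENNReal.le_rpow_inv_iff ht).1 (fracMax_ofReal_le fun τ hτ => ?_)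
  refine (ENNReal.le_rpow_inv_iff ht).2 ?_
  rcases le_total (2 * τ) T with h | h
  · exact le_add_right (ballDensity_rpow_le_mul_wolff_rpow hp ha hq.le hτ.1 h x)
  · rw [← ENNReal.mul_rpow_of_nonneg _ _ ht.le]
    exact le_add_left (ENNReal.rpow_le_rpow
      (ballDensity_le_two_rpow_mul (sub_nonneg.2 ha) hτ.1 hτ.2.le h x) ht.le)

theorem exists_lintegral_fracMax_rpow_le {a p q : ℝ} (hp : 1 < p) (ha : a * p ≤ N)
    (hq : p - 1 ≤ q) :
    ∃ C : ℝ≥0∞, C ≠ ∞ ∧ ∀ (ω : Measure (Euc N)) [SFinite ω] (T : ℝ), 0 < T →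
      ∫⁻ x, fracMax (a * p) (ENNReal.ofReal T) ω x ^ (q / (p - 1)) ≤
        C * ∫⁻ x, wolff a p (ENNReal.ofReal T) ω x ^ q := by
  have hp₀ : 0 < p - 1 := sub_pos.2 hp
  have hq₀ : 0 < q := hp₀.trans_le hq
  obtain ⟨C, hC, hdoubling⟩ := exists_lintegral_ballDensity_mul_rpow_le
    (volume : Measure (Euc N)) (σ := N - a * p) ((one_le_div hp₀).2 hq) two_pos
  set A := (2 * ENNReal.ofReal (2 ^ (N - a * p)) ^ (1 / (p - 1))) ^ q
  set B := ENNReal.ofReal (2 ^ (N - a * p)) ^ (q / (p - 1))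
  have hA : A ≠ ∞ := by finiteness
  have hB : B ≠ ∞ := by finiteness
  refine ⟨A + B * (C * A), by finiteness, fun ω _ T hT => ?_⟩
  set W := fun x => wolff a p (ENNReal.ofReal T) ω x
  set D := fun x => ballDensity ω (N - a * p) T x ^ (q / (p - 1))
  have hD : ∫⁻ x, D x ≤ C * (A * ∫⁻ x, W x ^ q) := by
    have h := hdoubling ω (T / 2) (half_pos hT)
    rw [mul_div_cancel₀ T two_ne_zero] at h
    rw [← lintegral_const_mul' _ _ hA]
    exact h.trans (mul_le_mul_right (lintegral_mono fun x =>
      ballDensity_rpow_le_mul_wolff_rpow hp ha hq₀.le (half_pos hT) (by linarith) x) C)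
  calc _ ≤ A * (∫⁻ x, W x ^ q) + B * ∫⁻ x, D x := by
        refine (lintegral_mono fun x => fracMax_rpow_le_add hp ha hq₀ x).trans_eq ?_
        rw [lintegral_add_right _ ((measurable_ballDensity.pow_const _).const_mul B),
          lintegral_const_mul' _ _ hA, lintegral_const_mul' _ _ hB]
    _ ≤ A * (∫⁻ x, W x ^ q) + B * (C * (A * ∫⁻ x, W x ^ q)) := by gcongr
    _ = (A + B * (C * A)) * ∫⁻ x, W x ^ q := by ring

theorem exists_lintegral_iSup_ballDensity_rpow_le (γ : ℝ) {t : ℝ} (ht : 1 ≤ t) :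
    ∃ C : ℝ≥0∞, C ≠ ∞ ∧ ∀ (ω : Measure (Euc N)) [SFinite ω] (T : ℝ), 0 < T →
      ∫⁻ x, ⨆ k : ℕ, ballDensity ω (N - γ) (2 * T / 2 ^ k) x ^ t ≤
        C * ∫⁻ x, fracMax γ (ENNReal.ofReal T) ω x ^ t := by
  obtain ⟨C₁, hC₁, h₁⟩ := exists_lintegral_ballDensity_mul_rpow_le
    (volume : Measure (Euc N)) (σ := N - γ) ht two_pos
  obtain ⟨C₂, hC₂, h₂⟩ := exists_lintegral_ballDensity_mul_rpow_le
    (volume : Measure (Euc N)) (σ := N - γ) ht four_pos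
  refine ⟨C₂ + C₁ + 1, by finiteness, fun ω _ T hT => ?_⟩
  have hM {τ : ℝ} (hτ : 0 < τ) (hτT : τ < T) (x : Euc N) :
      ballDensity ω (N - γ) τ x ^ t ≤ fracMax γ (ENNReal.ofReal T) ω x ^ t :=
    ENNReal.rpow_le_rpow (ballDensity_le_fracMax hτ hτT x) (zero_le_one.trans ht)
  set D := fun c x => ballDensity ω (N - γ) (c * (T / 2)) x ^ t
  have hD (c : ℝ) : Measurable (D c) := measurable_ballDensity.pow_const t
  have hhalf : ∫⁻ x, ballDensity ω (N - γ) (T / 2) x ^ t ≤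
      ∫⁻ x, fracMax γ (ENNReal.ofReal T) ω x ^ t :=
    lintegral_mono (hM (half_pos hT) (half_lt_self hT))
  calc _ ≤ ∫⁻ x, D 4 x + (D 2 x + fracMax γ (ENNReal.ofReal T) ω x ^ t) := by
        refine lintegral_mono fun x => iSup_le fun k => ?_
        match k with
        | 0 => exact le_add_right (le_of_eq (by congr 2; ring))
        | 1 => exact le_add_left (le_add_right (le_of_eq (by congr 2; ring)))
        | k + 2 =>
          refine le_add_left (le_add_left (hM (by positivity) ?_ x))
          have : (1 : ℝ) ≤ 2 ^ k := one_le_pow₀ one_le_two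
          rw [div_lt_iff₀ (by positivity), pow_add]
          nlinarith
    _ = (∫⁻ x, D 4 x) + ((∫⁻ x, D 2 x) + ∫⁻ x, fracMax γ (ENNReal.ofReal T) ω x ^ t) := by
        rw [lintegral_add_left (hD 4), lintegral_add_left (hD 2)]
    _ ≤ _ := by
        rw [add_mul, add_mul, one_mul, add_assoc]
        exact add_le_add ((h₂ ω _ (half_pos hT)).trans (mul_le_mul_right hhalf C₂))
          (add_le_add_left ((h₁ ω _ (half_pos hT)).trans (mul_le_mul_right hhalf C₁)) _)

end Potentials

section Comparison

theorem sub_mul_lt_mul_min_one {n b v : ℝ} (hb : 0 < b) (hbn : b < n) (hv : 0 < v)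
    (hvn : v < n / (n - b)) : (n - b) * v < n * min v 1 := by
  rcases min_choice v 1 with h | h <;> rw [h]
  · exact mul_lt_mul_of_pos_right (sub_lt_self n hb) hv
  · rwa [mul_one, mul_comm, ← lt_div_iff₀ (sub_pos.2 hbn)]

theorem exists_lintegral_tsum_ballDensity_rpow_mul_le_fracMax {N : ℕ} {γ a b s q₁ q₂ : ℝ}
    (hs : 0 < s) (hq₁ : 0 < q₁) (hq₂ : 0 < q₂) (hq : 1 ≤ s * q₁ + s * q₂) (hγ : 0 < γ)
    (hγa : γ < a) (hγab : γ * (s * q₁ + s * q₂) = a * (s * q₁) + b * (s * q₂))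
    (hb : (N - b) * (s * q₂) < N * min (s * q₂) 1) :
    ∃ C : ℝ≥0∞, C ≠ ∞ ∧ ∀ (ω : Measure (Euc N)) [SFinite ω] (T : ℝ), 0 < T →
      ∫⁻ x, (∑' k : ℕ, ballDensity ω (N - a) (T / 2 ^ k) x ^ s) ^ q₁ *
          (∑' k : ℕ, ballDensity ω (N - b) (T / 2 ^ k) x ^ s) ^ q₂ ≤
        C * ∫⁻ x, fracMax γ (ENNReal.ofReal T) ω x ^ (s * q₁ + s * q₂) := by
  obtain ⟨C₁, hC₁, h₁⟩ := exists_lintegral_tsum_ballDensity_rpow_mul_le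
    (volume : Measure (Euc N)) (σ := N - γ) (σ₁ := N - a) (σ₂ := N - b) hs hq₁ hq₂
    (by linear_combination -hγab) (by linarith) (by rwa [finrank_euclideanSpace_fin])
  obtain ⟨C₂, hC₂, h₂⟩ := exists_tsum_lintegral_ballDensity_rpow_le
    (volume : Measure (Euc N)) (σ := N - γ) (by rw [finrank_euclideanSpace_fin]; linarith) hq
  obtain ⟨C₃, hC₃, h₃⟩ := exists_lintegral_iSup_ballDensity_rpow_le (N := N) γ hq
  refine ⟨C₁ * (C₂ * C₃), by finiteness, fun ω _ T hT => ?_⟩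
  have h := h₁ ω (2 * T) (by positivity)
  simp only [pow_succ', mul_div_mul_left _ _ (two_ne_zero' ℝ)] at h
  rw [mul_assoc, mul_assoc]
  exact h.trans (mul_le_mul_right ((h₂ ω (2 * T) (by positivity)).trans
    (mul_le_mul_right (h₃ ω T hT) C₂)) C₁)

theorem exists_lintegral_wolff_rpow_mul_wolff_rpow_le {N : ℕ} {α β p q₁ q₂ : ℝ} (hβ : 0 < β)
    (hq₁ : 0 < q₁) (hq₂ : 0 < q₂) (hαβ : β < α) (hp : 1 < p) (hαN : α * p < N)
    (hq : p - 1 ≤ q₁ + q₂) (hq₂' : q₂ < N * (p - 1) / (N - β * p)) :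
    ∃ C : ℝ≥0∞, C ≠ ∞ ∧ ∀ (ω : Measure (Euc N)) [SFinite ω] (T : ℝ), 0 < T →
      ∫⁻ x, wolff α p (ENNReal.ofReal T) ω x ^ q₁ * wolff β p (ENNReal.ofReal T) ω x ^ q₂ ≤
        C * ∫⁻ x, fracMax ((α * p * q₁ + β * p * q₂) / (q₁ + q₂)) (ENNReal.ofReal T) ω x ^
          ((q₁ + q₂) / (p - 1)) := by
  have hp₀ : 0 < p - 1 := sub_pos.2 hp
  have hq₀ : 0 < q₁ + q₂ := add_pos hq₁ hq₂
  have hαβp : β * p < α * p := mul_lt_mul_of_pos_right hαβ (one_pos.trans hp)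
  have hβN : β * p < N := hαβp.trans hαN
  set s := 1 / (p - 1) with hs_def
  set γ := (α * p * q₁ + β * p * q₂) / (q₁ + q₂) with hγ_def
  have hs : 0 < s := one_div_pos.2 hp₀
  have hγ₀ : 0 < γ := by have := hβ.trans hαβ; positivity
  have hγα : γ < α * p := by rw [hγ_def, div_lt_iff₀ hq₀]; nlinarith
  have hexp : (q₁ + q₂) / (p - 1) = s * q₁ + s * q₂ := by rw [hs_def]; ring
  have hγαβ : γ * (s * q₁ + s * q₂) = α * p * (s * q₁) + β * p * (s * q₂) := by
    rw [hγ_def]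
    field_simp
  have hβ_range : (N - β * p) * (s * q₂) < N * min (s * q₂) 1 := by
    refine sub_mul_lt_mul_min_one (by positivity) hβN (by positivity) ?_
    rw [hs_def, one_div_mul_eq_div, div_lt_iff₀ hp₀, div_mul_eq_mul_div]
    exact hq₂'
  obtain ⟨C, hC, h⟩ := exists_lintegral_tsum_ballDensity_rpow_mul_le_fracMax hs hq₁ hq₂
    (hexp ▸ (one_le_div hp₀).2 hq) hγ₀ hγα hγαβ hβ_range
  set A := (ENNReal.ofReal (2 ^ (N - α * p)) ^ s) ^ q₁
  set B := (ENNReal.ofReal (2 ^ (N - β * p)) ^ s) ^ q₂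
  refine ⟨A * B * C, by finiteness, fun ω _ T hT => ?_⟩
  rw [hexp, mul_assoc _ C]
  refine le_trans ?_ (mul_le_mul_right (h ω T hT) (A * B))
  rw [← lintegral_const_mul' _ _ (by finiteness)]
  refine lintegral_mono fun x => ?_
  rw [mul_mul_mul_comm]
  exact mul_le_mul' (wolff_rpow_le_tsum_ballDensity_rpow hp hαN.le hq₁.le hT x)
    (wolff_rpow_le_tsum_ballDensity_rpow hp hβN.le hq₂.le hT x)

theorem exists_pairwise_le_of_cyclic_le {C : ℝ≥0∞} (hC : C ≠ ∞) :
    ∃ K > 0, ∀ {a b c : ℝ≥0∞}, a ≤ C * b → b ≤ c → c ≤ C * a →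
      a ≤ ENNReal.ofReal K * b ∧ b ≤ ENNReal.ofReal K * a ∧ b ≤ ENNReal.ofReal K * c ∧
        c ≤ ENNReal.ofReal K * b ∧ a ≤ ENNReal.ofReal K * c ∧ c ≤ ENNReal.ofReal K * a := by
  have hK : (C + 1) ^ 2 ≠ ∞ := by finiteness
  have hone : 1 ≤ (C + 1) ^ 2 := one_le_pow₀ le_add_self
  have hCK : C ≤ (C + 1) ^ 2 := le_self_add.trans (le_self_pow₀ le_add_self two_ne_zero)
  have hCC : C * C ≤ (C + 1) ^ 2 := by
    rw [sq]
    exact mul_le_mul' le_self_add le_self_add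
  refine ⟨((C + 1) ^ 2).toReal, ENNReal.toReal_pos (one_pos.trans_le hone).ne' hK,
    fun {a b c} hab hbc hca => ?_⟩
  rw [ENNReal.ofReal_toReal hK]
  have hcb : c ≤ C * C * b := by
    rw [mul_assoc]
    exact hca.trans (mul_le_mul_right hab C)
  exact ⟨hab.trans (mul_le_mul_left hCK b), (hbc.trans hca).trans (mul_le_mul_left hCK a),
    hbc.trans (le_mul_of_one_le_left' hone), hcb.trans (mul_le_mul_left hCC b),
    (hab.trans (mul_le_mul_right hbc C)).trans (mul_le_mul_left hCK c),
    hca.trans (mul_le_mul_left hCK a)⟩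

theorem stmt10_general (N : ℕ) (α β p q1 q2 : ℝ) (hβ : 0 < β) (hq1 : 0 < q1) (hq2 : 0 < q2)
    (hαβ : β < α) (hp : 1 < p) (hpN : p < (N : ℝ) / α) (hq : p - 1 ≤ q1 + q2)
    (hq2' : q2 < (N : ℝ) * (p - 1) / ((N : ℝ) - β * p)) :
    ∃ C > 0, ∀ T : ℝ, 0 < T → ∀ (ω : Measure (Euc N)) [SFinite ω],
      ((∫⁻ x, (fracMax ((α * p * q1 + β * p * q2) / (q1 + q2)) (ENNReal.ofReal T) ω x) ^
            ((q1 + q2) / (p - 1))) ≤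
          ENNReal.ofReal C *
            ∫⁻ x, (wolff ((α * q1 + β * q2) / (q1 + q2)) p (ENNReal.ofReal T) ω x) ^
              (q1 + q2)) ∧
      ((∫⁻ x, (wolff ((α * q1 + β * q2) / (q1 + q2)) p (ENNReal.ofReal T) ω x) ^
            (q1 + q2)) ≤
          ENNReal.ofReal C *
            ∫⁻ x, (fracMax ((α * p * q1 + β * p * q2) / (q1 + q2)) (ENNReal.ofReal T) ω x) ^
              ((q1 + q2) / (p - 1))) ∧
      ((∫⁻ x, (wolff ((α * q1 + β * q2) / (q1 + q2)) p (ENNReal.ofReal T) ω x) ^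
            (q1 + q2)) ≤
          ENNReal.ofReal C *
            ∫⁻ x, (wolff α p (ENNReal.ofReal T) ω x) ^ q1 *
              (wolff β p (ENNReal.ofReal T) ω x) ^ q2) ∧
      ((∫⁻ x, (wolff α p (ENNReal.ofReal T) ω x) ^ q1 *
            (wolff β p (ENNReal.ofReal T) ω x) ^ q2) ≤
          ENNReal.ofReal C *
            ∫⁻ x, (wolff ((α * q1 + β * q2) / (q1 + q2)) p (ENNReal.ofReal T) ω x) ^
              (q1 + q2)) ∧
      ((∫⁻ x, (fracMax ((α * p * q1 + β * p * q2) / (q1 + q2)) (ENNReal.ofReal T) ω x) ^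
            ((q1 + q2) / (p - 1))) ≤
          ENNReal.ofReal C *
            ∫⁻ x, (wolff α p (ENNReal.ofReal T) ω x) ^ q1 *
              (wolff β p (ENNReal.ofReal T) ω x) ^ q2) ∧
      ((∫⁻ x, (wolff α p (ENNReal.ofReal T) ω x) ^ q1 *
            (wolff β p (ENNReal.ofReal T) ω x) ^ q2) ≤
          ENNReal.ofReal C *
            ∫⁻ x, (fracMax ((α * p * q1 + β * p * q2) / (q1 + q2)) (ENNReal.ofReal T) ω x) ^
              ((q1 + q2) / (p - 1))) := by
  have hαN : α * p < N := by rwa [lt_div_iff₀ (hβ.trans hαβ), mul_comm] at hpN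
  have hγ : (α * p * q1 + β * p * q2) / (q1 + q2) = (α * q1 + β * q2) / (q1 + q2) * p := by ring
  have hγN : (α * q1 + β * q2) / (q1 + q2) * p ≤ N := by
    rw [← hγ, div_le_iff₀ (add_pos hq1 hq2)]
    nlinarith [mul_lt_mul_of_pos_right hαβ (one_pos.trans hp)]
  obtain ⟨C₁, hC₁, hMW⟩ := exists_lintegral_fracMax_rpow_le hp hγN hq
  obtain ⟨C₂, hC₂, hPM⟩ :=
    exists_lintegral_wolff_rpow_mul_wolff_rpow_le hβ hq1 hq2 hαβ hp hαN hq hq2'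
  obtain ⟨K, hK, hcycle⟩ := exists_pairwise_le_of_cyclic_le (ENNReal.add_ne_top.2 ⟨hC₁, hC₂⟩)
  rw [hγ] at hPM ⊢
  exact ⟨K, hK, fun T hT ω _ => hcycle
    ((hMW ω T hT).trans (mul_le_mul_left le_self_add _))
    (lintegral_mono fun x => wolff_rpow_add_le hp hq1 hq2 x)
    ((hPM ω T hT).trans (mul_le_mul_left le_add_self _))⟩

end Comparison

/-- Truncated version of the comparability of the fractional
maximal function, the intermediate Wolff potential and the product of Wolff
potentials, with constants independent of `R`, for measures whose support has
diameter at most `R`. -/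
theorem stmt10 (N : ℕ) (α β p q1 q2 : ℝ) (hα : 0 < α) (hβ : 0 < β)
    (hq1 : 0 < q1) (hq2 : 0 < q2) (hαβ : β < α) (hp : 1 < p) (hpN : p < (N : ℝ) / α)
    (hq : p - 1 < q1 + q2) (hq2' : q2 < (N : ℝ) * (p - 1) / ((N : ℝ) - β * p))
    (hγ : (α * p * q1 + β * p * q2) / (q1 + q2) < (N : ℝ)) :
    ∃ C > 0, ∀ R : ℝ, 0 < R → ∀ ω : Measure (Euc N), IsLocallyFiniteMeasure ω →
      (∃ S : Set (Euc N), ω Sᶜ = 0 ∧ EMetric.diam S ≤ ENNReal.ofReal R) →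
      ((∫⁻ x, (fracMax ((α * p * q1 + β * p * q2) / (q1 + q2)) (ENNReal.ofReal (2 * R)) ω x) ^
            ((q1 + q2) / (p - 1))) ≤
          ENNReal.ofReal C *
            ∫⁻ x, (wolff ((α * q1 + β * q2) / (q1 + q2)) p (ENNReal.ofReal (2 * R)) ω x) ^
              (q1 + q2)) ∧
      ((∫⁻ x, (wolff ((α * q1 + β * q2) / (q1 + q2)) p (ENNReal.ofReal (2 * R)) ω x) ^
            (q1 + q2)) ≤
          ENNReal.ofReal C *
            ∫⁻ x, (fracMax ((α * p * q1 + β * p * q2) / (q1 + q2)) (ENNReal.ofReal (2 * R)) ω x) ^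
              ((q1 + q2) / (p - 1))) ∧
      ((∫⁻ x, (wolff ((α * q1 + β * q2) / (q1 + q2)) p (ENNReal.ofReal (2 * R)) ω x) ^
            (q1 + q2)) ≤
          ENNReal.ofReal C *
            ∫⁻ x, (wolff α p (ENNReal.ofReal (2 * R)) ω x) ^ q1 *
              (wolff β p (ENNReal.ofReal (2 * R)) ω x) ^ q2) ∧
      ((∫⁻ x, (wolff α p (ENNReal.ofReal (2 * R)) ω x) ^ q1 *
            (wolff β p (ENNReal.ofReal (2 * R)) ω x) ^ q2) ≤
          ENNReal.ofReal C *
            ∫⁻ x, (wolff ((α * q1 + β * q2) / (q1 + q2)) p (ENNReal.ofReal (2 * R)) ω x) ^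
              (q1 + q2)) ∧
      ((∫⁻ x, (fracMax ((α * p * q1 + β * p * q2) / (q1 + q2)) (ENNReal.ofReal (2 * R)) ω x) ^
            ((q1 + q2) / (p - 1))) ≤
          ENNReal.ofReal C *
            ∫⁻ x, (wolff α p (ENNReal.ofReal (2 * R)) ω x) ^ q1 *
              (wolff β p (ENNReal.ofReal (2 * R)) ω x) ^ q2) ∧
      ((∫⁻ x, (wolff α p (ENNReal.ofReal (2 * R)) ω x) ^ q1 *
            (wolff β p (ENNReal.ofReal (2 * R)) ω x) ^ q2) ≤
          ENNReal.ofReal C *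
            ∫⁻ x, (fracMax ((α * p * q1 + β * p * q2) / (q1 + q2)) (ENNReal.ofReal (2 * R)) ω x) ^
              ((q1 + q2) / (p - 1))) := by
  obtain ⟨C, hC, h⟩ := stmt10_general N α β p q1 q2 hβ hq1 hq2 hαβ hp hpN hq.le hq2'
  exact ⟨C, hC, fun R hR ω _ _ => h (2 * R) (by positivity) ω⟩
end
end

section
/- Let s1,s2>0 and 0<α2<α1<N. Set a = 1 + ((s1+s2)/(s1·s2·(α1−α2)))² + 2^{(N−α1)s1+(N−α2)s2+1}. There exist constants C=C(N,α1,α2,s1,s2)>0 and ε0=ε0(N,α1,α2,s1,s2)>0 such that for every nonnegative Radon measure μ on ℝ^N, every R∈(0,∞], every ε∈(0,ε0) and every λ>0: if the set {x : L^{2R}_{α1,s1}[μ](x)·L^{2R}_{α2,s2}[μ](x) > ε^{1/2}λ} has finite Lebesgue measure, then |{L^R_{α1,s1}[μ]·L^R_{α2,s2}[μ] > aλ} ∩ {(M^{2R}_{(α1s1+α2s2)/(s1+s2)}[μ])^{s1+s2} ≤ ελ}| ≤ C·ε^{N/(2s2(N−α2))}·|{L^{2R}_{α1,s1}[μ]·L^{2R}_{α2,s2}[μ]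 > ε^{1/2}λ}|. -/
open MeasureTheory Metric Set Filter Bornology
open scoped ENNReal NNReal Topology RealInnerProductSpace

noncomputable section

/-!
Let `E` be the set where the product of the two potentials truncated at `2 * R` exceeds
`ε ^ (1 / 2) * lam`, let `B(z, ρ) ⊆ E` with `ρ` comparable to `min (dist z Eᶜ) R`, and split each
potential at a radius `r` comparable to `ρ`. The near part of the first potential is controlled by
the maximal function, and far parts are controlled by the potentials at a nearby point outside `E`.
Hence the first potential times the far part of the second one is `O(lam)`, and on the bad set the
near part of the second potential has to account for the excess over `lam`. The same two bounds show
that the first potential times `T = (μ(B(z, 9r/8)) / r ^ (N - α₂)) ^ s₂` is `O(ε ^ (1 / 2) * lam)`,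
so on the bad set the near part of the second potential is at least a multiple of
`ε ^ (-1 / 2) * T`. Hedberg's splitting of the near part and the weak type `(1, 1)` inequality bound
the measure of such points near `z` by a multiple of `ε ^ (N / (2 * s₂ * (N - α₂))) * ρ ^ N`, and
Vitali's covering lemma sums these bounds over `E`.
-/

section Potential

variable {X : Type*} [PseudoMetricSpace X] [MeasurableSpace X] {μ : Measure X} {x x₀ : X}
  {p q s θ r t : ℝ} {R a : ℝ≥0∞}

/-- The radii over which a potential or a maximal function truncated at `R ∈ [0, ∞]` ranges. -/
def truncRange (R : ℝ≥0∞) : Set ℝ := {t : ℝ | 0 < t ∧ ENNReal.ofReal t < R}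

/-- The integrand of the potential `truncPotential`, with respect to `dt`. -/
def potKernel (p s : ℝ) (μ : Measure X) (x : X) (t : ℝ) : ℝ≥0∞ :=
  (μ (ball x t) / ENNReal.ofReal (t ^ p)) ^ s / ENNReal.ofReal t

/-- The potential `∫₀ᴿ (μ(B_t(x)) / t ^ p) ^ s dt / t` on a metric space. On `ℝ^N` the potential
`L^R_{α,s}` is the case `p = N - α`. -/
def truncPotential (p s : ℝ) (R : ℝ≥0∞) (μ : Measure X) (x : X) : ℝ≥0∞ :=
  ∫⁻ t in truncRange R, potKernel p s μ x t

/-- The maximal function `sup_{0 < t < R} μ(B_t(x)) / t ^ q` on a metric space. On `ℝ^N` the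
fractional maximal function `M^R_γ` is the case `q = N - γ`. -/
def truncMaximal (q : ℝ) (R : ℝ≥0∞) (μ : Measure X) (x : X) : ℝ≥0∞ :=
  ⨆ (t : ℝ) (_ : 0 < t) (_ : ENNReal.ofReal t < R), μ (ball x t) / ENNReal.ofReal (t ^ q)

lemma measurableSet_truncRange : MeasurableSet (truncRange R) :=
  measurableSet_Ioi.inter (measurableSet_lt ENNReal.measurable_ofReal measurable_const)

lemma truncRange_mono : Monotone truncRange := fun _ _ h _ ht => ⟨ht.1, ht.2.trans_le h⟩

lemma Ioo_subset_truncRange (hrR : ENNReal.ofReal r ≤ R) : Ioo 0 r ⊆ truncRange R :=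
  fun _ ht => ⟨ht.1, ((ENNReal.ofReal_lt_ofReal_iff_of_nonneg ht.1.le).2 ht.2).trans_le hrR⟩

lemma truncRange_inter_Ici_eq_empty (hRr : R ≤ ENNReal.ofReal r) :
    truncRange R ∩ Ici r = ∅ :=
  eq_empty_of_forall_notMem fun _ ht =>
    (ht.1.2.trans_le hRr).not_ge (ENNReal.ofReal_le_ofReal ht.2)

lemma mul_mem_truncRange {c : ℝ} (hc : 0 < c) (ht : t ∈ truncRange R) :
    c * t ∈ truncRange (ENNReal.ofReal c * R) := by
  refine ⟨mul_pos hc ht.1, ?_⟩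
  rw [ENNReal.ofReal_mul hc.le]
  exact ENNReal.mul_lt_mul_right (by simpa using hc) ENNReal.ofReal_ne_top ht.2

lemma potKernel_eq_rpow_mul (hs : 0 ≤ s) (ht : 0 < t) :
    potKernel p s μ x t = μ (ball x t) ^ s * ENNReal.ofReal (t ^ (-(p * s) - 1)) := by
  have hts : 0 < t ^ (p * s) := by positivity
  rw [potKernel, ENNReal.div_rpow_of_nonneg _ _ hs, ENNReal.ofReal_rpow_of_pos (by positivity),
    ← Real.rpow_mul ht.le, Real.rpow_sub_one ht.ne', Real.rpow_neg ht.le,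
    ENNReal.ofReal_div_of_pos ht, ENNReal.ofReal_inv_of_pos hts, ← mul_div_assoc, ← div_eq_mul_inv]

lemma measurable_potKernel : Measurable (potKernel p s μ x) := by
  have h : Measurable fun t : ℝ => μ (ball x t) :=
    Monotone.measurable fun _ _ h => measure_mono (ball_subset_ball h)
  exact ((h.div (by fun_prop)).pow_const s).div (by fun_prop)

lemma truncPotential_mono_trunc {R' : ℝ≥0∞} (h : R ≤ R') :
    truncPotential p s R μ x ≤ truncPotential p s R' μ x :=
  lintegral_mono_set (truncRange_mono h)

lemma truncPotential_le_near_add_far (r : ℝ) :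
    truncPotential p s R μ x ≤ (∫⁻ t in Ioo 0 r, potKernel p s μ x t)
      + ∫⁻ t in truncRange R ∩ Ici r, potKernel p s μ x t := by
  refine (lintegral_mono_set fun t ht => ?_).trans (lintegral_union_le _ _ _)
  exact (lt_or_ge t r).imp (fun h => ⟨ht.1, h⟩) fun h => ⟨ht, h⟩

lemma measure_ball_le_truncMaximal_mul (ht : t ∈ truncRange R) :
    μ (ball x t) ≤ truncMaximal q R μ x * ENNReal.ofReal (t ^ q) := by
  have htq : 0 < t ^ q := Real.rpow_pos_of_pos ht.1 q
  refine (ENNReal.div_le_iff (by simpa using htq) ENNReal.ofReal_ne_top).1 ?_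
  exact le_iSup_of_le t (le_iSup₂_of_le ht.1 ht.2 le_rfl)

lemma lintegral_Ioo_ofReal_rpow (hθ : 0 < θ) (hr : 0 < r) :
    ∫⁻ t in Ioo 0 r, ENNReal.ofReal (t ^ (θ - 1)) = ENNReal.ofReal (r ^ θ / θ) := by
  have hint : IntegrableOn (fun t : ℝ => t ^ (θ - 1)) (Ioo 0 r) :=
    (intervalIntegral.integrableOn_Ioo_rpow_iff hr).2 (by linarith)
  rw [← ofReal_integral_eq_lintegral_ofReal hint, ← integral_Ioc_eq_integral_Ioo,
    ← intervalIntegral.integral_of_le hr.le, integral_rpow (Or.inl (by linarith)),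
    sub_add_cancel, Real.zero_rpow hθ.ne', sub_zero]
  exact (ae_restrict_mem measurableSet_Ioo).mono fun t ht => Real.rpow_nonneg ht.1.le _

lemma lintegral_Ici_ofReal_rpow (hθ : 0 < θ) (hr : 0 < r) :
    ∫⁻ t in Ici r, ENNReal.ofReal (t ^ (-θ - 1)) = ENNReal.ofReal (r ^ (-θ) / θ) := by
  rw [setLIntegral_congr Ioi_ae_eq_Ici.symm,
    ← ofReal_integral_eq_lintegral_ofReal (integrableOn_Ioi_rpow_of_lt (by linarith) hr),
    integral_Ioi_rpow_of_lt (by linarith) hr, sub_add_cancel, neg_div_neg_eq]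
  exact (ae_restrict_mem measurableSet_Ioi).mono fun t ht => Real.rpow_nonneg (hr.trans ht).le _

lemma potKernel_le_of_measure_ball_le (hs : 0 ≤ s) (ht : 0 < t)
    (h : μ (ball x t) ≤ a * ENNReal.ofReal (t ^ q)) :
    potKernel p s μ x t ≤ a ^ s * ENNReal.ofReal (t ^ ((q - p) * s - 1)) := by
  have htq : 0 < t ^ q := by positivity
  calc
    _ ≤ (a * ENNReal.ofReal (t ^ q)) ^ s * ENNReal.ofReal (t ^ (-(p * s) - 1)) := by
      rw [potKernel_eq_rpow_mul hs ht]
      gcongr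
    _ = _ := by
      rw [ENNReal.mul_rpow_of_nonneg _ _ hs, ENNReal.ofReal_rpow_of_pos htq, mul_assoc,
        ← ENNReal.ofReal_mul (by positivity), ← Real.rpow_mul ht.le, ← Real.rpow_add ht]
      ring_nf

lemma lintegral_potKernel_near_le (hs : 0 ≤ s) (hθ : 0 < θ) (hqp : (q - p) * s = θ) (hr : 0 < r)
    {S : Set ℝ} (hS : MeasurableSet S) (hSr : S ⊆ Ioo 0 r)
    (h : ∀ t ∈ S, μ (ball x t) ≤ a * ENNReal.ofReal (t ^ q)) :
    ∫⁻ t in S, potKernel p s μ x t ≤ a ^ s * ENNReal.ofReal (r ^ θ / θ) := by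
  calc
    _ ≤ ∫⁻ t in S, a ^ s * ENNReal.ofReal (t ^ (θ - 1)) :=
      setLIntegral_mono' hS fun t ht => hqp ▸ potKernel_le_of_measure_ball_le hs (hSr ht).1 (h t ht)
    _ ≤ ∫⁻ t in Ioo 0 r, a ^ s * ENNReal.ofReal (t ^ (θ - 1)) := lintegral_mono_set hSr
    _ = _ := by rw [lintegral_const_mul _ (by fun_prop), lintegral_Ioo_ofReal_rpow hθ hr]

lemma lintegral_potKernel_far_le (hs : 0 ≤ s) (hθ : 0 < θ) (hqp : (q - p) * s = -θ) (hr : 0 < r)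
    {S : Set ℝ} (hS : MeasurableSet S) (hSr : S ⊆ Ici r)
    (h : ∀ t ∈ S, μ (ball x t) ≤ a * ENNReal.ofReal (t ^ q)) :
    ∫⁻ t in S, potKernel p s μ x t ≤ a ^ s * ENNReal.ofReal (r ^ (-θ) / θ) := by
  calc
    _ ≤ ∫⁻ t in S, a ^ s * ENNReal.ofReal (t ^ (-θ - 1)) :=
      setLIntegral_mono' hS fun t ht =>
        hqp ▸ potKernel_le_of_measure_ball_le hs (hr.trans_le (hSr ht)) (h t ht)
    _ ≤ ∫⁻ t in Ici r, a ^ s * ENNReal.ofReal (t ^ (-θ - 1)) := lintegral_mono_set hSr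
    _ = _ := by rw [lintegral_const_mul _ (by fun_prop), lintegral_Ici_ofReal_rpow hθ hr]

lemma potKernel_le_mul_potKernel_two_mul (hs : 0 ≤ s) (ht : 0 < t) (hx : dist x x₀ ≤ t) :
    potKernel p s μ x t ≤
      ENNReal.ofReal (2 ^ (p * s)) * (ENNReal.ofReal |2| * potKernel p s μ x₀ (2 * t)) := by
  have hsub : ball x t ⊆ ball x₀ (2 * t) := ball_subset_ball' (by linarith)
  calc
    _ ≤ μ (ball x₀ (2 * t)) ^ s * ENNReal.ofReal (t ^ (-(p * s) - 1)) := by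
      rw [potKernel_eq_rpow_mul hs ht]
      gcongr
    _ = μ (ball x₀ (2 * t)) ^ s *
          ENNReal.ofReal (2 ^ (p * s) * (|2| * (2 * t) ^ (-(p * s) - 1))) := by
      rw [Real.mul_rpow zero_le_two ht.le, Real.rpow_sub_one two_ne_zero, Real.rpow_neg zero_le_two,
        abs_two]
      field_simp
    _ = _ := by
      rw [potKernel_eq_rpow_mul hs (by positivity), ENNReal.ofReal_mul (by positivity),
        ENNReal.ofReal_mul (by positivity)]
      ring

lemma lintegral_potKernel_far_le_truncPotential (hs : 0 ≤ s) (hx : dist x x₀ ≤ r) :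
    ∫⁻ t in truncRange R ∩ Ici r, potKernel p s μ x t ≤
      ENNReal.ofReal (2 ^ (p * s)) * truncPotential p s (2 * R) μ x₀ := by
  set S := truncRange R ∩ Ici r
  have hS : MeasurableSet S := measurableSet_truncRange.inter measurableSet_Ici
  calc
    _ ≤ ∫⁻ t in S, ENNReal.ofReal (2 ^ (p * s)) *
          (ENNReal.ofReal |2| * potKernel p s μ x₀ (2 * t)) :=
      setLIntegral_mono' hS fun t ht =>
        potKernel_le_mul_potKernel_two_mul hs ht.1.1 (hx.trans ht.2)
    _ = ENNReal.ofReal (2 ^ (p * s)) * ∫⁻ t in (2 * ·) '' S, potKernel p s μ x₀ t := by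
      rw [lintegral_const_mul' _ _ ENNReal.ofReal_ne_top,
        lintegral_image_eq_lintegral_abs_deriv_mul hS (f := (2 * ·)) (f' := fun _ => 2)
          (fun t _ => (hasDerivAt_const_mul 2).hasDerivWithinAt)
          (mul_right_injective₀ two_ne_zero).injOn]
    _ ≤ _ := by
      gcongr
      refine lintegral_mono_set (image_subset_iff.2 fun t ht => ?_)
      simpa using mul_mem_truncRange two_pos ht.1

lemma rpow_measure_ball_mul_le_truncPotential (hp : 0 ≤ p) (hs : 0 ≤ s) (hr : 0 < r)
    (hrR : ENNReal.ofReal r ≤ R) :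
    μ (ball x (3 / 2 * r)) ^ s * ENNReal.ofReal (r ^ (-(p * s))) ≤
      ENNReal.ofReal (4 * 2 ^ (p * s)) * truncPotential p s (2 * R) μ x := by
  have hps : 0 ≤ p * s := mul_nonneg hp hs
  set w := μ (ball x (3 / 2 * r)) ^ s * ENNReal.ofReal ((2 * r) ^ (-(p * s) - 1))
  have hk : ∀ t ∈ Ioo (3 / 2 * r) (2 * r), w ≤ potKernel p s μ x t := by
    intro t ht
    have ht0 : 0 < t := by linarith [ht.1]
    rw [potKernel_eq_rpow_mul hs ht0]
    gcongr ?_ * ENNReal.ofReal ?_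
    · gcongr
      exact ht.1.le
    · exact Real.rpow_le_rpow_of_nonpos ht0 ht.2.le (by linarith)
  have hsub : Ioo (3 / 2 * r) (2 * r) ⊆ truncRange (2 * R) := by
    refine (Ioo_subset_Ioo_left (by positivity)).trans (Ioo_subset_truncRange ?_)
    rw [ENNReal.ofReal_mul zero_le_two, ENNReal.ofReal_ofNat]
    gcongr
  calc
    _ = ENNReal.ofReal (4 * 2 ^ (p * s)) * ∫⁻ _ in Ioo (3 / 2 * r) (2 * r), w := by
      rw [setLIntegral_const, Real.volume_Ioo, mul_assoc, mul_left_comm,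
        ← ENNReal.ofReal_mul (by positivity), ← ENNReal.ofReal_mul (by positivity),
        Real.rpow_sub_one (by positivity), Real.mul_rpow zero_le_two hr.le,
        Real.rpow_neg zero_le_two]
      congr 2
      field_simp
      ring
    _ ≤ ENNReal.ofReal (4 * 2 ^ (p * s)) * ∫⁻ t in Ioo (3 / 2 * r) (2 * r), potKernel p s μ x t :=
      mul_le_mul_right (setLIntegral_mono' measurableSet_Ioo hk) _
    _ ≤ _ := by
      gcongr
      exact lintegral_mono_set hsub

lemma lowerSemicontinuous_measure_ball (μ : Measure X) (t : ℝ) :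
    LowerSemicontinuous fun x => μ (ball x t) := by
  intro x c hc
  have hU : ball x t = ⋃ n : ℕ, ball x (t - 1 / ((n : ℝ) + 1)) := by
    ext y
    simp only [mem_iUnion, mem_ball]
    refine ⟨fun h => ?_, fun ⟨n, hn⟩ => hn.trans (sub_lt_self _ Nat.one_div_pos_of_nat)⟩
    obtain ⟨n, hn⟩ := exists_nat_one_div_lt (sub_pos.2 h)
    exact ⟨n, by linarith⟩
  have hmono : Monotone fun n : ℕ => ball x (t - 1 / ((n : ℝ) + 1)) := fun _ _ hab =>
    ball_subset_ball (sub_le_sub_left (Nat.one_div_le_one_div hab) t)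
  change c < μ (ball x t) at hc
  rw [hU, hmono.measure_iUnion] at hc
  obtain ⟨n, hn⟩ := lt_iSup_iff.1 hc
  filter_upwards [ball_mem_nhds x (Nat.one_div_pos_of_nat (n := n))] with y hy
  refine hn.trans_le (measure_mono (ball_subset_ball' ?_))
  linarith [mem_ball'.1 hy]

lemma truncPotential_le_liminf (hs : 0 ≤ s) (x : X) :
    truncPotential p s R μ x ≤ liminf (truncPotential p s R μ) (𝓝 x) := by
  refine le_trans ?_ (lintegral_liminf_le fun y => measurable_potKernel (x := y))
  refine setLIntegral_mono' measurableSet_truncRange fun t ht => ?_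
  simp only [potKernel_eq_rpow_mul hs ht.1]
  have hc : Continuous fun u : ℝ≥0∞ => u ^ s * ENNReal.ofReal (t ^ (-(p * s) - 1)) :=
    (ENNReal.continuous_mul_const ENNReal.ofReal_ne_top).comp ENNReal.continuous_rpow_const
  have hmono : Monotone fun u : ℝ≥0∞ => u ^ s * ENNReal.ofReal (t ^ (-(p * s) - 1)) :=
    fun u v huv => by dsimp only; gcongr
  exact lowerSemicontinuousAt_iff_le_liminf.1
    (hc.comp_lowerSemicontinuous (lowerSemicontinuous_measure_ball μ t) hmono x)

lemma lowerSemicontinuous_truncPotential_mul {p₁ p₂ s₁ s₂ : ℝ} (hs₁ : 0 ≤ s₁) (hs₂ : 0 ≤ s₂) :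
    LowerSemicontinuous fun x => truncPotential p₁ s₁ R μ x * truncPotential p₂ s₂ R μ x :=
  fun x => lowerSemicontinuousAt_iff_le_liminf.2 <|
    (mul_le_mul' (truncPotential_le_liminf hs₁ x) (truncPotential_le_liminf hs₂ x)).trans
      ENNReal.le_liminf_mul

end Potential

lemma exists_radius_of_isOpen {X : Type*} [PseudoMetricSpace X] {E : Set X} {x : X} {k : ℝ}
    {R : ℝ≥0∞} (hE : IsOpen E) (hE' : Eᶜ.Nonempty) (hx : x ∈ E) (hR : 0 < R) (hk : 0 < k) :
    ∃ ρ, 0 < ρ ∧ ball x ρ ⊆ E ∧ ENNReal.ofReal (k * ρ) ≤ R ∧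
      (R ≤ ENNReal.ofReal (k * ρ) ∨ ∃ x₀ ∉ E, dist x x₀ < 2 * ρ) := by
  have hpos : 0 < infDist x Eᶜ :=
    (hE.isClosed_compl.notMem_iff_infDist_pos hE').1 (notMem_compl_iff.2 hx)
  have hball : ball x (infDist x Eᶜ) ⊆ E := disjoint_compl_right_iff_subset.1 disjoint_ball_infDist
  obtain hkR | hRk := le_or_gt (ENNReal.ofReal (k * infDist x Eᶜ)) R
  · exact ⟨_, hpos, hball, hkR, .inr ((infDist_lt_iff hE').1 (by linarith))⟩
  · have hR' : ENNReal.ofReal (k * (R.toReal / k)) = R := by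
      rw [mul_div_cancel₀ _ hk.ne', ENNReal.ofReal_toReal hRk.ne_top]
    have hle : R.toReal / k ≤ infDist x Eᶜ := by
      rw [div_le_iff₀' hk]
      exact (ENNReal.lt_ofReal_iff_toReal_lt hRk.ne_top).1 hRk |>.le
    exact ⟨_, div_pos (ENNReal.toReal_pos hR.ne' hRk.ne_top) hk,
      (ball_subset_ball hle).trans hball, hR'.le, .inl hR'.ge⟩

section AhlforsRegular

variable {X : Type*} [PseudoMetricSpace X] [MeasurableSpace X] {μ ν : Measure X} {d κ K : ℝ}

/-- A measure is Ahlfors regular of dimension `d`, with constants `κ` and `K`, if balls of radius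
`r` have measure comparable to `r ^ d`. The upper bound is required of closed balls, which are what
a Vitali covering produces. -/
structure IsAhlforsRegular (ν : Measure X) (d κ K : ℝ) : Prop where
  lower_pos : 0 < κ
  upper_pos : 0 < K
  le_measure_ball : ∀ (x : X) {r : ℝ}, 0 < r → ENNReal.ofReal (κ * r ^ d) ≤ ν (ball x r)
  measure_closedBall_le : ∀ (x : X) {r : ℝ}, 0 < r →
    ν (closedBall x r) ≤ ENNReal.ofReal (K * r ^ d)

lemma isAhlforsRegular_addHaar {E : Type*} [NormedAddCommGroup E] [NormedSpace ℝ E]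
    [FiniteDimensional ℝ E] [MeasurableSpace E] [BorelSpace E] (ν : Measure E)
    [ν.IsAddHaarMeasure] :
    IsAhlforsRegular ν (Module.finrank ℝ E) (ν.real (ball 0 1)) (ν.real (ball 0 1)) := by
  have hpos : 0 < ν.real (ball 0 1) :=
    ENNReal.toReal_pos (measure_ball_pos ν 0 one_pos).ne' measure_ball_lt_top.ne
  have hball (r : ℝ) : ENNReal.ofReal (ν.real (ball 0 1) * r ^ (Module.finrank ℝ E : ℝ)) =
      ENNReal.ofReal (r ^ Module.finrank ℝ E) * ν (ball 0 1) := by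
    rw [ENNReal.ofReal_mul measureReal_nonneg, ofReal_measureReal measure_ball_lt_top.ne,
      Real.rpow_natCast, mul_comm]
  exact ⟨hpos, hpos, fun x r hr => (hball r).trans_le (Measure.addHaar_ball_of_pos ν x hr).ge,
    fun x r hr => (Measure.addHaar_closedBall ν x hr.le).trans_le (hball r).ge⟩

lemma IsAhlforsRegular.exists_radius_le (hν : IsAhlforsRegular ν d κ K) (hd : 0 < d) {E : Set X}
    (hE : ν E ≠ ⊤) : ∃ B, ∀ x ρ, 0 < ρ → ball x ρ ⊆ E → ρ ≤ B := by
  refine ⟨(ν.real E / κ) ^ d⁻¹, fun x ρ hρ hsub => ?_⟩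
  have h : κ * ρ ^ d ≤ ν.real E := by
    refine (ENNReal.ofReal_le_iff_le_toReal hE).1 ?_
    exact (hν.le_measure_ball x hρ).trans (measure_mono hsub)
  rw [Real.le_rpow_inv_iff_of_pos hρ.le (div_nonneg measureReal_nonneg hν.lower_pos.le) hd,
    le_div_iff₀' hν.lower_pos]
  exact h

lemma IsAhlforsRegular.measure_univ [Nonempty X] (hν : IsAhlforsRegular ν d κ K) (hd : 0 < d) :
    ν univ = ⊤ := by
  by_contra h
  obtain ⟨B, hB⟩ := hν.exists_radius_le hd h
  have hle := hB (Classical.arbitrary X) (|B| + 1) (by positivity) (subset_univ _)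
  linarith [le_abs_self B]

section Covering

variable [TopologicalSpace.SeparableSpace X] [OpensMeasurableSpace X]

lemma measure_le_mul_measure_of_forall_exists_ball {F U : Set X} {B : ℝ} {c : ℝ≥0∞}
    (h : ∀ x ∈ F, ∃ ρ, 0 < ρ ∧ ρ ≤ B ∧ ball x ρ ⊆ U ∧
      ν (F ∩ closedBall x (5 * ρ)) ≤ c * μ (ball x ρ)) :
    ν F ≤ c * μ U := by
  choose! ρ hρ hB hU hle using h
  obtain ⟨u, huF, hdisj, hcov⟩ :=
    Vitali.exists_disjoint_subfamily_covering_enlargement_closedBall F id ρ B hB 5 (by norm_num)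
  have hdisj' : u.PairwiseDisjoint fun x => ball x (ρ x) :=
    hdisj.mono fun x => ball_subset_closedBall
  have hu : u.Countable := hdisj'.countable_of_isOpen (fun _ _ => isOpen_ball)
    fun x hx => nonempty_ball.2 (hρ x (huF hx))
  have hF : F ⊆ ⋃ x ∈ u, F ∩ closedBall x (5 * ρ x) := fun x hx => by
    obtain ⟨y, hy, hxy⟩ := hcov x hx
    exact mem_biUnion hy ⟨hx, hxy (mem_closedBall_self (hρ x hx).le)⟩
  calc
    ν F ≤ ∑' x : u, ν (F ∩ closedBall (x : X) (5 * ρ x)) :=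
      (measure_mono hF).trans (measure_biUnion_le ν hu _)
    _ ≤ ∑' x : u, c * μ (ball (x : X) (ρ x)) :=
      ENNReal.tsum_le_tsum fun x => hle x (huF x.2)
    _ = c * μ (⋃ x ∈ u, ball x (ρ x)) := by
      rw [ENNReal.tsum_mul_left, measure_biUnion hu hdisj' fun _ _ => measurableSet_ball]
    _ ≤ c * μ U := by
      gcongr
      exact iUnion₂_subset fun x hx => hU x (huF hx)

lemma IsAhlforsRegular.measure_exists_lt_measure_ball_le (hν : IsAhlforsRegular ν d κ K)
    {S U : Set X} {r : ℝ} (hS : ∀ x ∈ S, ball x r ⊆ U) (a : ℝ≥0∞) :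
    ν {x ∈ S | ∃ t ∈ Ioo 0 r, a * ENNReal.ofReal (t ^ d) < μ (ball x t)} ≤
      ENNReal.ofReal (K * 5 ^ d) / a * μ U := by
  refine measure_le_mul_measure_of_forall_exists_ball (B := r) fun x ⟨hx, t, ht, hlt⟩ =>
    ⟨t, ht.1, ht.2.le, (ball_subset_ball ht.2.le).trans (hS x hx), ?_⟩
  have htd : 0 < t ^ d := Real.rpow_pos_of_pos ht.1 d
  have ha : a ≠ ⊤ := by
    rintro rfl
    simp [ENNReal.top_mul, htd] at hlt
  have hle : ENNReal.ofReal (t ^ d) ≤ μ (ball x t) / a := by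
    rw [ENNReal.le_div_iff_mul_le (.inr hlt.ne_bot) (.inl ha), mul_comm]
    exact hlt.le
  calc
    _ ≤ ENNReal.ofReal (K * (5 * t) ^ d) :=
      (measure_mono inter_subset_right).trans (hν.measure_closedBall_le x (by linarith [ht.1]))
    _ = ENNReal.ofReal (K * 5 ^ d) * ENNReal.ofReal (t ^ d) := by
      rw [← ENNReal.ofReal_mul' htd.le, Real.mul_rpow (by norm_num) ht.1.le, mul_assoc]
    _ ≤ ENNReal.ofReal (K * 5 ^ d) * (μ (ball x t) / a) := by gcongr
    _ = _ := by rw [div_eq_mul_inv, div_eq_mul_inv]; ring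

end Covering

end AhlforsRegular

section Hedberg

variable {X : Type*} [PseudoMetricSpace X] [MeasurableSpace X] {μ ν : Measure X}
  {d κ K p s δ r : ℝ}

lemma lintegral_potKernel_Ioo_le_of_measure_ball_le (hp : 0 < p) (hpd : p < d) (hs : 0 < s)
    (hδ : 0 < δ) {x : X} {m : ℝ≥0∞} (hm : μ (ball x r) ≤ m)
    (h : ∀ t ∈ Ioo 0 r, μ (ball x t) ≤ m * ENNReal.ofReal (δ ^ (-d)) * ENNReal.ofReal (t ^ d)) :
    ∫⁻ t in Ioo 0 r, potKernel p s μ x t ≤ ENNReal.ofReal (1 / ((d - p) * s) + 1 / (p * s)) *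
      (m ^ s * ENNReal.ofReal (δ ^ (-(p * s)))) := by
  have hθ : 0 < (d - p) * s := mul_pos (sub_pos.2 hpd) hs
  have hps : 0 < p * s := mul_pos hp hs
  have hnear : ∫⁻ t in Ioo 0 r ∩ Ioo 0 δ, potKernel p s μ x t ≤
      m ^ s * ENNReal.ofReal (δ ^ (-(p * s)) * (1 / ((d - p) * s))) := by
    refine (lintegral_potKernel_near_le hs.le hθ rfl hδ (measurableSet_Ioo.inter measurableSet_Ioo)
      inter_subset_right fun t ht => h t ht.1).trans_eq ?_
    rw [ENNReal.mul_rpow_of_nonneg _ _ hs.le, ENNReal.ofReal_rpow_of_pos (by positivity), mul_assoc,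
      ← ENNReal.ofReal_mul (by positivity), ← Real.rpow_mul hδ.le, ← mul_div_assoc,
      ← Real.rpow_add hδ, mul_one_div]
    ring_nf
  have hfar : ∫⁻ t in Ioo 0 r ∩ Ici δ, potKernel p s μ x t ≤
      m ^ s * ENNReal.ofReal (δ ^ (-(p * s)) * (1 / (p * s))) := by
    rw [mul_one_div]
    refine lintegral_potKernel_far_le (q := 0) hs.le hps (by ring) hδ
      (measurableSet_Ioo.inter measurableSet_Ici) inter_subset_right fun t ht => ?_
    simpa using (measure_mono (ball_subset_ball ht.1.2.le)).trans hm
  calc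
    _ ≤ (∫⁻ t in Ioo 0 r ∩ Ioo 0 δ, potKernel p s μ x t) +
          ∫⁻ t in Ioo 0 r ∩ Ici δ, potKernel p s μ x t := by
      refine (lintegral_mono_set fun t ht => ?_).trans (lintegral_union_le _ _ _)
      exact (lt_or_ge t δ).imp (fun hδt => ⟨ht, ht.1, hδt⟩) fun hδt => ⟨ht, hδt⟩
    _ ≤ _ := add_le_add hnear hfar
    _ = _ := by
      rw [← mul_add, ← ENNReal.ofReal_add (by positivity) (by positivity), ← mul_add,
        ENNReal.ofReal_mul (by positivity)]
      ring

lemma IsAhlforsRegular.measure_lt_lintegral_potKernel_le [TopologicalSpace.SeparableSpace X]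
    [OpensMeasurableSpace X] (hν : IsAhlforsRegular ν d κ K) (hp : 0 < p) (hpd : p < d)
    (hs : 0 < s) (hδ : 0 < δ) {S U : Set X} (hS : ∀ x ∈ S, ball x r ⊆ U) :
    ν {x ∈ S | ENNReal.ofReal (1 / ((d - p) * s) + 1 / (p * s)) *
        (μ U ^ s * ENNReal.ofReal (δ ^ (-(p * s)))) < ∫⁻ t in Ioo 0 r, potKernel p s μ x t} ≤
      ENNReal.ofReal (K * (5 * δ) ^ d) := by
  have hδd : 0 < δ ^ (-d) := by positivity
  calc
    _ ≤ ν {x ∈ S | ∃ t ∈ Ioo 0 r,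
          μ U * ENNReal.ofReal (δ ^ (-d)) * ENNReal.ofReal (t ^ d) < μ (ball x t)} := by
      refine measure_mono fun x ⟨hx, hlt⟩ => ⟨hx, ?_⟩
      contrapose! hlt
      exact lintegral_potKernel_Ioo_le_of_measure_ball_le hp hpd hs hδ (measure_mono (hS x hx)) hlt
    _ ≤ ENNReal.ofReal (K * 5 ^ d) / (μ U * ENNReal.ofReal (δ ^ (-d))) * μ U :=
      hν.measure_exists_lt_measure_ball_le hS _
    _ = ENNReal.ofReal (K * (5 * δ) ^ d) * (μ U / μ U) := by
      rw [div_eq_mul_inv, ENNReal.mul_inv (.inr ENNReal.ofReal_ne_top) (.inr (by simpa using hδd)),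
        ← ENNReal.ofReal_inv_of_pos hδd, Real.rpow_neg hδ.le, inv_inv,
        Real.mul_rpow (by norm_num) hδ.le, ← mul_assoc K,
        ENNReal.ofReal_mul' (p := K * 5 ^ d) (by positivity),
        div_eq_mul_inv]
      ring
    _ ≤ _ := mul_le_of_le_one_right' ENNReal.div_self_le_one

end Hedberg

section GoodLambda

variable {X : Type*} [PseudoMetricSpace X] [MeasurableSpace X] {μ ν : Measure X} {x z : X}
  {p₁ p₂ s₁ s₂ q θ r k k' : ℝ} {R L Z : ℝ≥0∞}

/-- Some point within `r / 4` of `x` lies in the sublevel set at height `L` of the product of the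
two potentials truncated at `2 * R`. The condition is void once `r` exhausts the truncation `R`, for
then the potentials truncated at `R` only see balls of radius less than `r`. -/
def HasSublevelPointNear (p₁ s₁ p₂ s₂ : ℝ) (R : ℝ≥0∞) (μ : Measure X) (L : ℝ≥0∞) (r : ℝ) (x : X) :
    Prop :=
  R ≤ ENNReal.ofReal r ∨ ∃ x₀, dist x x₀ ≤ r / 4 ∧
    truncPotential p₁ s₁ (2 * R) μ x₀ * truncPotential p₂ s₂ (2 * R) μ x₀ ≤ L

lemma lintegral_potKernel_near_mul_le (hs₁ : 0 < s₁) (hs₂ : 0 < s₂) (hθ : 0 < θ)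
    (hq₁ : (q - p₁) * s₁ = θ) (hr : 0 < r) (hrR : ENNReal.ofReal r ≤ R)
    (hZ : Z ≤ ENNReal.ofReal k *
      (truncMaximal q R μ x ^ s₂ * ENNReal.ofReal (r ^ (-θ)))) :
    (∫⁻ t in Ioo 0 r, potKernel p₁ s₁ μ x t) * Z ≤
      ENNReal.ofReal (k / θ) * truncMaximal q R μ x ^ (s₁ + s₂) := by
  calc
    _ ≤ truncMaximal q R μ x ^ s₁ * ENNReal.ofReal (r ^ θ / θ) *
          (ENNReal.ofReal k * (truncMaximal q R μ x ^ s₂ * ENNReal.ofReal (r ^ (-θ)))) := by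
      gcongr
      exact lintegral_potKernel_near_le hs₁.le hθ hq₁ hr measurableSet_Ioo subset_rfl fun t ht =>
        measure_ball_le_truncMaximal_mul (Ioo_subset_truncRange hrR ht)
    _ = ENNReal.ofReal k * (ENNReal.ofReal (r ^ θ / θ) * ENNReal.ofReal (r ^ (-θ))) *
          truncMaximal q R μ x ^ (s₁ + s₂) := by
      rw [ENNReal.rpow_add_of_nonneg _ _ hs₁.le hs₂.le]
      ring
    _ = _ := by
      rw [← ENNReal.ofReal_mul (by positivity), ← ENNReal.ofReal_mul' (by positivity),
        Real.rpow_neg hr.le]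
      congr 2
      field_simp

lemma lintegral_potKernel_far_mul_le (hs₁ : 0 < s₁) (hr : 0 < r)
    (hfar : HasSublevelPointNear p₁ s₁ p₂ s₂ R μ L r x)
    (hZ : ∀ x₀, dist x x₀ ≤ r / 4 → Z ≤ ENNReal.ofReal k * truncPotential p₂ s₂ (2 * R) μ x₀) :
    (∫⁻ t in truncRange R ∩ Ici r, potKernel p₁ s₁ μ x t) * Z ≤
      ENNReal.ofReal (2 ^ (p₁ * s₁) * k) * L := by
  obtain hRr | ⟨x₀, hx₀, hL⟩ := hfar
  · simp [truncRange_inter_Ici_eq_empty hRr]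
  calc
    _ ≤ ENNReal.ofReal (2 ^ (p₁ * s₁)) * truncPotential p₁ s₁ (2 * R) μ x₀ *
          (ENNReal.ofReal k * truncPotential p₂ s₂ (2 * R) μ x₀) :=
      mul_le_mul' (lintegral_potKernel_far_le_truncPotential hs₁.le (by linarith)) (hZ x₀ hx₀)
    _ = ENNReal.ofReal (2 ^ (p₁ * s₁) * k) *
          (truncPotential p₁ s₁ (2 * R) μ x₀ * truncPotential p₂ s₂ (2 * R) μ x₀) := by
      rw [ENNReal.ofReal_mul (by positivity)]
      ring
    _ ≤ _ := by gcongr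

lemma truncPotential_mul_le (hs₁ : 0 < s₁) (hs₂ : 0 < s₂) (hθ : 0 < θ) (hq₁ : (q - p₁) * s₁ = θ)
    (hr : 0 < r) (hrR : ENNReal.ofReal r ≤ R) (hM : truncMaximal q (2 * R) μ x ^ (s₁ + s₂) ≤ L)
    (hfar : HasSublevelPointNear p₁ s₁ p₂ s₂ R μ L r x)
    (hk : 0 ≤ k) (hZM : Z ≤ ENNReal.ofReal k *
      (truncMaximal q (2 * R) μ x ^ s₂ * ENNReal.ofReal (r ^ (-θ))))
    (hk' : 0 ≤ k') (hZ : ∀ x₀, dist x x₀ ≤ r / 4 →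
      Z ≤ ENNReal.ofReal k' * truncPotential p₂ s₂ (2 * R) μ x₀) :
    truncPotential p₁ s₁ R μ x * Z ≤ ENNReal.ofReal (k / θ + 2 ^ (p₁ * s₁) * k') * L := by
  have hrR' : ENNReal.ofReal r ≤ 2 * R := hrR.trans (le_mul_of_one_le_left' one_le_two)
  calc
    _ ≤ ((∫⁻ t in Ioo 0 r, potKernel p₁ s₁ μ x t) +
          ∫⁻ t in truncRange R ∩ Ici r, potKernel p₁ s₁ μ x t) * Z := by
      gcongr
      exact truncPotential_le_near_add_far r
    _ ≤ ENNReal.ofReal (k / θ) * L + ENNReal.ofReal (2 ^ (p₁ * s₁) * k') * L := by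
      rw [add_mul]
      refine add_le_add ?_ (lintegral_potKernel_far_mul_le hs₁ hr hfar hZ)
      exact (lintegral_potKernel_near_mul_le hs₁ hs₂ hθ hq₁ hr hrR' hZM).trans
        (mul_le_mul_right hM _)
    _ = _ := by rw [← add_mul, ← ENNReal.ofReal_add (by positivity) (by positivity)]

lemma truncPotential_mul_far_le (hs₁ : 0 < s₁) (hs₂ : 0 < s₂) (hθ : 0 < θ)
    (hq₁ : (q - p₁) * s₁ = θ) (hq₂ : (q - p₂) * s₂ = -θ)
    (hr : 0 < r) (hrR : ENNReal.ofReal r ≤ R) (hM : truncMaximal q (2 * R) μ x ^ (s₁ + s₂) ≤ L)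
    (hfar : HasSublevelPointNear p₁ s₁ p₂ s₂ R μ L r x) :
    truncPotential p₁ s₁ R μ x * ∫⁻ t in truncRange R ∩ Ici r, potKernel p₂ s₂ μ x t ≤
      ENNReal.ofReal ((1 / θ) ^ 2 + 2 ^ (p₁ * s₁ + p₂ * s₂)) * L := by
  have hZM : ∫⁻ t in truncRange R ∩ Ici r, potKernel p₂ s₂ μ x t ≤
      ENNReal.ofReal (1 / θ) * (truncMaximal q (2 * R) μ x ^ s₂ * ENNReal.ofReal (r ^ (-θ))) := by
    refine (lintegral_potKernel_far_le hs₂.le hθ hq₂ hr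
      (measurableSet_truncRange.inter measurableSet_Ici) inter_subset_right fun t ht =>
      measure_ball_le_truncMaximal_mul
        (truncRange_mono (le_mul_of_one_le_left' one_le_two) ht.1)).trans_eq ?_
    rw [mul_left_comm, ← ENNReal.ofReal_mul (by positivity), one_div_mul_eq_div]
  convert truncPotential_mul_le hs₁ hs₂ hθ hq₁ hr hrR hM hfar (by positivity) hZM (by positivity)
    fun x₀ hx₀ => lintegral_potKernel_far_le_truncPotential (p := p₂) hs₂.le (by linarith) using 3
  rw [Real.rpow_add two_pos]
  ring

lemma rpow_measure_ball_mul_le_truncMaximal (hs₂ : 0 < s₂) (hq₂ : (q - p₂) * s₂ = -θ) (hr : 0 < r)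
    (hrR : ENNReal.ofReal r ≤ R) :
    μ (ball x (3 / 2 * r)) ^ s₂ * ENNReal.ofReal (r ^ (-(p₂ * s₂))) ≤
      ENNReal.ofReal ((3 / 2) ^ (q * s₂)) *
        (truncMaximal q (2 * R) μ x ^ s₂ * ENNReal.ofReal (r ^ (-θ))) := by
  have hmem : 3 / 2 * r ∈ truncRange (2 * R) := by
    refine ⟨by positivity, lt_of_lt_of_le ?_ (mul_le_mul_right hrR 2)⟩
    rw [← ENNReal.ofReal_ofNat, ← ENNReal.ofReal_mul zero_le_two]
    exact (ENNReal.ofReal_lt_ofReal_iff (by positivity)).2 (by linarith)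
  calc
    _ ≤ (truncMaximal q (2 * R) μ x * ENNReal.ofReal ((3 / 2 * r) ^ q)) ^ s₂ *
          ENNReal.ofReal (r ^ (-(p₂ * s₂))) := by
      gcongr
      exact measure_ball_le_truncMaximal_mul hmem
    _ = truncMaximal q (2 * R) μ x ^ s₂ *
          ENNReal.ofReal ((3 / 2) ^ (q * s₂) * (r ^ (q * s₂) * r ^ (-(p₂ * s₂)))) := by
      rw [ENNReal.mul_rpow_of_nonneg _ _ hs₂.le, ENNReal.ofReal_rpow_of_pos (by positivity),
        ← Real.rpow_mul (by positivity), Real.mul_rpow (by norm_num) hr.le, mul_assoc,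
        ← ENNReal.ofReal_mul (by positivity), mul_assoc]
    _ = _ := by
      rw [← Real.rpow_add hr, show q * s₂ + -(p₂ * s₂) = -θ by linarith,
        ENNReal.ofReal_mul (by positivity)]
      ring

lemma truncPotential_mul_rpow_measure_ball_le (hs₁ : 0 < s₁) (hs₂ : 0 < s₂) (hp₂ : 0 < p₂)
    (hθ : 0 < θ) (hq₁ : (q - p₁) * s₁ = θ) (hq₂ : (q - p₂) * s₂ = -θ)
    (hr : 0 < r) (hrR : ENNReal.ofReal r ≤ R) (hM : truncMaximal q (2 * R) μ x ^ (s₁ + s₂) ≤ L)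
    (hfar : HasSublevelPointNear p₁ s₁ p₂ s₂ R μ L r x)
    (hz : dist x z ≤ r / 8) :
    truncPotential p₁ s₁ R μ x *
        (μ (ball z (9 / 8 * r)) ^ s₂ * ENNReal.ofReal (r ^ (-(p₂ * s₂)))) ≤
      ENNReal.ofReal ((3 / 2) ^ (q * s₂) / θ + 2 ^ (p₁ * s₁) * (4 * 2 ^ (p₂ * s₂))) * L := by
  have hball (y : X) (hy : dist z y ≤ 3 / 8 * r) :
      μ (ball z (9 / 8 * r)) ^ s₂ * ENNReal.ofReal (r ^ (-(p₂ * s₂))) ≤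
        μ (ball y (3 / 2 * r)) ^ s₂ * ENNReal.ofReal (r ^ (-(p₂ * s₂))) := by
    gcongr
    exact ball_subset_ball' (by linarith)
  refine truncPotential_mul_le hs₁ hs₂ hθ hq₁ hr hrR hM hfar (by positivity) ?_ (by positivity)
    fun x₀ hx₀ => ?_
  · exact (hball x (by rw [dist_comm]; linarith)).trans
      (rpow_measure_ball_mul_le_truncMaximal hs₂ hq₂ hr hrR)
  · refine (hball x₀ ?_).trans (rpow_measure_ball_mul_le_truncPotential hp₂.le hs₂.le hr hrR)
    linarith [dist_triangle_left z x₀ x]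

lemma rpow_measure_ball_mul_lt_near {e lam a : ℝ} (hs₁ : 0 < s₁) (hs₂ : 0 < s₂) (hp₂ : 0 < p₂)
    (hθ : 0 < θ) (hq₁ : (q - p₁) * s₁ = θ) (hq₂ : (q - p₂) * s₂ = -θ)
    (hr : 0 < r) (hrR : ENNReal.ofReal r ≤ R) (he : 0 < e) (he1 : e ≤ 1) (hlam : 0 < lam)
    (hM : truncMaximal q (2 * R) μ x ^ (s₁ + s₂) ≤ ENNReal.ofReal (e * lam))
    (hfar : HasSublevelPointNear p₁ s₁ p₂ s₂ R μ (ENNReal.ofReal (e * lam)) r x)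
    (hz : dist x z ≤ r / 8) (ha : 1 + (1 / θ) ^ 2 + 2 ^ (p₁ * s₁ + p₂ * s₂) ≤ a)
    (hlarge : ENNReal.ofReal (a * lam) <
      truncPotential p₁ s₁ R μ x * truncPotential p₂ s₂ R μ x) :
    ENNReal.ofReal (((3 / 2) ^ (q * s₂) / θ + 2 ^ (p₁ * s₁) * (4 * 2 ^ (p₂ * s₂))) * e)⁻¹ *
        (μ (ball z (9 / 8 * r)) ^ s₂ * ENNReal.ofReal (r ^ (-(p₂ * s₂)))) <
      ∫⁻ t in Ioo 0 r, potKernel p₂ s₂ μ x t := by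
  set k := (3 / 2) ^ (q * s₂) / θ + 2 ^ (p₁ * s₁) * (4 * 2 ^ (p₂ * s₂))
  have hk : 0 < k := by positivity
  set b := (1 / θ) ^ 2 + 2 ^ (p₁ * s₁ + p₂ * s₂)
  have hb : 0 ≤ b := by positivity
  set T := μ (ball z (9 / 8 * r)) ^ s₂ * ENNReal.ofReal (r ^ (-(p₂ * s₂)))
  have hT : truncPotential p₁ s₁ R μ x * T ≤ ENNReal.ofReal k * ENNReal.ofReal (e * lam) :=
    truncPotential_mul_rpow_measure_ball_le hs₁ hs₂ hp₂ hθ hq₁ hq₂ hr hrR hM hfar hz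
  by_contra! hle
  refine hlarge.not_ge ?_
  calc
    _ ≤ truncPotential p₁ s₁ R μ x * (ENNReal.ofReal (k * e)⁻¹ * T) +
          truncPotential p₁ s₁ R μ x * ∫⁻ t in truncRange R ∩ Ici r, potKernel p₂ s₂ μ x t := by
      rw [← mul_add]
      gcongr
      exact (truncPotential_le_near_add_far r).trans (by gcongr)
    _ ≤ ENNReal.ofReal (k * e)⁻¹ * (ENNReal.ofReal k * ENNReal.ofReal (e * lam)) +
          ENNReal.ofReal b * ENNReal.ofReal (e * lam) := by
      rw [mul_left_comm]
      exact add_le_add (mul_le_mul_right hT _)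
        (truncPotential_mul_far_le hs₁ hs₂ hθ hq₁ hq₂ hr hrR hM hfar)
    _ = ENNReal.ofReal (lam + b * (e * lam)) := by
      rw [← ENNReal.ofReal_mul hk.le, ← ENNReal.ofReal_mul (by positivity),
        ← ENNReal.ofReal_mul hb, ← ENNReal.ofReal_add (by positivity) (by positivity)]
      congr 2
      field_simp
    _ ≤ ENNReal.ofReal (a * lam) := by
      gcongr
      nlinarith [mul_le_mul_of_nonneg_left (mul_le_of_le_one_left hlam.le he1) hb]

lemma IsAhlforsRegular.exists_good_lambda_of_subset_closedBall [TopologicalSpace.SeparableSpace X]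
    [OpensMeasurableSpace X] {d κ K : ℝ} (hν : IsAhlforsRegular ν d κ K) (hs₁ : 0 < s₁)
    (hs₂ : 0 < s₂) (hp₂ : 0 < p₂) (hp₂d : p₂ < d) (hθ : 0 < θ) (hq₁ : (q - p₁) * s₁ = θ)
    (hq₂ : (q - p₂) * s₂ = -θ) :
    ∃ A > 0, ∀ (μ : Measure X) {R : ℝ≥0∞} {S : Set X} {z : X} {r e lam a : ℝ},
      0 < r → ENNReal.ofReal r ≤ R → 0 < e → e ≤ 1 → 0 < lam →
      1 + (1 / θ) ^ 2 + 2 ^ (p₁ * s₁ + p₂ * s₂) ≤ a → S ⊆ closedBall z (r / 8) →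
      (∀ x ∈ S, truncMaximal q (2 * R) μ x ^ (s₁ + s₂) ≤ ENNReal.ofReal (e * lam) ∧
        HasSublevelPointNear p₁ s₁ p₂ s₂ R μ (ENNReal.ofReal (e * lam)) r x ∧
        ENNReal.ofReal (a * lam) <
          truncPotential p₁ s₁ R μ x * truncPotential p₂ s₂ R μ x) →
      ν S ≤ ENNReal.ofReal (A * e ^ (d / (p₂ * s₂)) * r ^ d) := by
  have hps : 0 < p₂ * s₂ := mul_pos hp₂ hs₂
  set k := (3 / 2) ^ (q * s₂) / θ + 2 ^ (p₁ * s₁) * (4 * 2 ^ (p₂ * s₂))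
  have hk : 0 < k := by positivity
  set c := 1 / ((d - p₂) * s₂) + 1 / (p₂ * s₂)
  have hc : 0 < c :=
    add_pos (one_div_pos.2 (mul_pos (sub_pos.2 hp₂d) hs₂)) (one_div_pos.2 hps)
  have hK := hν.upper_pos
  refine ⟨K * (5 ^ d * (c * k) ^ (d / (p₂ * s₂))), by positivity,
    fun μ R S z r e lam a hr hrR he he1 hlam ha hSz hS => ?_⟩
  -- The scale at which the Hedberg threshold `c * μ(U) ^ s₂ * δ ^ (-(p₂ * s₂))` of
  -- `measure_lt_lintegral_potKernel_le` is the lower bound of `rpow_measure_ball_mul_lt_near`.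
  set δ := (c * (k * e)) ^ (p₂ * s₂)⁻¹ * r
  have hδ : δ ^ (-(p₂ * s₂)) = c⁻¹ * (k * e)⁻¹ * r ^ (-(p₂ * s₂)) := by
    rw [Real.mul_rpow (by positivity) hr.le, ← Real.rpow_mul (by positivity), mul_neg,
      inv_mul_cancel₀ hps.ne', Real.rpow_neg_one, mul_inv]
  have hU : ∀ x ∈ S, ball x r ⊆ ball z (9 / 8 * r) := fun x hx =>
    ball_subset_ball' (by linarith [mem_closedBall.1 (hSz hx)])
  calc
    ν S ≤ ν {x ∈ S | ENNReal.ofReal c * (μ (ball z (9 / 8 * r)) ^ s₂ *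
          ENNReal.ofReal (δ ^ (-(p₂ * s₂)))) < ∫⁻ t in Ioo 0 r, potKernel p₂ s₂ μ x t} := by
      refine measure_mono fun x hx => ⟨hx, ?_⟩
      obtain ⟨hM, hfar, hlarge⟩ := hS x hx
      have hlt : ENNReal.ofReal (k * e)⁻¹ * _ < _ := rpow_measure_ball_mul_lt_near hs₁ hs₂ hp₂ hθ
        hq₁ hq₂ hr hrR he he1 hlam hM hfar (hSz hx) ha hlarge
      convert hlt using 1
      rw [mul_left_comm, ← ENNReal.ofReal_mul hc.le, mul_left_comm (ENNReal.ofReal _),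
        ← ENNReal.ofReal_mul (by positivity), hδ]
      congr 2
      field_simp
    _ ≤ ENNReal.ofReal (K * (5 * δ) ^ d) :=
      hν.measure_lt_lintegral_potKernel_le hp₂ hp₂d hs₂ (by positivity) hU
    _ = _ := by
      rw [Real.mul_rpow (by norm_num) (by positivity), Real.mul_rpow (by positivity) hr.le,
        ← Real.rpow_mul (by positivity), ← mul_assoc c, Real.mul_rpow (by positivity) he.le,
        inv_mul_eq_div]
      congr 1
      ring

lemma exists_ball_subset_superlevelSet {E : Set X} (hs₁ : 0 < s₁) (hs₂ : 0 < s₂) (hR : 0 < R)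
    (hE : E = {x | L < truncPotential p₁ s₁ (2 * R) μ x * truncPotential p₂ s₂ (2 * R) μ x})
    (hE' : Eᶜ.Nonempty) (hx : x ∈ E) :
    ∃ ρ, 0 < ρ ∧ ball x ρ ⊆ E ∧ ENNReal.ofReal (40 * ρ) ≤ R ∧
      ∀ y ∈ closedBall x (5 * ρ), HasSublevelPointNear p₁ s₁ p₂ s₂ R μ L (40 * ρ) y := by
  have hEo : IsOpen E :=
    hE ▸ (lowerSemicontinuous_truncPotential_mul hs₁.le hs₂.le).isOpen_preimage L
  obtain ⟨ρ, hρ, hball, hρR, hfar⟩ :=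
    exists_radius_of_isOpen hEo hE' hx hR (k := 40) (by norm_num)
  refine ⟨ρ, hρ, hball, hρR, fun y hy => hfar.imp_right fun ⟨x₀, hx₀, hdist⟩ => ⟨x₀, ?_, ?_⟩⟩
  · linarith [dist_triangle y x x₀, mem_closedBall.1 hy]
  · subst hE
    exact not_lt.1 hx₀

lemma IsAhlforsRegular.exists_good_lambda [TopologicalSpace.SeparableSpace X]
    [OpensMeasurableSpace X] {d κ K : ℝ} (hν : IsAhlforsRegular ν d κ K) (hs₁ : 0 < s₁)
    (hs₂ : 0 < s₂) (hp₂ : 0 < p₂) (hp₂d : p₂ < d) (hθ : 0 < θ) (hq₁ : (q - p₁) * s₁ = θ)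
    (hq₂ : (q - p₂) * s₂ = -θ) :
    ∃ C > 0, ∀ (μ : Measure X) {R : ℝ≥0∞} {e lam a : ℝ}, 0 < R → 0 < e → e ≤ 1 → 0 < lam →
      1 + (1 / θ) ^ 2 + 2 ^ (p₁ * s₁ + p₂ * s₂) ≤ a →
      ν ({x | ENNReal.ofReal (a * lam) <
            truncPotential p₁ s₁ R μ x * truncPotential p₂ s₂ R μ x} ∩
          {x | truncMaximal q (2 * R) μ x ^ (s₁ + s₂) ≤ ENNReal.ofReal (e * lam)}) ≤
        ENNReal.ofReal (C * e ^ (d / (p₂ * s₂))) * ν {x | ENNReal.ofReal (e * lam) <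
          truncPotential p₁ s₁ (2 * R) μ x * truncPotential p₂ s₂ (2 * R) μ x} := by
  obtain ⟨A, hA, hlocal⟩ := hν.exists_good_lambda_of_subset_closedBall hs₁ hs₂ hp₂ hp₂d hθ hq₁ hq₂
  have hκ := hν.lower_pos
  have hd : 0 < d := hp₂.trans hp₂d
  refine ⟨A * 40 ^ d / κ, by positivity, fun μ R e lam a hR he he1 hlam ha => ?_⟩
  set E := {x | ENNReal.ofReal (e * lam) <
    truncPotential p₁ s₁ (2 * R) μ x * truncPotential p₂ s₂ (2 * R) μ x}
  obtain hEtop | hEfin := eq_or_ne (ν E) ⊤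
  · have hC : 0 < A * 40 ^ d / κ * e ^ (d / (p₂ * s₂)) := by positivity
    simp [hEtop, ENNReal.mul_top, hC]
  obtain ⟨B, hB⟩ := hν.exists_radius_le hd hEfin
  refine measure_le_mul_measure_of_forall_exists_ball (B := B) fun x hx => ?_
  have hR2 : R ≤ 2 * R := le_mul_of_one_le_left' one_le_two
  have : Nonempty X := ⟨x⟩
  have hE' : Eᶜ.Nonempty := nonempty_compl.2 fun h => hEfin (h ▸ hν.measure_univ hd)
  have hea : e ≤ a := by
    linarith [sq_nonneg (1 / θ), Real.rpow_pos_of_pos two_pos (p₁ * s₁ + p₂ * s₂)]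
  have hxE : x ∈ E :=
    (ENNReal.ofReal_le_ofReal (mul_le_mul_of_nonneg_right hea hlam.le)).trans_lt hx.1 |>.trans_le
      (mul_le_mul' (truncPotential_mono_trunc hR2) (truncPotential_mono_trunc hR2))
  obtain ⟨ρ, hρ, hball, hρR, hfar⟩ := exists_ball_subset_superlevelSet hs₁ hs₂ hR rfl hE' hxE
  refine ⟨ρ, hρ, hB x ρ hρ hball, hball, ?_⟩
  calc
    _ ≤ ENNReal.ofReal (A * e ^ (d / (p₂ * s₂)) * (40 * ρ) ^ d) :=
      hlocal μ (by positivity) hρR he he1 hlam ha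
        (inter_subset_right.trans (closedBall_subset_closedBall (by linarith)))
        fun y hy => ⟨hy.1.2, hfar y hy.2, hy.1.1⟩
    _ = ENNReal.ofReal (A * 40 ^ d / κ * e ^ (d / (p₂ * s₂))) * ENNReal.ofReal (κ * ρ ^ d) := by
      rw [← ENNReal.ofReal_mul (by positivity), Real.mul_rpow (by norm_num) hρ.le]
      congr 1
      field_simp
    _ ≤ _ := by
      gcongr
      exact hν.le_measure_ball x hρ

end GoodLambda

theorem stmt11_general {X : Type*} [PseudoMetricSpace X] [MeasurableSpace X]
    [TopologicalSpace.SeparableSpace X] [OpensMeasurableSpace X] {ν : Measure X}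
    {d κ K α₁ α₂ s₁ s₂ : ℝ} (hν : IsAhlforsRegular ν d κ K) (hs₁ : 0 < s₁) (hs₂ : 0 < s₂)
    (h₂ : 0 < α₂) (h₁₂ : α₂ < α₁) (h₂d : α₂ < d) :
    ∃ C > 0, ∀ (μ : Measure X) {R : ℝ≥0∞}, 0 < R → ∀ {ε : ℝ}, 0 < ε → ε ≤ 1 →
      ∀ {lam : ℝ}, 0 < lam → ∀ {a : ℝ}, 1 + ((s₁ + s₂) / (s₁ * s₂ * (α₁ - α₂))) ^ 2 +
        2 ^ ((d - α₁) * s₁ + (d - α₂) * s₂) ≤ a →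
      ν ({x | ENNReal.ofReal (a * lam) <
            truncPotential (d - α₁) s₁ R μ x * truncPotential (d - α₂) s₂ R μ x} ∩
          {x | truncMaximal (d - (α₁ * s₁ + α₂ * s₂) / (s₁ + s₂)) (2 * R) μ x ^ (s₁ + s₂) ≤
            ENNReal.ofReal (ε * lam)}) ≤
        ENNReal.ofReal (C * ε ^ (d / (2 * s₂ * (d - α₂)))) *
          ν {x | ENNReal.ofReal (ε ^ (1 / 2 : ℝ) * lam) <
            truncPotential (d - α₁) s₁ (2 * R) μ x * truncPotential (d - α₂) s₂ (2 * R) μ x} := by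
  have hθ : 0 < s₁ * s₂ * (α₁ - α₂) / (s₁ + s₂) :=
    div_pos (mul_pos (mul_pos hs₁ hs₂) (sub_pos.2 h₁₂)) (add_pos hs₁ hs₂)
  obtain ⟨C, hC, h⟩ := hν.exists_good_lambda (p₁ := d - α₁) (p₂ := d - α₂)
    (q := d - (α₁ * s₁ + α₂ * s₂) / (s₁ + s₂))
    hs₁ hs₂ (sub_pos.2 h₂d) (sub_lt_self d h₂) hθ (by field_simp; ring) (by field_simp; ring)
  refine ⟨C, hC, fun μ R hR ε hε hε1 lam hlam a ha => ?_⟩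
  have hεe : ε ≤ ε ^ (1 / 2 : ℝ) := by
    simpa using Real.rpow_le_rpow_of_exponent_ge hε hε1 (show (1 / 2 : ℝ) ≤ 1 by norm_num)
  have hexp : (ε ^ (1 / 2 : ℝ)) ^ (d / ((d - α₂) * s₂)) = ε ^ (d / (2 * s₂ * (d - α₂))) := by
    rw [← Real.rpow_mul hε.le, div_mul_div_comm, one_mul]
    congr 2
    ring
  have he1 : ε ^ (1 / 2 : ℝ) ≤ 1 := Real.rpow_le_one hε.le hε1 (by norm_num)
  rw [← one_div_div] at ha
  rw [← hexp]
  have hlevel : ENNReal.ofReal (ε * lam) ≤ ENNReal.ofReal (ε ^ (1 / 2 : ℝ) * lam) :=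
    ENNReal.ofReal_le_ofReal (mul_le_mul_of_nonneg_right hεe hlam.le)
  exact (measure_mono (inter_subset_inter_right _ fun x hx => le_trans hx hlevel)).trans
    (h μ hR (Real.rpow_pos_of_pos hε _) he1 hlam ha)

/-- Good-λ type estimate for products of `L`-potentials with
respect to the fractional maximal function. -/
theorem stmt11 (N : ℕ) (α1 α2 s1 s2 : ℝ) (hs1 : 0 < s1) (hs2 : 0 < s2)
    (h2 : 0 < α2) (h12 : α2 < α1) (h1N : α1 < (N : ℝ)) :
    ∃ C > 0, ∃ ε0 > 0, ∀ μ : Measure (Euc N), IsLocallyFiniteMeasure μ →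
      ∀ R : ℝ≥0∞, 0 < R → ∀ ε : ℝ, 0 < ε → ε < ε0 → ∀ lam : ℝ, 0 < lam →
      volume {x : Euc N |
          ENNReal.ofReal (ε ^ ((1 : ℝ) / 2) * lam) <
            Lpot α1 s1 (2 * R) μ x * Lpot α2 s2 (2 * R) μ x} < ⊤ →
      volume
          ({x : Euc N |
              ENNReal.ofReal
                  ((1 + ((s1 + s2) / (s1 * s2 * (α1 - α2))) ^ 2 +
                      (2 : ℝ) ^ (((N : ℝ) - α1) * s1 + ((N : ℝ) - α2) * s2 + 1)) * lam) <
                Lpot α1 s1 R μ x * Lpot α2 s2 R μ x} ∩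
            {x : Euc N |
              (fracMax ((α1 * s1 + α2 * s2) / (s1 + s2)) (2 * R) μ x) ^ (s1 + s2) ≤
                ENNReal.ofReal (ε * lam)}) ≤
        ENNReal.ofReal (C * ε ^ ((N : ℝ) / (2 * s2 * ((N : ℝ) - α2)))) *
          volume {x : Euc N |
            ENNReal.ofReal (ε ^ ((1 : ℝ) / 2) * lam) <
              Lpot α1 s1 (2 * R) μ x * Lpot α2 s2 (2 * R) μ x} := by
  obtain ⟨C, hC, h⟩ := stmt11_general (isAhlforsRegular_addHaar (volume : Measure (Euc N)))
    hs1 hs2 h2 h12 (by simpa using h12.trans h1N)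
  rw [finrank_euclideanSpace_fin] at h
  exact ⟨C, hC, 1, one_pos, fun μ _ R hR ε hε hε1 lam hlam _ =>
    h μ hR hε hε1.le hlam (by gcongr 1 + _ + 2 ^ ?_ <;> linarith)⟩
end
end

section
/- Let 0<α<N and s>0. There exists a constant C=C(N,α,s)>0 such that for every nonnegative bounded Radon measure ω on ℝ^N and every λ>0, the Lebesgue measure of the set {x∈ℝ^N : L_{α,s}[ω](x) > λ} is at most C·((ω(ℝ^N))^s/λ)^{N/(s(N−α))}. -/
open MeasureTheory Metric Set Filter Bornology
open scoped ENNReal NNReal Topology RealInnerProductSpace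

noncomputable section

/-!
Let `M` be the centred maximal function of `ω` and `m` its total mass. A ball of radius `t` has mass
at most `min (M t^N) m`, and integrating this bound gives Hedberg's inequality
`L_{α,s}[ω] ≤ c (M ^ (1 - α/N) m ^ (α/N)) ^ s`. Hence `L_{α,s}[ω] > λ` forces `M` to exceed a
multiple of a power of `λ`, and the Vitali covering lemma bounds the measure of the set where this
happens. There the upper bound `K r^N` for the measure of a ball of radius `r` is applied to the
enlarged balls, while `ω` controls `r^N` on the disjoint ones.
-/

section PowerIntegrals

variable {p δ : ℝ}

theorem lintegral_Ioc_zero_rpow_sub_one (hp : 0 < p) (hδ : 0 < δ) :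
    ∫⁻ t in Ioc 0 δ, ENNReal.ofReal (t ^ (p - 1)) = ENNReal.ofReal (δ ^ p / p) := by
  rw [← ofReal_integral_eq_lintegral_ofReal]
  · rw [← intervalIntegral.integral_of_le hδ.le, integral_rpow (Or.inl (by linarith)),
      sub_add_cancel, Real.zero_rpow hp.ne', sub_zero]
  · exact (intervalIntegrable_iff_integrableOn_Ioc_of_le hδ.le).1
      (intervalIntegral.intervalIntegrable_rpow' (by linarith))
  · exact ae_restrict_of_forall_mem measurableSet_Ioc fun t ht => Real.rpow_nonneg ht.1.le _

theorem lintegral_Ioi_rpow_neg_sub_one (hp : 0 < p) (hδ : 0 < δ) :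
    ∫⁻ t in Ioi δ, ENNReal.ofReal (t ^ (-p - 1)) = ENNReal.ofReal (δ ^ (-p) / p) := by
  rw [← ofReal_integral_eq_lintegral_ofReal]
  · rw [integral_Ioi_rpow_of_lt (by linarith) hδ, sub_add_cancel, neg_div_neg_eq]
  · exact integrableOn_Ioi_rpow_of_lt (by linarith) hδ
  · exact ae_restrict_of_forall_mem measurableSet_Ioi fun t ht =>
      Real.rpow_nonneg (hδ.trans ht).le _

end PowerIntegrals

section PowerIdentities

variable {d β s : ℝ}

/-- In Hedberg's inequality `a` is the maximal function and `b` the total mass; `(b / a) ^ d⁻¹` is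
the radius `t` at which the two bounds `a * t ^ d` and `b` for the mass of a ball coincide. -/
theorem rpow_mul_add_rpow_mul_of_radius_eq {a b : ℝ} (ha : 0 < a) (hb : 0 < b) (hβ : β ≠ 0)
    (hd : d ≠ 0) (hs : s ≠ 0) (hβd : d - β ≠ 0) :
    a ^ s * (((b / a) ^ d⁻¹) ^ (s * (d - β)) / (s * (d - β))) +
        b ^ s * (((b / a) ^ d⁻¹) ^ (-(s * β)) / (s * β)) =
      d / (s * β * (d - β)) * (a ^ (s * β / d) * b ^ (s * (d - β) / d)) := by
  obtain ⟨δ, hδ⟩ : ∃ δ, δ = (b / a) ^ d⁻¹ := ⟨_, rfl⟩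
  have hδ0 : 0 < δ := hδ ▸ by positivity
  have hb_eq : b = a * δ ^ d := by
    rw [hδ, Real.rpow_inv_rpow (by positivity) hd, mul_div_cancel₀ _ ha.ne']
  have hfar : b ^ s * δ ^ (-(s * β)) = a ^ s * δ ^ (s * (d - β)) := by
    rw [hb_eq, Real.mul_rpow ha.le (by positivity), ← Real.rpow_mul hδ0.le, mul_assoc,
      ← Real.rpow_add hδ0]
    ring_nf
  have hprod : a ^ (s * β / d) * b ^ (s * (d - β) / d) = a ^ s * δ ^ (s * (d - β)) := by
    rw [hb_eq, Real.mul_rpow ha.le (by positivity), ← Real.rpow_mul hδ0.le, ← mul_assoc,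
      ← Real.rpow_add ha]
    congr 2
    · field_simp
      ring
    · field_simp
  rw [← hδ, hprod, ← mul_div_assoc, ← mul_div_assoc, hfar]
  field_simp
  ring

theorem rpow_sub_div_mul_self (hβ : 0 < β) (hβd : β ≤ d) (hs : s ≠ 0) (m : ℝ≥0∞) :
    m ^ ((d - β) / β) * m = (m ^ s) ^ (d / (s * β)) := by
  nth_rw 2 [← ENNReal.rpow_one m]
  rw [← ENNReal.rpow_mul, ← ENNReal.rpow_add_of_nonneg _ _
    (div_nonneg (sub_nonneg.2 hβd) hβ.le) zero_le_one]
  congr 1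
  field_simp
  ring

theorem le_rpow_inv_toReal_div {a m : ℝ≥0∞} {r : ℝ} (ha : a ≠ 0) (hm : m ≠ ⊤) (hd : 0 < d)
    (hr : 0 ≤ r) (h : a * ENNReal.ofReal (r ^ d) ≤ m) : r ≤ (m / a).toReal ^ d⁻¹ := by
  rw [Real.le_rpow_inv_iff_of_pos hr ENNReal.toReal_nonneg hd,
    ← ENNReal.ofReal_le_iff_le_toReal (ENNReal.div_ne_top hm ha),
    ENNReal.le_div_iff_mul_le (.inl ha) (.inr hm), mul_comm]
  exact h

end PowerIdentities

section BallPotential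

variable {X : Type*} [PseudoMetricSpace X] [MeasurableSpace X] {d β s : ℝ}

/-- The potential `∫₀^∞ (ν(B(x,t)) / t^β)^s dt/t` of a measure on a metric space. The potential
`L_{α,s}` on `ℝ^N` is the case `β = N - α`. -/
def ballPotential (β s : ℝ) (ν : Measure X) (x : X) : ℝ≥0∞ :=
  ∫⁻ t in Ioi 0, (ν (ball x t) / ENNReal.ofReal (t ^ β)) ^ s / ENNReal.ofReal t

/-- The centred maximal function `sup_{t > 0} ν(B(x,t)) / t^d` of dimension `d`. It is normalised by
`t^d` instead of the volume of the ball, so that it involves no reference measure. -/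
def ballMaximal (d : ℝ) (ν : Measure X) (x : X) : ℝ≥0∞ :=
  ⨆ (t : ℝ) (_ : 0 < t), ν (ball x t) / ENNReal.ofReal (t ^ d)

theorem measure_ball_le_ballMaximal_mul (d : ℝ) (ν : Measure X) (x : X) {t : ℝ} (ht : 0 < t) :
    ν (ball x t) ≤ ballMaximal d ν x * ENNReal.ofReal (t ^ d) := by
  have htd : 0 < t ^ d := Real.rpow_pos_of_pos ht d
  rw [← ENNReal.div_le_iff (ENNReal.ofReal_pos.2 htd).ne' ENNReal.ofReal_ne_top]
  exact le_iSup₂_of_le t ht le_rfl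

theorem exists_mul_lt_measure_ball_of_lt_ballMaximal {ν : Measure X} {x : X} {a : ℝ≥0∞}
    (h : a < ballMaximal d ν x) : ∃ t > 0, a * ENNReal.ofReal (t ^ d) < ν (ball x t) := by
  simp only [ballMaximal, lt_iSup_iff] at h
  obtain ⟨t, ht, hlt⟩ := h
  have htd : 0 < t ^ d := Real.rpow_pos_of_pos ht d
  exact ⟨t, ht, (ENNReal.lt_div_iff_mul_lt (.inl (ENNReal.ofReal_pos.2 htd).ne')
    (.inl ENNReal.ofReal_ne_top)).1 hlt⟩

theorem setLIntegral_measure_ball_div_rpow_le {γ : ℝ} (hs : 0 ≤ s) {ν : Measure X} {x : X}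
    {a : ℝ≥0∞} {S : Set ℝ} (hS : MeasurableSet S) (hpos : S ⊆ Ioi 0)
    (h : ∀ t ∈ S, ν (ball x t) ≤ a * ENNReal.ofReal (t ^ γ)) :
    ∫⁻ t in S, (ν (ball x t) / ENNReal.ofReal (t ^ β)) ^ s / ENNReal.ofReal t ≤
      a ^ s * ∫⁻ t in S, ENNReal.ofReal (t ^ (s * (γ - β) - 1)) := by
  rw [← lintegral_const_mul _ (by fun_prop)]
  refine setLIntegral_mono' hS fun t ht => ?_
  have ht0 : 0 < t := hpos ht
  calc (ν (ball x t) / ENNReal.ofReal (t ^ β)) ^ s / ENNReal.ofReal t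
      ≤ (a * ENNReal.ofReal (t ^ γ) / ENNReal.ofReal (t ^ β)) ^ s / ENNReal.ofReal t := by
        gcongr
        exact h t ht
    _ = a ^ s * ENNReal.ofReal (t ^ (s * (γ - β) - 1)) := by
        rw [mul_div_assoc, ← ENNReal.ofReal_div_of_pos (Real.rpow_pos_of_pos ht0 β),
          ← Real.rpow_sub ht0, ENNReal.mul_rpow_of_nonneg _ _ hs,
          ENNReal.ofReal_rpow_of_nonneg (Real.rpow_nonneg ht0.le _) hs, ← Real.rpow_mul ht0.le,
          mul_div_assoc, ← ENNReal.ofReal_div_of_pos ht0, Real.rpow_sub_one ht0.ne', mul_comm s]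

theorem ballPotential_le_add (hβ : 0 < β) (hβd : β < d) (hs : 0 < s) (ν : Measure X) (x : X)
    {δ : ℝ} (hδ : 0 < δ) :
    ballPotential β s ν x ≤
      ballMaximal d ν x ^ s * ENNReal.ofReal (δ ^ (s * (d - β)) / (s * (d - β))) +
        ν univ ^ s * ENNReal.ofReal (δ ^ (-(s * β)) / (s * β)) := by
  rw [ballPotential, ← Ioc_union_Ioi_eq_Ioi hδ.le]
  refine (lintegral_union_le _ _ _).trans (add_le_add ?near ?far)
  case near =>
    rw [← lintegral_Ioc_zero_rpow_sub_one (mul_pos hs (sub_pos.2 hβd)) hδ]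
    exact setLIntegral_measure_ball_div_rpow_le hs.le measurableSet_Ioc Ioc_subset_Ioi_self
      fun t ht => measure_ball_le_ballMaximal_mul d ν x ht.1
  case far =>
    rw [← lintegral_Ioi_rpow_neg_sub_one (mul_pos hs hβ) hδ, ← mul_neg, ← zero_sub β]
    refine setLIntegral_measure_ball_div_rpow_le hs.le measurableSet_Ioi (Ioi_subset_Ioi hδ.le)
      fun t _ => ?_
    simpa using measure_mono (subset_univ (ball x t))

theorem ballPotential_eq_zero_of_ballMaximal_eq_zero (hs : 0 < s) {ν : Measure X} {x : X}
    (h : ballMaximal d ν x = 0) : ballPotential β s ν x = 0 := by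
  have hball : ∀ t > 0, ν (ball x t) = 0 := fun t ht => by
    simpa [h] using measure_ball_le_ballMaximal_mul d ν x ht
  refine setLIntegral_eq_zero measurableSet_Ioi fun t ht => ?_
  simp [hball t ht, hs]

/-- Hedberg's inequality. -/
theorem ballPotential_le_ballMaximal_rpow_mul (hβ : 0 < β) (hβd : β < d) (hs : 0 < s)
    (ν : Measure X) (x : X) :
    ballPotential β s ν x ≤ ENNReal.ofReal (d / (s * β * (d - β))) *
      (ballMaximal d ν x ^ (s * β / d) * ν univ ^ (s * (d - β) / d)) := by
  have hd : 0 < d := hβ.trans hβd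
  have hα : 0 < d - β := sub_pos.2 hβd
  rcases eq_or_ne (ballMaximal d ν x) 0 with hM0 | hM0
  · simp [ballPotential_eq_zero_of_ballMaximal_eq_zero hs hM0]
  rcases eq_or_ne (ν univ) 0 with hm0 | hm0
  · simp [Measure.measure_univ_eq_zero.1 hm0, ballPotential, hs]
  by_cases htop : ballMaximal d ν x = ⊤ ∨ ν univ = ⊤
  · refine le_top.trans_eq (Eq.symm ?_)
    have hc : ENNReal.ofReal (d / (s * β * (d - β))) ≠ 0 :=
      (ENNReal.ofReal_pos.2 (by positivity)).ne'
    have he₁ : 0 < s * β / d := by positivity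
    have he₂ : 0 < s * (d - β) / d := by positivity
    rcases htop with h | h <;>
      simp [h, hc, hM0, hm0, he₁, he₂, he₁.not_gt, he₂.not_gt]
  push Not at htop
  obtain ⟨a, ha, hM⟩ : ∃ a : ℝ, 0 < a ∧ ENNReal.ofReal a = ballMaximal d ν x :=
    ⟨_, ENNReal.toReal_pos hM0 htop.1, ENNReal.ofReal_toReal htop.1⟩
  obtain ⟨b, hb, hm⟩ : ∃ b : ℝ, 0 < b ∧ ENNReal.ofReal b = ν univ :=
    ⟨_, ENNReal.toReal_pos hm0 htop.2, ENNReal.ofReal_toReal htop.2⟩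
  have hsplit := ballPotential_le_add hβ hβd hs ν x (δ := (b / a) ^ d⁻¹) (by positivity)
  rw [← hM, ← hm, ENNReal.ofReal_rpow_of_pos ha, ENNReal.ofReal_rpow_of_pos hb,
    ← ENNReal.ofReal_mul (by positivity), ← ENNReal.ofReal_mul (by positivity),
    ← ENNReal.ofReal_add (by positivity) (by positivity),
    rpow_mul_add_rpow_mul_of_radius_eq ha hb hβ.ne' hd.ne' hs.ne' hα.ne'] at hsplit
  rwa [← hM, ← hm, ENNReal.ofReal_rpow_of_pos ha, ENNReal.ofReal_rpow_of_pos hb,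
    ← ENNReal.ofReal_mul (by positivity), ← ENNReal.ofReal_mul (by positivity)]

theorem ballPotential_rpow_le (hβ : 0 < β) (hβd : β < d) (hs : 0 < s) (ν : Measure X) (x : X) :
    ballPotential β s ν x ^ (d / (s * β)) ≤
      ENNReal.ofReal (d / (s * β * (d - β))) ^ (d / (s * β)) * ν univ ^ ((d - β) / β) *
        ballMaximal d ν x := by
  have hd : 0 < d := hβ.trans hβd
  have hp : 0 ≤ d / (s * β) := by positivity
  refine (ENNReal.rpow_le_rpow (ballPotential_le_ballMaximal_rpow_mul hβ hβd hs ν x) hp).trans_eq ?_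
  rw [ENNReal.mul_rpow_of_nonneg _ _ hp, ENNReal.mul_rpow_of_nonneg _ _ hp, ← ENNReal.rpow_mul,
    ← ENNReal.rpow_mul, show s * β / d * (d / (s * β)) = 1 by field_simp,
    show s * (d - β) / d * (d / (s * β)) = (d - β) / β by field_simp, ENNReal.rpow_one,
    mul_comm (ballMaximal d ν x), ← mul_assoc]

variable {μ : Measure X} {K : ℝ≥0}

theorem mul_measure_ball_five_mul_le
    (hμ : ∀ x, ∀ r > 0, μ (ball x r) ≤ K * ENNReal.ofReal (r ^ d)) {ν : Measure X} {a : ℝ≥0∞}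
    {x : X} {r : ℝ} (hr : 0 < r) (h : a * ENNReal.ofReal (r ^ d) ≤ ν (ball x r)) :
    a * μ (ball x (5 * r)) ≤ ENNReal.ofReal (5 ^ d) * K * ν (ball x r) :=
  calc a * μ (ball x (5 * r)) ≤ a * (K * ENNReal.ofReal ((5 * r) ^ d)) := by
        gcongr
        exact hμ x _ (by positivity)
    _ = ENNReal.ofReal (5 ^ d) * K * (a * ENNReal.ofReal (r ^ d)) := by
        rw [Real.mul_rpow (by norm_num) hr.le, ENNReal.ofReal_mul (by positivity)]
        ring
    _ ≤ ENNReal.ofReal (5 ^ d) * K * ν (ball x r) := by gcongr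

variable [OpensMeasurableSpace X]

theorem exists_countable_disjoint_balls_covering (ν : Measure X) [SFinite ν]
    {S : Set X} {r : X → ℝ} {R : ℝ} (hrR : ∀ x ∈ S, r x ≤ R) (hr : ∀ x ∈ S, 0 < r x)
    (hν : ∀ x ∈ S, 0 < ν (ball x (r x))) :
    ∃ u ⊆ S, u.Countable ∧ u.PairwiseDisjoint (fun x => ball x (r x)) ∧
      S ⊆ ⋃ x ∈ u, ball x (5 * r x) := by
  obtain ⟨u, huS, hdisj, hcov⟩ :=
    Vitali.exists_disjoint_subfamily_covering_enlargement_ball S id r R hrR 5 (by norm_num)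
  refine ⟨u, huS, ?_, hdisj, fun x hx => ?_⟩
  · have hcount := Measure.countable_meas_pos_of_disjoint_iUnion (μ := ν)
      (fun x : u => measurableSet_ball) (hdisj.subtype _ _)
    have huniv : {x : u | 0 < ν (ball (x : X) (r x))} = univ :=
      eq_univ_of_forall fun x => hν x (huS x.2)
    exact countable_univ_iff.1 (huniv ▸ hcount)
  · obtain ⟨y, hy, hxy⟩ := hcov x hx
    exact mem_biUnion hy (hxy (mem_ball_self (hr x hx)))

theorem mul_measure_lt_ballMaximal_le (hd : 0 < d)
    (hμ : ∀ x, ∀ r > 0, μ (ball x r) ≤ K * ENNReal.ofReal (r ^ d))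
    (ν : Measure X) [IsFiniteMeasure ν] (a : ℝ≥0∞) :
    a * μ {x | a < ballMaximal d ν x} ≤ ENNReal.ofReal (5 ^ d) * K * ν univ := by
  rcases eq_or_ne a 0 with rfl | ha
  · simp
  set S := {x | a < ballMaximal d ν x}
  choose! r hr0 hr using fun x (hx : x ∈ S) => exists_mul_lt_measure_ball_of_lt_ballMaximal hx
  have hbound : ∀ x ∈ S, r x ≤ (ν univ / a).toReal ^ d⁻¹ := fun x hx =>
    le_rpow_inv_toReal_div ha (measure_ne_top ν _) hd (hr0 x hx).le
      ((hr x hx).le.trans (measure_mono (subset_univ _)))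
  obtain ⟨u, huS, hcount, hdisj, hcov⟩ := exists_countable_disjoint_balls_covering ν hbound hr0
    fun x hx => bot_le.trans_lt (hr x hx)
  calc a * μ S ≤ a * ∑' x : u, μ (ball (x : X) (5 * r x)) := by
        gcongr
        exact (measure_mono hcov).trans (measure_biUnion_le μ hcount _)
    _ ≤ ∑' x : u, ENNReal.ofReal (5 ^ d) * K * ν (ball (x : X) (r x)) := by
        rw [← ENNReal.tsum_mul_left]
        exact ENNReal.tsum_le_tsum fun x =>
          mul_measure_ball_five_mul_le hμ (hr0 x (huS x.2)) (hr x (huS x.2)).le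
    _ ≤ ENNReal.ofReal (5 ^ d) * K * ν univ := by
        rw [ENNReal.tsum_mul_left]
        gcongr
        exact (tsum_meas_le_meas_iUnion_of_disjoint ν (fun _ => measurableSet_ball)
          (hdisj.subtype _ _)).trans (measure_mono (subset_univ _))

theorem rpow_mul_measure_lt_ballPotential_le (hβ : 0 < β) (hβd : β < d) (hs : 0 < s)
    (hμ : ∀ x, ∀ r > 0, μ (ball x r) ≤ K * ENNReal.ofReal (r ^ d))
    (ν : Measure X) [IsFiniteMeasure ν] (a : ℝ≥0∞) :
    a ^ (d / (s * β)) * μ {x | a < ballPotential β s ν x} ≤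
      ENNReal.ofReal (5 ^ d) * K * ENNReal.ofReal (d / (s * β * (d - β))) ^ (d / (s * β)) *
        (ν univ ^ s) ^ (d / (s * β)) := by
  rcases eq_or_ne ν 0 with rfl | hν
  · simp [ballPotential, hs]
  have hd : 0 < d := hβ.trans hβd
  have : 0 < d - β := sub_pos.2 hβd
  have hp : 0 < d / (s * β) := by positivity
  have hm0 : ν univ ≠ 0 := by simpa using hν
  set B := ENNReal.ofReal (d / (s * β * (d - β))) ^ (d / (s * β)) * ν univ ^ ((d - β) / β) with hB
  have hB0 : B ≠ 0 := mul_ne_zero (ENNReal.rpow_pos (ENNReal.ofReal_pos.2 (by positivity))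
    ENNReal.ofReal_ne_top).ne' (ENNReal.rpow_pos hm0.bot_lt (measure_ne_top ν _)).ne'
  have hBtop : B ≠ ⊤ := ENNReal.mul_ne_top (ENNReal.rpow_ne_top_of_nonneg hp.le
    ENNReal.ofReal_ne_top) (ENNReal.rpow_ne_top_of_nonneg (by positivity) (measure_ne_top ν _))
  have hsub : {x | a < ballPotential β s ν x} ⊆ {x | a ^ (d / (s * β)) / B < ballMaximal d ν x} :=
    fun x hx => by
      refine (ENNReal.div_lt_iff (.inl hB0) (.inl hBtop)).2 ?_
      rw [mul_comm _ B]
      exact (ENNReal.rpow_lt_rpow hx hp).trans_le (ballPotential_rpow_le hβ hβd hs ν x)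
  calc a ^ (d / (s * β)) * μ {x | a < ballPotential β s ν x}
      = B * (a ^ (d / (s * β)) / B * μ {x | a < ballPotential β s ν x}) := by
        rw [← mul_assoc, ENNReal.mul_div_cancel hB0 hBtop]
    _ ≤ B * (ENNReal.ofReal (5 ^ d) * K * ν univ) := by
        refine mul_le_mul_right ?_ B
        exact (mul_le_mul_right (measure_mono hsub) _).trans
          (mul_measure_lt_ballMaximal_le hd hμ ν _)
    _ = _ := by
        rw [← rpow_sub_div_mul_self hβ hβd.le hs.ne', hB]
        ring

theorem stmt12_general (hβ : 0 < β) (hβd : β < d) (hs : 0 < s) (hK : 0 < K)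
    (hμ : ∀ x, ∀ r > 0, μ (ball x r) ≤ K * ENNReal.ofReal (r ^ d)) :
    ∃ C > 0, ∀ ν : Measure X, IsFiniteMeasure ν → ∀ lam : ℝ, 0 < lam →
      μ {x | ENNReal.ofReal lam < ballPotential β s ν x} ≤
        ENNReal.ofReal C * (ν univ ^ s / ENNReal.ofReal lam) ^ (d / (s * β)) := by
  have hd : 0 < d := hβ.trans hβd
  have : 0 < d - β := sub_pos.2 hβd
  have hp : 0 < d / (s * β) := by positivity
  refine ⟨5 ^ d * K * (d / (s * β * (d - β))) ^ (d / (s * β)), by positivity,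
    fun ν _ lam hlam => ?_⟩
  have hlam0 : ENNReal.ofReal lam ^ (d / (s * β)) ≠ 0 :=
    (ENNReal.rpow_pos (ENNReal.ofReal_pos.2 hlam) ENNReal.ofReal_ne_top).ne'
  have hlamtop : ENNReal.ofReal lam ^ (d / (s * β)) ≠ ⊤ :=
    ENNReal.rpow_ne_top_of_nonneg hp.le ENNReal.ofReal_ne_top
  rw [ENNReal.div_rpow_of_nonneg _ _ hp.le, ← mul_div_assoc,
    ENNReal.le_div_iff_mul_le (.inl hlam0) (.inl hlamtop), mul_comm,
    ENNReal.ofReal_mul (by positivity), ENNReal.ofReal_mul (by positivity),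
    ENNReal.ofReal_coe_nnreal, ← ENNReal.ofReal_rpow_of_nonneg (by positivity) hp.le]
  exact rpow_mul_measure_lt_ballPotential_le hβ hβd hs hμ ν _

end BallPotential

theorem exists_pos_addHaar_ball_le {E : Type*} [NormedAddCommGroup E] [NormedSpace ℝ E]
    [FiniteDimensional ℝ E] [MeasurableSpace E] [BorelSpace E] (μ : Measure E)
    [μ.IsAddHaarMeasure] :
    ∃ K : ℝ≥0, 0 < K ∧ ∀ x, ∀ r > 0,
      μ (ball x r) ≤ K * ENNReal.ofReal (r ^ (Module.finrank ℝ E : ℝ)) := by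
  refine ⟨(μ (ball 0 1)).toNNReal,
    ENNReal.toNNReal_pos (measure_ball_pos μ 0 one_pos).ne' measure_ball_lt_top.ne,
    fun x r hr => ?_⟩
  rw [Measure.addHaar_ball_of_pos μ x hr, ENNReal.coe_toNNReal measure_ball_lt_top.ne, mul_comm,
    Real.rpow_natCast]

theorem Lpot_top {N : ℕ} (α s : ℝ) (ω : Measure (Euc N)) (x : Euc N) :
    Lpot α s ⊤ ω x = ballPotential (N - α) s ω x := by
  simp [Lpot, ballPotential, Ioi]

/-- Weak-type estimate for the potential `L_{α,s}` of a bounded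
measure. -/
theorem stmt12 (N : ℕ) (α s : ℝ) (hα : 0 < α) (hαN : α < (N : ℝ)) (hs : 0 < s) :
    ∃ C > 0, ∀ ω : Measure (Euc N), IsFiniteMeasure ω → ∀ lam : ℝ, 0 < lam →
      volume {x : Euc N | ENNReal.ofReal lam < Lpot α s ⊤ ω x} ≤
        ENNReal.ofReal C *
          ((ω Set.univ) ^ s / ENNReal.ofReal lam) ^ ((N : ℝ) / (s * ((N : ℝ) - α))) := by
  obtain ⟨K, hK, hvol⟩ := exists_pos_addHaar_ball_le (volume : Measure (Euc N))
  rw [finrank_euclideanSpace_fin] at hvol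
  simpa only [Lpot_top] using stmt12_general (sub_pos.2 hαN) (sub_lt_self _ hα) hs hK hvol
end
end
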